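/- Let d ≥ 2, let Σ ⊂ GL_d(ℝ) be a compact subset, let μ₀ be a Borel probability measure with supp(μ₀) = Σ and L_1(μ₀) > L_2(μ₀), let p ∈ [1, ∞], and let f ∈ L^p(μ₀) satisfy f ≥ 0 and ∫ f dμ₀ = 1. Then the map t ↦ L_1(((1−t) + t f) · μ₀), where ((1−t)+tf)·μ₀ denotes the measure with density (1−t)+tf with respect to μ₀, is given by a convergent power series near 0: there exist ε > 0 and real coefficients (a_k)_{k≥0} with Σ_k |a_k| ε^k < ∞ such that L_1(((1−t)+tf)·μ₀) = Σ_{k≥0} a_k t^k for all t ∈ [0, ε). -/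

import Mathlib

open MeasureTheory Filter
open scoped LinearAlgebra.Projectivization

noncomputable section

abbrev GLd (d : ℕ) := GL (Fin d) ℝ
abbrev Ed (d : ℕ) := EuclideanSpace ℝ (Fin d)
abbrev Pd (d : ℕ) := ℙ ℝ (Ed d)

variable {d : ℕ}

instance : MeasurableSpace (GLd d) := borel _
instance : BorelSpace (GLd d) := ⟨rfl⟩

instance : TopologicalSpace (Pd d) :=
  (instTopologicalSpaceQuotient : TopologicalSpace (Quotient (projectivizationSetoid ℝ (Ed d))))
instance : MeasurableSpace (Pd d) := borel _
instance : BorelSpace (Pd d) := ⟨rfl⟩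

/-- The continuous linear map on Euclidean space induced by `g ∈ GL_d(ℝ)`. -/
def glCLM (g : GLd d) : Ed d →L[ℝ] Ed d :=
  Matrix.toEuclideanCLM (𝕜 := ℝ) (g : Matrix (Fin d) (Fin d) ℝ)

/-- The operator norm of `g ∈ GL_d(ℝ)`. -/
def gnorm (g : GLd d) : ℝ := ‖glCLM g‖

lemma glCLM_leftInv (g : GLd d) (v : Ed d) : glCLM g⁻¹ (glCLM g v) = v := by
  have h : glCLM (d := d) g⁻¹ * glCLM g = 1 := by
    rw [glCLM, glCLM, ← map_mul]
    norm_cast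
    rw [inv_mul_cancel g]
    exact map_one _
  calc glCLM g⁻¹ (glCLM g v) = (glCLM g⁻¹ * glCLM g) v := rfl
    _ = v := by rw [h]; rfl

lemma glLinear_injective (g : GLd d) : Function.Injective (glCLM g).toLinearMap :=
  Function.LeftInverse.injective (g := (glCLM g⁻¹)) (fun v => glCLM_leftInv g v)

/-- The projective action of `g ∈ GL_d(ℝ)` on `ℙ(ℝ^d)`. -/
def pact (g : GLd d) : Pd d → Pd d :=
  Projectivization.map (glCLM g).toLinearMap (glLinear_injective g)

/-- The projective distance `δ` on `ℙ(ℝ^d)`, computed on representatives. -/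
def pdelta (x y : Pd d) : ℝ :=
  Real.sqrt (‖x.rep‖ ^ 2 * ‖y.rep‖ ^ 2 - (inner ℝ x.rep y.rep : ℝ) ^ 2) /
    (‖x.rep‖ * ‖y.rep‖)

/-- Convolution of two measures on `GL_d(ℝ)`. -/
def mconv (μ ν : Measure (GLd d)) : Measure (GLd d) :=
  (μ.prod ν).map (fun p => p.1 * p.2)

/-- `n`-fold convolution power of a measure on `GL_d(ℝ)`. -/
def mconvN (μ : Measure (GLd d)) : ℕ → Measure (GLd d)
  | 0 => Measure.dirac 1
  | n + 1 => if n = 0 then μ else mconv (mconvN μ n) μ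

/-- The top Lyapunov exponent of a (compactly supported) measure on `GL_d(ℝ)`. -/
def L1 (μ : Measure (GLd d)) : ℝ :=
  limUnder atTop (fun n : ℕ => (n : ℝ)⁻¹ * ∫ g, Real.log (gnorm g) ∂(mconvN μ n))

/-- `N₂ g = s₁(g)s₂(g)`, the product of the two largest singular values. -/
def N2 (g : GLd d) : ℝ :=
  sSup { x | ∃ p q : Ed d, ‖p‖ = 1 ∧ ‖q‖ = 1 ∧ (inner ℝ p q : ℝ) = 0 ∧
    x = Real.sqrt (‖glCLM g p‖ ^ 2 * ‖glCLM g q‖ ^ 2 -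
      (inner ℝ (glCLM g p) (glCLM g q) : ℝ) ^ 2) }

/-- `L₁(μ) + L₂(μ)`. -/
def L12 (μ : Measure (GLd d)) : ℝ :=
  limUnder atTop (fun n : ℕ => (n : ℝ)⁻¹ * ∫ g, Real.log (N2 g) ∂(mconvN μ n))

/-- The second Lyapunov exponent. -/
def L2 (μ : Measure (GLd d)) : ℝ := L12 μ - L1 μ

/-- The top Lyapunov exponent of the restriction of `μ` to an (invariant) subspace `V`. -/
def L1rest (μ : Measure (GLd d)) (V : Submodule ℝ (Ed d)) : ℝ :=
  limUnder atTop (fun n : ℕ => (n : ℝ)⁻¹ *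
    ∫ g, Real.log ‖LinearMap.toContinuousLinearMap ((glCLM g).toLinearMap.domRestrict V)‖
      ∂(mconvN μ n))

/-- Quasi-irreducibility of a measure on `GL_d(ℝ)`. -/
def QuasiIrreducible (μ : Measure (GLd d)) : Prop :=
  ¬ ∃ V : Submodule ℝ (Ed d), V ≠ ⊥ ∧ V ≠ ⊤ ∧
    (∀ᵐ g ∂μ, V.map (glCLM g).toLinearMap = V) ∧ L1rest μ V < L1 μ

/-- Irreducibility of a measure on `GL_d(ℝ)`. -/
def Irred (μ : Measure (GLd d)) : Prop :=
  ¬ ∃ V : Submodule ℝ (Ed d), V ≠ ⊥ ∧ V ≠ ⊤ ∧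
    (∀ᵐ g ∂μ, V.map (glCLM g).toLinearMap = V)

/-- The Markov operator associated with a measure on `GL_d(ℝ)`. -/
def Qop (μ : Measure (GLd d)) (φ : Pd d → ℝ) : Pd d → ℝ :=
  fun v => ∫ g, φ (pact g v) ∂μ

/-- The average `α`-Hölder constant of a measure on `GL_d(ℝ)`. -/
def kalpha (α : ℝ) (μ : Measure (GLd d)) : ℝ :=
  sSup { x | ∃ v₁ v₂ : Pd d, v₁ ≠ v₂ ∧
    x = ∫ g, (pdelta (pact g v₁) (pact g v₂) / pdelta v₁ v₂) ^ α ∂μ }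

/-- The `α`-Hölder seminorm of an observable on `ℙ(ℝ^d)`. -/
def valpha (α : ℝ) (φ : Pd d → ℝ) : ℝ :=
  sSup { x | ∃ v₁ v₂ : Pd d, v₁ ≠ v₂ ∧ x = |φ v₁ - φ v₂| / pdelta v₁ v₂ ^ α }

/-- `φ` is `α`-Hölder: `v_α(φ) < ∞`. -/
def IsHolder (α : ℝ) (φ : Pd d → ℝ) : Prop :=
  BddAbove { x | ∃ v₁ v₂ : Pd d, v₁ ≠ v₂ ∧ x = |φ v₁ - φ v₂| / pdelta v₁ v₂ ^ α }

/-- The total variation distance between two finite measures. -/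
def tvDist (μ ν : Measure (GLd d)) [IsFiniteMeasure μ] [IsFiniteMeasure ν] : ℝ :=
  ((μ.toSignedMeasure - ν.toSignedMeasure).totalVariation Set.univ).toReal

/-- A measure is compactly supported. -/
def CompactlySupported (μ : Measure (GLd d)) : Prop :=
  ∃ K : Set (GLd d), IsCompact K ∧ μ Kᶜ = 0

/-- `S` is the (topological) support of `μ`. -/
def IsSupport (μ : Measure (GLd d)) (S : Set (GLd d)) : Prop :=
  μ Sᶜ = 0 ∧ ∀ x ∈ S, ∀ U : Set (GLd d), IsOpen U → x ∈ U → 0 < μ U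

/-- A measure `η` on `ℙ(ℝ^d)` is `μ`-stationary. -/
def Stationary (μ : Measure (GLd d)) (η : Measure (Pd d)) : Prop :=
  ∀ φ : Pd d → ℝ, Continuous φ → (∃ C, ∀ v, |φ v| ≤ C) →
    ∫ v, φ v ∂η = ∫ g, ∫ v, φ (pact g v) ∂η ∂μ


namespace LYA
open scoped ENNReal NNReal Topology
set_option linter.unusedSectionVars false
set_option linter.unusedSimpArgs false

section ConvPow
variable {M : Type*} [Monoid M] [MeasurableSpace M] [MeasurableMul₂ M]

/-- convolution -/
def cv (μ ν : Measure M) : Measure M := (μ.prod ν).map (fun p => p.1 * p.2)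

/-- convolution powers -/
def cp (κ : Measure M) : ℕ → Measure M
  | 0 => Measure.dirac 1
  | n + 1 => cv (cp κ n) κ

lemma cv_eq (μ ν : Measure M) : cv μ ν = Measure.mconv μ ν := rfl

instance (μ ν : Measure M) [IsFiniteMeasure μ] [IsFiniteMeasure ν] : IsFiniteMeasure (cv μ ν) := by
  rw [cv_eq]; infer_instance

instance (μ ν : Measure M) [IsProbabilityMeasure μ] [IsProbabilityMeasure ν] :
    IsProbabilityMeasure (cv μ ν) := by
  rw [cv_eq]; infer_instance

instance cp_fin (κ : Measure M) [IsFiniteMeasure κ] (n : ℕ) : IsFiniteMeasure (cp κ n) := by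
  induction n with
  | zero => unfold cp; infer_instance
  | succ n ih => unfold cp; infer_instance

instance cp_prob (κ : Measure M) [IsProbabilityMeasure κ] (n : ℕ) :
    IsProbabilityMeasure (cp κ n) := by
  induction n with
  | zero => unfold cp; infer_instance
  | succ n ih => unfold cp; infer_instance

lemma cp_zero (κ : Measure M) : cp κ 0 = Measure.dirac 1 := rfl
lemma cp_succ (κ : Measure M) (n : ℕ) : cp κ (n+1) = cv (cp κ n) κ := rfl
lemma cp_one (κ : Measure M) [IsFiniteMeasure κ] : cp κ 1 = κ := by
  rw [cp_succ, cp_zero, cv_eq, Measure.dirac_one_mconv]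

lemma cp_add (κ : Measure M) [IsFiniteMeasure κ] (m n : ℕ) : cp κ (m+n) = cv (cp κ m) (cp κ n) := by
  induction n with
  | zero => rw [add_zero, cp_zero, cv_eq, Measure.mconv_dirac_one]
  | succ n ih =>
    rw [← add_assoc, cp_succ, ih, cp_succ]
    simp only [cv_eq]
    rw [Measure.mconv_assoc]

lemma cp_succ' (κ : Measure M) [IsFiniteMeasure κ] (n : ℕ) : cp κ (n+1) = cv κ (cp κ n) := by
  rw [add_comm, cp_add, cp_one]

lemma lintegral_cv (μ ν : Measure M) [IsFiniteMeasure μ] [IsFiniteMeasure ν] {F : M → ℝ≥0∞}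
    (hF : Measurable F) : ∫⁻ g, F g ∂(cv μ ν) = ∫⁻ h, ∫⁻ g, F (g * h) ∂μ ∂ν := by
  rw [cv, lintegral_map hF (by fun_prop), lintegral_prod_symm']
  fun_prop

lemma ae_cv (μ ν : Measure M) [IsFiniteMeasure μ] [IsFiniteMeasure ν] {A B C : Set M}
    (hC : MeasurableSet C) (h : ∀ a ∈ A, ∀ b ∈ B, a * b ∈ C)
    (hA' : ∀ᵐ g ∂μ, g ∈ A) (hB' : ∀ᵐ g ∂ν, g ∈ B) : ∀ᵐ g ∂(cv μ ν), g ∈ C := by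
  rw [cv]
  refine (ae_map_iff (p := fun g => g ∈ C) (by fun_prop) hC).2 ?_
  have h1 : ∀ᵐ p ∂(μ.prod ν), p.1 ∈ A := Measure.quasiMeasurePreserving_fst.ae hA'
  have h2 : ∀ᵐ p ∂(μ.prod ν), p.2 ∈ B := Measure.quasiMeasurePreserving_snd.ae hB'
  filter_upwards [h1, h2] with p h1 h2 using h _ h1 _ h2

lemma ae_cp (κ : Measure M) [IsFiniteMeasure κ] {P : ℕ → Set M} {A : Set M}
    (hP : ∀ n, MeasurableSet (P n)) (h0 : 1 ∈ P 0)
    (h : ∀ n, ∀ a ∈ P n, ∀ b ∈ A, a * b ∈ P (n+1)) (hA : ∀ᵐ g ∂κ, g ∈ A) (n : ℕ) :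
    ∀ᵐ g ∂(cp κ n), g ∈ P n := by
  induction n with
  | zero => rw [cp_zero]; exact (ae_dirac_iff (p := fun g => g ∈ P 0) (hP 0)).2 h0
  | succ n ih => exact ae_cv _ _ (hP _) (h n) ih hA

lemma cv_ac {μ ν μ' ν' : Measure M} [IsFiniteMeasure ν'] (h1 : μ ≪ μ') (h2 : ν ≪ ν') :
    cv μ ν ≪ cv μ' ν' := (h1.prod h2).map (by fun_prop)

lemma cp_ac {κ κ' : Measure M} [IsFiniteMeasure κ'] (h : κ ≪ κ') (n : ℕ) : cp κ n ≪ cp κ' n := by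
  induction n with
  | zero => exact Measure.AbsolutelyContinuous.rfl
  | succ n ih => exact cv_ac ih h

lemma cv_univ (μ ν : Measure M) [IsFiniteMeasure μ] [IsFiniteMeasure ν] :
    cv μ ν Set.univ = μ Set.univ * ν Set.univ := by
  rw [cv, Measure.map_apply (by fun_prop) MeasurableSet.univ, Set.preimage_univ,
    ← Set.univ_prod_univ, Measure.prod_prod]

lemma cp_univ (κ : Measure M) [IsFiniteMeasure κ] (n : ℕ) :
    cp κ n Set.univ = (κ Set.univ)^n := by
  induction n with
  | zero => simp [cp_zero]
  | succ n ih => rw [cp_succ, cv_univ, ih, pow_succ]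

/-- splitting of the convolution power of a perturbed measure -/
lemma cp_perturb (ν τ : Measure M) [IsProbabilityMeasure ν] [IsFiniteMeasure τ] (n : ℕ) :
    ∃ ρ : Measure M, IsFiniteMeasure ρ ∧ cp (ν + τ) n = cp ν n + ρ ∧
      ρ Set.univ = (1 + τ Set.univ)^n - 1 := by
  have key : ∃ ρ : Measure M, IsFiniteMeasure ρ ∧ cp (ν + τ) n = cp ν n + ρ := by
    induction n with
    | zero => exact ⟨0, inferInstance, by simp [cp_zero]⟩
    | succ n ih =>
      obtain ⟨ρ, hρ, h⟩ := ih
      refine ⟨cv (cp ν n) τ + cv ρ (ν + τ), inferInstance, ?_⟩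
      rw [cp_succ, cp_succ, h]
      simp only [cv_eq]
      rw [Measure.add_mconv, Measure.mconv_add, add_assoc]
  obtain ⟨ρ, hρ, h⟩ := key
  refine ⟨ρ, hρ, h, ?_⟩
  have h1 := congrArg (fun m : Measure M => m Set.univ) h
  simp only [cp_univ, Measure.add_apply, measure_univ, one_pow] at h1
  rw [h1]
  exact (ENNReal.add_sub_cancel_left ENNReal.one_ne_top).symm

lemma map_cp {N : Type*} [Monoid N] [MeasurableSpace N] [MeasurableMul₂ N]
    (κ : Measure M) [IsFiniteMeasure κ] (r : M → N) (hr : Measurable r) (A : Set M)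
    (hA : MeasurableSet A) (h1 : 1 ∈ A) (hmul : ∀ a ∈ A, ∀ b ∈ A, a * b ∈ A)
    (hr1 : r 1 = 1) (hrm : ∀ a ∈ A, ∀ b ∈ A, r (a * b) = r a * r b)
    (hκ : ∀ᵐ g ∂κ, g ∈ A) (n : ℕ) : (cp κ n).map r = cp (κ.map r) n := by
  induction n with
  | zero => rw [cp_zero, cp_zero, Measure.map_dirac' hr, hr1]
  | succ n ih =>
    have hAn : ∀ᵐ g ∂(cp κ n), g ∈ A :=
      ae_cp κ (P := fun _ => A) (A := A) (fun _ => hA) h1 (fun _ => hmul) hκ n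
    rw [cp_succ, cp_succ, ← ih, cv, cv, Measure.map_map hr (by fun_prop),
      Measure.map_prod_map _ _ hr hr, Measure.map_map (by fun_prop) (by fun_prop)]
    apply Measure.map_congr
    have h1 : ∀ᵐ p ∂((cp κ n).prod κ), p.1 ∈ A := Measure.quasiMeasurePreserving_fst.ae hAn
    have h2 : ∀ᵐ p ∂((cp κ n).prod κ), p.2 ∈ A := Measure.quasiMeasurePreserving_snd.ae hκ
    filter_upwards [h1, h2] with p h1 h2
    simp [hrm _ h1 _ h2]

end ConvPow
end LYA

namespace LYA
open scoped ENNReal NNReal Topology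
set_option linter.unusedSectionVars false
set_option linter.unusedSimpArgs false
set_option linter.unusedVariables false
set_option linter.unusedTactic false

section Gen
variable {M X : Type*} [Monoid M] [MeasurableSpace M] [MeasurableMul₂ M]

/-- A bounded subadditive cocycle over an action. -/
structure Coc (ν : Measure M) (act : M → X → X) (ψ : M → X → ℝ) (B : ℝ) : Prop where
  meas : ∀ x, Measurable (fun g => ψ g x)
  sub : ∃ A : Set M, MeasurableSet A ∧ (∀ᵐ g ∂ν, g ∈ A) ∧ 1 ∈ A ∧ (∀ g ∈ A, ∀ h ∈ A, g * h ∈ A) ∧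
    ∀ g ∈ A, ∀ h ∈ A, ∀ x, ψ (g * h) x ≤ ψ g (act h x) + ψ h x
  bdd : ∀ n : ℕ, ∀ᵐ g ∂(cp ν n), ∀ x, |ψ g x| ≤ n * B
  nonneg : 0 ≤ B

variable {ν : Measure M} [IsProbabilityMeasure ν] {act : M → X → X} {ψ : M → X → ℝ} {B : ℝ}

lemma Coc.submul (hc : Coc ν act ψ B) {α : ℝ} (hα : 0 < α) {κ : Measure M} [IsFiniteMeasure κ]
    (hκ : κ ≪ ν) {m n : ℕ} {k K : ℝ≥0∞}
    (hm : ∀ x, ∫⁻ g, ENNReal.ofReal (Real.exp (α * ψ g x)) ∂(cp κ m) ≤ k)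
    (hn : ∀ x, ∫⁻ g, ENNReal.ofReal (Real.exp (α * ψ g x)) ∂(cp κ n) ≤ K) (x : X) :
    ∫⁻ g, ENNReal.ofReal (Real.exp (α * ψ g x)) ∂(cp κ (m + n)) ≤ k * K := by
  obtain ⟨A, hA, hAν, hA1, hAm, hAs⟩ := hc.sub
  have hAκ : ∀ᵐ g ∂κ, g ∈ A := hκ.ae_le hAν
  have hAn : ∀ n, ∀ᵐ g ∂(cp κ n), g ∈ A := fun n =>
    ae_cp κ (P := fun _ => A) (A := A) (fun _ => hA) hA1 (fun _ => hAm) hAκ n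
  have hme : ∀ y, Measurable (fun g => ENNReal.ofReal (Real.exp (α * ψ g y))) := fun y =>
    (Real.measurable_exp.comp ((hc.meas y).const_mul α)).ennreal_ofReal
  rw [cp_add, lintegral_cv _ _ (hme x)]
  calc ∫⁻ h, ∫⁻ g, ENNReal.ofReal (Real.exp (α * ψ (g * h) x)) ∂(cp κ m) ∂(cp κ n)
      ≤ ∫⁻ h, k * ENNReal.ofReal (Real.exp (α * ψ h x)) ∂(cp κ n) := by
        apply lintegral_mono_ae
        filter_upwards [hAn n] with h hh
        calc ∫⁻ g, ENNReal.ofReal (Real.exp (α * ψ (g * h) x)) ∂(cp κ m)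
            ≤ ∫⁻ g, ENNReal.ofReal (Real.exp (α * ψ g (act h x))) *
                ENNReal.ofReal (Real.exp (α * ψ h x)) ∂(cp κ m) := by
              apply lintegral_mono_ae
              filter_upwards [hAn m] with g hg
              rw [← ENNReal.ofReal_mul (Real.exp_pos _).le, ← Real.exp_add]
              apply ENNReal.ofReal_le_ofReal
              apply Real.exp_le_exp.2
              have := hAs g hg h hh x
              nlinarith
          _ = (∫⁻ g, ENNReal.ofReal (Real.exp (α * ψ g (act h x))) ∂(cp κ m)) *
                ENNReal.ofReal (Real.exp (α * ψ h x)) := lintegral_mul_const _ (hme _)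
          _ ≤ _ := by gcongr; exact hm _
    _ = k * ∫⁻ h, ENNReal.ofReal (Real.exp (α * ψ h x)) ∂(cp κ n) := lintegral_const_mul _ (hme x)
    _ ≤ k * K := by gcongr; exact hn x

lemma Coc.crude (hc : Coc ν act ψ B) {α : ℝ} (hα : 0 < α) {κ : Measure M} [IsFiniteMeasure κ]
    {m : ℕ} (hκ : κ ≪ cp ν m) (x : X) :
    ∫⁻ g, ENNReal.ofReal (Real.exp (α * ψ g x)) ∂κ ≤
      ENNReal.ofReal (Real.exp (α * (m * B))) * κ Set.univ := by
  calc _ ≤ ∫⁻ g, ENNReal.ofReal (Real.exp (α * (m * B))) ∂κ := by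
        apply lintegral_mono_ae
        filter_upwards [hκ.ae_le (hc.bdd m)] with g hg
        apply ENNReal.ofReal_le_ofReal
        apply Real.exp_le_exp.2
        have := (abs_le.1 (hg x)).2
        nlinarith
    _ = _ := by rw [lintegral_const]

lemma Coc.growth (hc : Coc ν act ψ B) {α : ℝ} (hα : 0 < α) {κ : Measure M} [IsFiniteMeasure κ]
    (hκ : κ ≪ ν) {m : ℕ} (hm : 1 ≤ m) {σ : ℝ}
    (h : ∀ x, ∫⁻ g, ENNReal.ofReal (Real.exp (α * ψ g x)) ∂(cp κ m) ≤
      ENNReal.ofReal (Real.exp (m * σ))) :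
    ∃ C : ℝ, 0 ≤ C ∧ ∀ n x, ∫⁻ g, ENNReal.ofReal (Real.exp (α * ψ g x)) ∂(cp κ n) ≤
      ENNReal.ofReal (C * Real.exp (n * σ)) := by
  set T : ℝ := max 1 (κ.real Set.univ) with hT
  have hT1 : 1 ≤ T := le_max_left _ _
  set D : ℝ := Real.exp (α * (m * B)) * T ^ m with hD
  have hD0 : 0 ≤ D := by positivity
  have hr : ∀ r < m, ∀ x, ∫⁻ g, ENNReal.ofReal (Real.exp (α * ψ g x)) ∂(cp κ r) ≤
      ENNReal.ofReal D := by
    intro r hr x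
    refine (hc.crude hα (cp_ac hκ r) x).trans ?_
    rw [cp_univ, ← ofReal_measureReal, ← ENNReal.ofReal_pow measureReal_nonneg,
      ← ENNReal.ofReal_mul (Real.exp_pos _).le]
    apply ENNReal.ofReal_le_ofReal
    have hrm : (r : ℝ) ≤ m := by exact_mod_cast hr.le
    have hB := hc.nonneg
    have h1 : κ.real Set.univ ^ r ≤ T ^ m :=
      (pow_le_pow_left₀ measureReal_nonneg (le_max_right _ _) r).trans
        (pow_le_pow_right₀ hT1 hr.le)
    rw [hD]
    gcongr
  have hq : ∀ q : ℕ, ∀ r < m, ∀ x, ∫⁻ g, ENNReal.ofReal (Real.exp (α * ψ g x)) ∂(cp κ (m * q + r)) ≤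
      ENNReal.ofReal (Real.exp (m * q * σ) * D) := by
    intro q r hrm
    induction q with
    | zero => simpa using hr r hrm
    | succ q ih =>
      intro x
      have := hc.submul hα hκ h ih x
      rw [← ENNReal.ofReal_mul (Real.exp_pos _).le, ← mul_assoc, ← Real.exp_add] at this
      have e : m * (q + 1) + r = m + (m * q + r) := by ring
      rw [e]
      convert this using 5
      push_cast; ring
  refine ⟨Real.exp (m * |σ|) * D, by positivity, fun n x => ?_⟩
  have h1 := hq (n / m) (n % m) (Nat.mod_lt _ (by omega)) x
  rw [Nat.div_add_mod] at h1
  refine h1.trans (ENNReal.ofReal_le_ofReal ?_)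
  have h2 : (n : ℝ) = m * (n / m : ℕ) + (n % m : ℕ) := by exact_mod_cast (Nat.div_add_mod n m).symm
  have h3 : ((n % m : ℕ) : ℝ) ≤ m := by exact_mod_cast (Nat.mod_lt n (by omega : m > 0)).le
  have h4 : Real.exp (m * (n / m : ℕ) * σ) ≤ Real.exp (m * |σ|) * Real.exp (n * σ) := by
    rw [← Real.exp_add]
    apply Real.exp_le_exp.2
    have h5 : -((n % m : ℕ) * σ) ≤ m * |σ| := by
      calc -((n % m : ℕ) * σ) ≤ |((n % m : ℕ) : ℝ) * σ| := neg_le_abs _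
        _ = ((n % m : ℕ) : ℝ) * |σ| := by rw [abs_mul, Nat.abs_cast]
        _ ≤ _ := by gcongr
    rw [h2] ; push_cast; nlinarith
  calc _ ≤ (Real.exp (m * |σ|) * Real.exp (n * σ)) * D := by gcongr
    _ = _ := by ring

lemma Coc.integrable (hc : Coc ν act ψ B) (n : ℕ) (x : X) : Integrable (fun g => ψ g x) (cp ν n) := by
  refine Integrable.of_bound (hc.meas x).aestronglyMeasurable (n * B) ?_
  filter_upwards [hc.bdd n] with g hg using hg x

/-- from the averaged logarithm to exponential moments, robustly. -/
theorem Coc.main (hc : Coc ν act ψ B) {m : ℕ} (hm : 1 ≤ m) {b b' : ℝ} (hb : b < b')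
    (h : ∀ x, ∫ g, ψ g x ∂(cp ν m) ≤ m * b) :
    ∃ α₀ : ℝ, 0 < α₀ ∧ ∀ α, 0 < α → α ≤ α₀ → ∃ θ : ℝ, 0 < θ ∧ ∀ τ : Measure M, IsFiniteMeasure τ →
      τ ≪ ν → τ.real Set.univ ≤ θ → ∃ C : ℝ, 0 ≤ C ∧ ∀ n x,
        ∫⁻ g, ENNReal.ofReal (Real.exp (α * ψ g x)) ∂(cp (ν + τ) n) ≤
          ENNReal.ofReal (C * Real.exp (n * (α * b'))) := by
  have hB := hc.nonneg
  have hm' : (1 : ℝ) ≤ m := by exact_mod_cast hm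
  set b'' := (b + b') / 2 with hb''
  refine ⟨min (1 / (m * B + 1)) ((b' - b) / (2 * (m * B ^ 2 + 1))), ?_, ?_⟩
  · apply lt_min
    · positivity
    · apply div_pos (by linarith); positivity
  intro α hα hα0
  have ha1 : α * (m * B) ≤ 1 := by
    have := hα0.trans (min_le_left _ _)
    rw [le_div_iff₀ (by positivity)] at this
    nlinarith
  have ha2 : α * (m * B ^ 2) ≤ (b' - b) / 2 := by
    have := hα0.trans (min_le_right _ _)
    rw [le_div_iff₀ (by positivity)] at this
    nlinarith
  -- moment bound for ν
  have hν : ∀ x, ∫⁻ g, ENNReal.ofReal (Real.exp (α * ψ g x)) ∂(cp ν m) ≤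
      ENNReal.ofReal (Real.exp (m * (α * b''))) := by
    intro x
    have hi := hc.integrable m x
    have hi2 : Integrable (fun g => 1 + α * ψ g x + (α * (m * B)) ^ 2) (cp ν m) :=
      ((integrable_const _).add (hi.const_mul α)).add (integrable_const _)
    have hle : ∀ᵐ g ∂(cp ν m), Real.exp (α * ψ g x) ≤ 1 + α * ψ g x + (α * (m * B)) ^ 2 := by
      filter_upwards [hc.bdd m] with g hg
      have h1 : |α * ψ g x| ≤ α * (m * B) := by
        rw [abs_mul, abs_of_pos hα]; gcongr; exact hg x
      have h2 := Real.abs_exp_sub_one_sub_id_le (h1.trans ha1)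
      have h3 := (abs_le.1 h2).2
      have h4 : (α * ψ g x) ^ 2 ≤ (α * (m * B)) ^ 2 := sq_le_sq' (by linarith [(abs_le.1 h1).1]) (abs_le.1 h1).2
      linarith
    calc _ ≤ ∫⁻ g, ENNReal.ofReal (1 + α * ψ g x + (α * (m * B)) ^ 2) ∂(cp ν m) := by
          apply lintegral_mono_ae
          filter_upwards [hle] with g hg using ENNReal.ofReal_le_ofReal hg
      _ = ENNReal.ofReal (∫ g, (1 + α * ψ g x + (α * (m * B)) ^ 2) ∂(cp ν m)) := by
          rw [ofReal_integral_eq_lintegral_ofReal hi2]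
          filter_upwards [hle] with g hg using (Real.exp_pos _).le.trans hg
      _ ≤ _ := by
          apply ENNReal.ofReal_le_ofReal
          have hi3 : Integrable (fun g => 1 + α * ψ g x) (cp ν m) :=
            (integrable_const _).add (hi.const_mul α)
          rw [integral_add hi3 (integrable_const _),
            integral_add (integrable_const _) (hi.const_mul α), integral_const_mul]
          simp only [integral_const, probReal_univ, one_smul]
          have h1 := h x
          have h2 := Real.add_one_le_exp (m * (α * b''))
          refine le_trans ?_ h2
          have h3 : α * (∫ g, ψ g x ∂(cp ν m)) ≤ α * (m * b) := by gcongr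
          have h4 : (α * (m * B)) ^ 2 ≤ α * m * ((b' - b) / 2) := by
            calc (α * (m * B)) ^ 2 = α * m * (α * (m * B ^ 2)) := by ring
              _ ≤ _ := by gcongr
          rw [hb'']; nlinarith
  -- choice of θ
  have hgap : 0 < Real.exp (m * (α * b')) - Real.exp (m * (α * b'')) := by
    apply sub_pos.2; apply Real.exp_lt_exp.2
    have : b'' < b' := by rw [hb'']; linarith
    gcongr
  have hcont : Tendsto (fun θ : ℝ => Real.exp (α * (m * B)) * ((1 + θ) ^ m - 1)) (𝓝[>] 0) (𝓝 0) := by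
    have : Continuous (fun θ : ℝ => Real.exp (α * (m * B)) * ((1 + θ) ^ m - 1)) := by fun_prop
    have h := this.tendsto 0
    simp only [add_zero, one_pow, sub_self, mul_zero] at h
    exact h.mono_left nhdsWithin_le_nhds
  obtain ⟨θ, hθ1, (hθ : 0 < θ)⟩ := ((hcont.eventually (gt_mem_nhds hgap)).and self_mem_nhdsWithin).exists
  refine ⟨θ, hθ, fun τ hτf hτ hτθ => ?_⟩
  have hac : ν + τ ≪ ν := by
    refine Measure.AbsolutelyContinuous.mk fun s _ hs => ?_
    simp [hs, hτ hs]
  refine hc.growth hα hac hm fun x => ?_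
  obtain ⟨ρ, hρf, hρ, hρu⟩ := cp_perturb ν τ m
  rw [hρ, lintegral_add_measure]
  have hρac : ρ ≪ cp ν m := by
    have : ρ ≤ cp (ν + τ) m := by rw [hρ]; exact Measure.le_add_left le_rfl
    exact this.absolutelyContinuous.trans (cp_ac hac m)
  have h2 := hc.crude hα hρac x
  refine (add_le_add (hν x) h2).trans ?_
  have h3 : ρ Set.univ ≤ ENNReal.ofReal ((1 + θ) ^ m - 1) := by
    rw [hρu, ENNReal.ofReal_sub _ zero_le_one, ENNReal.ofReal_one,
      ENNReal.ofReal_pow (by linarith), ENNReal.ofReal_add zero_le_one (le_of_lt hθ), ENNReal.ofReal_one]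
    gcongr
    rw [← ofReal_measureReal]
    exact ENNReal.ofReal_le_ofReal hτθ
  calc _ ≤ ENNReal.ofReal (Real.exp (m * (α * b''))) + ENNReal.ofReal (Real.exp (α * (m * B))) *
        ENNReal.ofReal ((1 + θ) ^ m - 1) := by gcongr
    _ = ENNReal.ofReal (Real.exp (m * (α * b'')) + Real.exp (α * (m * B)) * ((1 + θ) ^ m - 1)) := by
      rw [← ENNReal.ofReal_mul (Real.exp_pos _).le, ← ENNReal.ofReal_add (Real.exp_pos _).le]
      have : 1 ≤ (1 + θ) ^ m := one_le_pow₀ (by linarith)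
      have : 0 ≤ (1 + θ) ^ m - 1 := by linarith
      positivity
    _ ≤ _ := ENNReal.ofReal_le_ofReal (by linarith)

end Gen
end LYA

namespace LYA
open scoped ENNReal NNReal Topology
set_option linter.unusedSectionVars false
set_option linter.unusedSimpArgs false
set_option linter.unusedVariables false
set_option linter.unusedTactic false

lemma abs_log_le {x D : ℝ} (hx : 0 < x) (h1 : x ≤ D) (h2 : 1 ≤ D * x) : |Real.log x| ≤ Real.log D := by
  have hD : 0 < D := hx.trans_le h1
  rw [abs_le]
  constructor
  · have := Real.log_le_log one_pos h2
    rw [Real.log_one, Real.log_mul hD.ne' hx.ne'] at this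
    linarith
  · exact Real.log_le_log hx h1

section EndU
variable {U : Type*} [NormedAddCommGroup U] [InnerProductSpace ℝ U] [FiniteDimensional ℝ U]

instance instSCEnd : SecondCountableTopology (U →L[ℝ] U) :=
  haveI : ProperSpace (U →L[ℝ] U) := FiniteDimensional.proper ℝ _
  inferInstance

instance instMMEnd : MeasurableMul₂ (U →L[ℝ] U) := ContinuousMul.measurableMul₂

/-- `g` is bounded with bounded inverse. -/
def Good (C : ℝ) (g : U →L[ℝ] U) : Prop := ‖g‖ ≤ C ∧ ∀ v, ‖v‖ ≤ C * ‖g v‖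

lemma Good.pos [Nontrivial U] {C : ℝ} {g : U →L[ℝ] U} (h : Good C g) : 0 < ‖g‖ := by
  obtain ⟨v, hv⟩ := exists_ne (0 : U)
  by_contra hg
  have hg0 : g = 0 := by
    have : ‖g‖ = 0 := le_antisymm (not_lt.1 hg) (norm_nonneg _)
    exact norm_eq_zero.1 this
  have := h.2 v
  rw [hg0] at this
  simp at this
  exact hv this

lemma Good.mono {C D : ℝ} {g : U →L[ℝ] U} (h : Good C g) (hCD : C ≤ D) : Good D g :=
  ⟨h.1.trans hCD, fun v => (h.2 v).trans (by gcongr)⟩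

lemma Good.ne {C : ℝ} {g : U →L[ℝ] U} (h : Good C g) {v : U} (hv : v ≠ 0) : g v ≠ 0 := by
  intro h0
  have := h.2 v
  rw [h0] at this
  simp at this
  exact hv this

lemma Good.one : Good 1 (1 : U →L[ℝ] U) :=
  ⟨ContinuousLinearMap.norm_id_le, fun v => by simp⟩

lemma Good.mul {C D : ℝ} {g h : U →L[ℝ] U} (hC : 0 ≤ C) (hD : 0 ≤ D) (hg : Good C g) (hh : Good D h) :
    Good (C * D) (g * h) := by
  refine ⟨(norm_mul_le _ _).trans (mul_le_mul hg.1 hh.1 (norm_nonneg _) hC), fun v => ?_⟩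
  calc ‖v‖ ≤ D * ‖h v‖ := hh.2 v
    _ ≤ D * (C * ‖g (h v)‖) := by gcongr; exact hg.2 _
    _ = C * D * ‖(g * h) v‖ := by rw [mul_apply_eq_comp]; ring

lemma isClosed_good (C : ℝ) : IsClosed {g : U →L[ℝ] U | Good C g} := by
  have : {g : U →L[ℝ] U | Good C g} = {g | ‖g‖ ≤ C} ∩ ⋂ v, {g | ‖v‖ ≤ C * ‖g v‖} := by
    ext g; simp [Good]
  rw [this]
  refine (isClosed_le continuous_norm continuous_const).inter (isClosed_iInter fun v => ?_)
  refine isClosed_le continuous_const (continuous_const.mul ?_)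
  exact (ContinuousLinearMap.apply ℝ U v).continuous.norm

lemma meas_good (C : ℝ) : MeasurableSet {g : U →L[ℝ] U | Good C g} := (isClosed_good C).measurableSet

/-- admissible elements -/
def Adm : Set (U →L[ℝ] U) := {g | ∃ n : ℕ, Good (n : ℝ) g}

lemma meas_adm : MeasurableSet (Adm : Set (U →L[ℝ] U)) := by
  have : (Adm : Set (U →L[ℝ] U)) = ⋃ n : ℕ, {g | Good (n : ℝ) g} := by ext g; simp [Adm]
  rw [this]
  exact MeasurableSet.iUnion fun n => meas_good _

lemma adm_one : (1 : U →L[ℝ] U) ∈ (Adm : Set (U →L[ℝ] U)) := ⟨1, by simpa using Good.one⟩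
lemma adm_mul : ∀ g ∈ (Adm : Set (U →L[ℝ] U)), ∀ h ∈ (Adm : Set (U →L[ℝ] U)), g * h ∈ (Adm : Set (U →L[ℝ] U)) := by
  rintro g ⟨n, hn⟩ h ⟨m, hm⟩
  exact ⟨n * m, by push_cast; exact hn.mul (by positivity) (by positivity) hm⟩

lemma Good.adm {C : ℝ} {g : U →L[ℝ] U} (h : Good C g) : g ∈ (Adm : Set (U →L[ℝ] U)) :=
  ⟨⌈C⌉₊, h.mono (Nat.le_ceil C)⟩

/-- bounded support -/
structure Nice (ν : Measure (U →L[ℝ] U)) (C : ℝ) : Prop where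
  one_le : 1 ≤ C
  good : ∀ᵐ g ∂ν, Good C g

variable {ν : Measure (U →L[ℝ] U)} [IsProbabilityMeasure ν] {C : ℝ}

lemma Nice.cp (h : Nice ν C) (n : ℕ) : ∀ᵐ g ∂(cp ν n), Good (C ^ n) g := by
  have h1 := h.one_le
  refine ae_cp ν (P := fun n => {g | Good (C ^ n) g}) (A := {g | Good C g}) (fun n => meas_good _) ?_ ?_
    h.good n
  · simpa using Good.one
  · intro n a ha b hb
    have := Good.mul (by positivity) (by positivity) ha hb
    simpa [pow_succ] using this

lemma Good.log_vec {C : ℝ} (hC : 1 ≤ C) {g : U →L[ℝ] U} (hg : Good C g) (v : U) :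
    |Real.log (‖g v‖ / ‖v‖)| ≤ Real.log C := by
  by_cases hv : v = 0
  · simp [hv, Real.log_nonneg hC]
  have h1 : 0 < ‖v‖ := norm_pos_iff.2 hv
  have h2 : 0 < ‖g v‖ := norm_pos_iff.2 (hg.ne hv)
  apply abs_log_le (by positivity)
  · rw [div_le_iff₀ h1]
    exact (g.le_opNorm v).trans (by gcongr; exact hg.1)
  · rw [← mul_div_assoc, le_div_iff₀ h1, one_mul]; exact hg.2 v

lemma Good.log_norm [Nontrivial U] {C : ℝ} (hC : 1 ≤ C) {g : U →L[ℝ] U} (hg : Good C g) :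
    |Real.log ‖g‖| ≤ Real.log C := by
  apply abs_log_le hg.pos hg.1
  obtain ⟨v, hv⟩ := exists_ne (0 : U)
  have h1 : 0 < ‖v‖ := norm_pos_iff.2 hv
  have h2 := hg.2 v
  have h3 := g.le_opNorm v
  have : ‖v‖ ≤ C * ‖g‖ * ‖v‖ := by
    calc ‖v‖ ≤ C * ‖g v‖ := h2
      _ ≤ C * (‖g‖ * ‖v‖) := by gcongr
      _ = _ := by ring
  by_contra hcon
  push Not at hcon
  nlinarith

/-- vector cocycle -/
def psiV (g : U →L[ℝ] U) (v : U) : ℝ := -Real.log (‖g v‖ / ‖v‖)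
/-- norm cocycle -/
def psiN (g : U →L[ℝ] U) (_ : Unit) : ℝ := Real.log ‖g‖

lemma meas_psiV (v : U) : Measurable (fun g : U →L[ℝ] U => psiV g v) := by
  have : Measurable (fun g : U →L[ℝ] U => ‖g v‖) :=
    (ContinuousLinearMap.apply ℝ U v).continuous.norm.measurable
  exact (Real.measurable_log.comp (this.div_const _)).neg

lemma psiV_mul {g h : U →L[ℝ] U} (hg : g ∈ (Adm : Set (U →L[ℝ] U))) (hh : h ∈ (Adm : Set (U →L[ℝ] U))) (v : U) :
    psiV (g * h) v = psiV g (h v) + psiV h v := by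
  obtain ⟨n, hn⟩ := hg
  obtain ⟨m, hm⟩ := hh
  unfold psiV
  by_cases hv : v = 0
  · simp [hv]
  have h1 : 0 < ‖v‖ := norm_pos_iff.2 hv
  have h2 : 0 < ‖h v‖ := norm_pos_iff.2 (hm.ne hv)
  have h3 : 0 < ‖g (h v)‖ := norm_pos_iff.2 (hn.ne (hm.ne hv))
  rw [mul_apply_eq_comp, ← neg_add, ← Real.log_mul (by positivity) (by positivity)]
  congr 2
  field_simp

lemma Nice.cocV (h : Nice ν C) : Coc ν (fun g v => g v) psiV (Real.log C) where
  meas := meas_psiV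
  sub := ⟨Adm, meas_adm, h.good.mono fun g hg => hg.adm, adm_one, adm_mul,
    fun g hg h hh v => (psiV_mul hg hh v).le⟩
  bdd n := by
    filter_upwards [h.cp n] with g hg v
    have := hg.log_vec (one_le_pow₀ h.one_le) v
    rw [Real.log_pow] at this
    rwa [psiV, abs_neg]
  nonneg := Real.log_nonneg h.one_le

lemma Nice.cocN [Nontrivial U] (h : Nice ν C) : Coc ν (fun _ _ => ()) psiN (Real.log C) where
  meas := fun _ => Real.measurable_log.comp measurable_norm
  sub := ⟨Adm, meas_adm, h.good.mono fun g hg => hg.adm, adm_one, adm_mul,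
    fun g hg h hh v => by
      have h3 := adm_mul g hg h hh
      obtain ⟨n, hn⟩ := hg
      obtain ⟨m, hm⟩ := hh
      obtain ⟨k, hk⟩ := h3
      unfold psiN
      rw [← Real.log_mul hn.pos.ne' hm.pos.ne']
      exact Real.log_le_log hk.pos (norm_mul_le _ _)⟩
  bdd n := by
    filter_upwards [h.cp n] with g hg v
    have := hg.log_norm (one_le_pow₀ h.one_le)
    rw [Real.log_pow] at this
    exact this
  nonneg := Real.log_nonneg h.one_le

end EndU
end LYA

namespace LYA
open scoped ENNReal NNReal Topology
set_option linter.unusedSectionVars false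
set_option linter.unusedSimpArgs false
set_option linter.unusedVariables false
set_option linter.unusedTactic false

section Av
variable {M : Type*} [Monoid M] [MeasurableSpace M] [MeasurableMul₂ M]

/-- Cesaro averages of convolution powers -/
def av (ν : Measure M) (N : ℕ) : Measure M :=
  ENNReal.ofReal ((N : ℝ)⁻¹) • ∑ j ∈ Finset.range N, cp ν j

variable {ν : Measure M} [IsProbabilityMeasure ν]

lemma av_prob {N : ℕ} (hN : 1 ≤ N) : IsProbabilityMeasure (av ν N) := by
  constructor
  rw [av, Measure.smul_apply, Measure.finsetSum_apply]
  simp only [measure_univ, Finset.sum_const, Finset.card_range, nsmul_eq_mul, mul_one, smul_eq_mul]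
  have : ((N : ℕ) : ℝ≥0∞) = ENNReal.ofReal N := by simp
  rw [this, ← ENNReal.ofReal_mul (by positivity), inv_mul_cancel₀ (by positivity)]
  simp

instance av_fin (N : ℕ) : IsFiniteMeasure (av ν N) := by
  unfold av
  exact Measure.smul_finite _ (by simp)

lemma ae_av {N : ℕ} {p : M → Prop} (h : ∀ j, ∀ᵐ g ∂(cp ν j), p g) : ∀ᵐ g ∂(av ν N), p g := by
  unfold av
  apply Measure.ae_smul_measure
  rw [ae_iff, Measure.finsetSum_apply]
  apply Finset.sum_eq_zero
  intro j _
  exact h j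

lemma integrable_av {N : ℕ} {φ : M → ℝ} (h : ∀ j, Integrable φ (cp ν j)) : Integrable φ (av ν N) := by
  unfold av
  apply Integrable.smul_measure _ (by simp)
  rw [integrable_finsetSum_measure]
  exact fun i _ => h i

lemma integral_av {N : ℕ} {φ : M → ℝ} (h : ∀ j, Integrable φ (cp ν j)) :
    ∫ g, φ g ∂(av ν N) = (N : ℝ)⁻¹ * ∑ j ∈ Finset.range N, ∫ g, φ g ∂(cp ν j) := by
  unfold av
  rw [integral_smul_measure, integral_finsetSum_measure (fun i _ => h i), ENNReal.toReal_ofReal (by positivity),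
    smul_eq_mul]

lemma integrable_cpcp {φ : M → ℝ} {m n : ℕ} (h : Integrable φ (cp ν (m + n))) :
    Integrable (fun p : M × M => φ (p.1 * p.2)) ((cp ν m).prod (cp ν n)) := by
  rw [cp_add, cv] at h
  exact h.comp_measurable (by fun_prop)

lemma integral_cpcp {φ : M → ℝ} {m n : ℕ} (h : Integrable φ (cp ν (m + n))) :
    ∫ g, φ g ∂(cp ν (m + n)) = ∫ b, ∫ a, φ (a * b) ∂(cp ν m) ∂(cp ν n) := by
  have h2 := integrable_cpcp h
  rw [cp_add, cv] at h ⊢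
  rw [integral_map (by fun_prop) h.1, integral_prod_symm _ h2]

/-- averaging over `cp n * av N`. -/
lemma integral_av_cv {φ : M → ℝ} (n N : ℕ) (h : ∀ j, Integrable φ (cp ν j)) :
    ∫ b, ∫ a, φ (a * b) ∂(cp ν n) ∂(av ν N) = (N : ℝ)⁻¹ * ∑ j ∈ Finset.range N, ∫ g, φ g ∂(cp ν (n + j)) := by
  rw [integral_av]
  · congr 1
    apply Finset.sum_congr rfl
    intro j _
    rw [integral_cpcp (h _)]
  · intro j
    exact (integrable_cpcp (h (n + j))).integral_prod_right
end Av
end LYA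

namespace LYA
open scoped ENNReal NNReal Topology
set_option linter.unusedSectionVars false
set_option linter.unusedSimpArgs false
set_option linter.unusedVariables false
set_option linter.unusedTactic false

section Quad
variable {U : Type*} [NormedAddCommGroup U] [InnerProductSpace ℝ U] [FiniteDimensional ℝ U]
variable {ν : Measure (U →L[ℝ] U)} [IsProbabilityMeasure ν] {C : ℝ}

/-- normalized products -/
def Gb (w w' v : U) (h : U →L[ℝ] U) : ℝ := inner ℝ w (h v) * inner ℝ w' (h v) / ‖h v‖ ^ 2

lemma Gb_meas (w w' v : U) : Measurable (Gb w w' v) := by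
  have h0 : Continuous (fun h : U →L[ℝ] U => h v) := (ContinuousLinearMap.apply ℝ U v).continuous
  unfold Gb
  exact (((continuous_const.inner h0).mul (continuous_const.inner h0)).measurable).div
    (h0.norm.pow 2).measurable

lemma Gb_le (w w' v : U) (h : U →L[ℝ] U) : |Gb w w' v h| ≤ ‖w‖ * ‖w'‖ := by
  unfold Gb
  rw [abs_div, abs_mul, abs_of_nonneg (a := ‖h v‖ ^ 2) (by positivity)]
  apply div_le_of_le_mul₀ (by positivity) (by positivity)
  calc _ ≤ (‖w‖ * ‖h v‖) * (‖w'‖ * ‖h v‖) :=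
        mul_le_mul (abs_real_inner_le_norm _ _) (abs_real_inner_le_norm _ _) (abs_nonneg _) (by positivity)
    _ = _ := by ring

lemma Gb_int (w w' v : U) (μ : Measure (U →L[ℝ] U)) [IsFiniteMeasure μ] : Integrable (Gb w w' v) μ :=
  Integrable.of_bound (Gb_meas w w' v).aestronglyMeasurable (‖w‖ * ‖w'‖)
    (Eventually.of_forall fun h => Gb_le w w' v h)

lemma Gb_nonneg (w v : U) (h : U →L[ℝ] U) : 0 ≤ Gb w w v h := by
  unfold Gb
  have := mul_self_nonneg (inner ℝ w (h v) : ℝ)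
  positivity

/-- bilinear form -/
def qb (ν : Measure (U →L[ℝ] U)) (N : ℕ) (v w w' : U) : ℝ := ∫ h, Gb w w' v h ∂(av ν N)

lemma qb_nonneg (N : ℕ) (v w : U) : 0 ≤ qb ν N v w w := integral_nonneg fun h => Gb_nonneg w v h

lemma qb_le {N : ℕ} (hN : 1 ≤ N) (v w w' : U) : |qb ν N v w w'| ≤ ‖w‖ * ‖w'‖ := by
  haveI := av_prob (ν := ν) hN
  have := norm_integral_le_of_norm_le_const (μ := av ν N) (f := Gb w w' v) (C := ‖w‖ * ‖w'‖)
    (Eventually.of_forall fun h => Gb_le w w' v h)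
  simpa [qb] using this

lemma qb_expand (N : ℕ) (v w : U) {ι : Type*} [Fintype ι] (e : OrthonormalBasis ι ℝ U) :
    qb ν N v w w = ∑ i, ∑ j, inner ℝ w (e i) * inner ℝ w (e j) * qb ν N v (e i) (e j) := by
  have : ∀ h, Gb w w v h = ∑ i, ∑ j, inner ℝ w (e i) * inner ℝ w (e j) * Gb (e i) (e j) v h := by
    intro h
    unfold Gb
    have h1 := e.sum_inner_mul_inner w (h v)
    rw [← h1, Finset.sum_mul_sum, Finset.sum_div]
    refine Finset.sum_congr rfl fun i _ => ?_
    rw [Finset.sum_div]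
    refine Finset.sum_congr rfl fun j _ => ?_
    ring
  unfold qb
  simp_rw [this]
  rw [integral_finsetSum]
  · refine Finset.sum_congr rfl fun i _ => ?_
    rw [integral_finsetSum]
    · refine Finset.sum_congr rfl fun j _ => ?_
      rw [integral_const_mul]
    · exact fun j _ => (Gb_int _ _ _ _).const_mul _
  · exact fun i _ => integrable_finsetSum _ fun j _ => (Gb_int _ _ _ _).const_mul _

lemma qb_trace (hν : Nice ν C) {N : ℕ} (hN : 1 ≤ N) {v : U} (hv : v ≠ 0) {ι : Type*} [Fintype ι]
    (e : OrthonormalBasis ι ℝ U) : ∑ i, qb ν N v (e i) (e i) = 1 := by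
  haveI := av_prob (ν := ν) hN
  unfold qb
  rw [← integral_finsetSum _ (fun i _ => Gb_int _ _ _ _)]
  have : ∀ᵐ h ∂(av ν N), ∑ i, Gb (e i) (e i) v h = 1 := by
    apply ae_av
    intro j
    filter_upwards [hν.cp j] with h hh
    have hne := hh.ne hv
    have h3 : ‖h v‖ ≠ 0 := norm_ne_zero_iff.2 hne
    unfold Gb
    rw [← Finset.sum_div]
    have := e.sum_inner_mul_inner (h v) (h v)
    rw [real_inner_self_eq_norm_sq] at this
    rw [div_eq_one_iff_eq (by positivity), ← this]
    refine Finset.sum_congr rfl fun i _ => ?_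
    rw [real_inner_comm]
  rw [integral_congr_ae this]
  simp

lemma qb_add_le (N : ℕ) (v w u : U) : qb ν N v (w + u) (w + u) ≤ 2 * qb ν N v w w + 2 * qb ν N v u u := by
  unfold qb
  rw [← integral_const_mul, ← integral_const_mul, ← integral_add ((Gb_int _ _ _ _).const_mul _) ((Gb_int _ _ _ _).const_mul _)]
  refine integral_mono (Gb_int _ _ _ _) (((Gb_int _ _ _ _).const_mul _).add ((Gb_int _ _ _ _).const_mul _)) fun h => ?_
  simp only [Gb]
  rw [inner_add_left, ← mul_div_assoc, ← mul_div_assoc, ← add_div]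
  gcongr
  nlinarith [sq_nonneg ((inner ℝ w (h v) : ℝ) - inner ℝ u (h v))]

lemma qb_smul (N : ℕ) (v w : U) (c : ℝ) : qb ν N v (c • w) (c • w) = c ^ 2 * qb ν N v w w := by
  unfold qb
  rw [← integral_const_mul]
  congr 1
  ext h
  simp only [Gb, real_inner_smul_left]
  ring

lemma qb_inv (hν : Nice ν C) (N : ℕ) {v : U} (hv : v ≠ 0) (w : U) :
    ∫ g, qb ν N v (ContinuousLinearMap.adjoint g w) (ContinuousLinearMap.adjoint g w) ∂ν ≤
      C ^ 2 * (qb ν N v w w + (N : ℝ)⁻¹ * (‖w‖ * ‖w‖)) := by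
  have hC := hν.one_le
  have hintg : ∀ j, Integrable (Gb w w v) (cp ν j) := fun j => Gb_int _ _ _ _
  have hadm : ∀ᵐ h ∂(av ν N), h ∈ (Adm : Set (U →L[ℝ] U)) := ae_av fun j => (hν.cp j).mono fun g hg => hg.adm
  have hI : Integrable (fun p : (U →L[ℝ] U) × (U →L[ℝ] U) => Gb w w v (p.1 * p.2)) (ν.prod (av ν N)) :=
    Integrable.of_bound ((Gb_meas w w v).comp (by fun_prop)).aestronglyMeasurable (‖w‖ * ‖w‖)
      (Eventually.of_forall fun h => Gb_le w w v _)
  have key : ∫ g, qb ν N v (ContinuousLinearMap.adjoint g w) (ContinuousLinearMap.adjoint g w) ∂ν ≤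
      ∫ g, C ^ 2 * ∫ h, Gb w w v (g * h) ∂(av ν N) ∂ν := by
    apply integral_mono_of_nonneg
    · exact Eventually.of_forall fun g => qb_nonneg _ _ _
    · exact hI.integral_prod_left.const_mul _
    · filter_upwards [hν.good] with g hg
      unfold qb
      rw [← integral_const_mul]
      apply integral_mono_ae (Gb_int _ _ _ _)
      · refine (Integrable.of_bound ((Gb_meas w w v).comp (by fun_prop)).aestronglyMeasurable (‖w‖ * ‖w‖)
          (Eventually.of_forall fun h => Gb_le w w v _)).const_mul _
      · filter_upwards [hadm] with h hh
        obtain ⟨k, hk⟩ := hh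
        have h1 := hk.ne hv
        have h2 := hg.ne h1
        have h3 : 0 < ‖h v‖ := norm_pos_iff.2 h1
        have h4 : 0 < ‖g (h v)‖ := norm_pos_iff.2 h2
        simp only [Gb, ContinuousLinearMap.adjoint_inner_left, mul_apply_eq_comp]
        rw [← mul_div_assoc, div_le_div_iff₀ (by positivity) (by positivity)]
        have h5 : ‖g (h v)‖ ^ 2 ≤ C ^ 2 * ‖h v‖ ^ 2 := by
          rw [← mul_pow]
          gcongr
          exact (g.le_opNorm _).trans (by gcongr; exact hg.1)
        have h6 := mul_self_nonneg (inner ℝ w (g (h v)) : ℝ)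
        nlinarith
  refine key.trans ?_
  rw [integral_const_mul]
  apply mul_le_mul_of_nonneg_left _ (by positivity)
  rw [integral_integral_swap hI]
  have := integral_av_cv (ν := ν) 1 N hintg
  rw [cp_one] at this
  rw [this]
  unfold qb
  rw [integral_av hintg, ← mul_add]
  apply mul_le_mul_of_nonneg_left _ (by positivity)
  have e1 := Finset.sum_range_succ (fun j => ∫ g, Gb w w v g ∂(cp ν j)) N
  have e2 := Finset.sum_range_succ' (fun j => ∫ g, Gb w w v g ∂(cp ν j)) N
  have e3 : 0 ≤ ∫ g, Gb w w v g ∂(cp ν 0) := integral_nonneg fun h => Gb_nonneg w v h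
  have e4 : ∫ g, Gb w w v g ∂(cp ν N) ≤ ‖w‖ * ‖w‖ := by
    have := norm_integral_le_of_norm_le_const (μ := cp ν N) (f := Gb w w v) (C := ‖w‖ * ‖w‖)
      (Eventually.of_forall fun h => Gb_le w w v h)
    rw [probReal_univ, mul_one] at this
    exact (le_abs_self _).trans this
  have e5 : ∑ j ∈ Finset.range N, ∫ g, Gb w w v g ∂(cp ν (1 + j)) = ∑ j ∈ Finset.range N, ∫ g, Gb w w v g ∂(cp ν (j + 1)) :=
    Finset.sum_congr rfl fun j _ => by rw [add_comm]
  rw [e5]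
  linarith

lemma qb_norm (hν : Nice ν C) (N : ℕ) {v : U} (hv : v ≠ 0) {c : ℝ} (hc : 0 < c)
    (h : ∀ w, c * ‖w‖ ^ 2 ≤ qb ν N v w w) (g : U →L[ℝ] U) :
    c * ‖g‖ ^ 2 ≤ ∫ h, (‖g (h v)‖ / ‖h v‖) ^ 2 ∂(av ν N) := by
  set I := ∫ h, (‖g (h v)‖ / ‖h v‖) ^ 2 ∂(av ν N) with hI
  have hI0 : 0 ≤ I := integral_nonneg fun h => by positivity
  have hbd : ∀ w, c * ‖ContinuousLinearMap.adjoint g w‖ ^ 2 ≤ ‖w‖ ^ 2 * I := by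
    intro w
    refine (h _).trans ?_
    unfold qb
    rw [hI, ← integral_const_mul]
    have h0 : Continuous (fun h : U →L[ℝ] U => h v) := (ContinuousLinearMap.apply ℝ U v).continuous
    have hi : Integrable (fun h : U →L[ℝ] U => (‖g (h v)‖ / ‖h v‖) ^ 2) (av ν N) := by
      refine Integrable.of_bound (((g.continuous.comp h0).norm.measurable.div h0.norm.measurable).pow_const 2).aestronglyMeasurable (‖g‖ ^ 2) (Eventually.of_forall fun h => ?_)
      rw [Real.norm_eq_abs, abs_of_nonneg (by positivity)]
      gcongr
      exact div_le_of_le_mul₀ (by positivity) (by positivity) (g.le_opNorm _)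
    refine integral_mono (Gb_int _ _ _ _) (hi.const_mul _) fun k => ?_
    simp only [Gb, ContinuousLinearMap.adjoint_inner_left]
    rw [div_pow, ← mul_div_assoc]
    have := abs_real_inner_le_norm w (g (k v))
    apply div_le_div_of_nonneg_right _ (by positivity)
    rw [← abs_mul_abs_self, ← mul_pow, ← sq]
    gcongr
  have hn : ‖ContinuousLinearMap.adjoint g‖ ≤ Real.sqrt (I / c) := by
    refine ContinuousLinearMap.opNorm_le_bound _ (Real.sqrt_nonneg _) fun w => ?_
    apply abs_le_of_sq_le_sq' _ (by positivity) |>.2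
    rw [mul_pow, Real.sq_sqrt (by positivity), div_mul_eq_mul_div, le_div_iff₀ hc]
    linarith [hbd w]
  rw [LinearIsometryEquiv.norm_map] at hn
  have : ‖g‖ ^ 2 ≤ I / c := by
    rw [← Real.sq_sqrt (show 0 ≤ I / c by positivity)]
    gcongr
  rw [le_div_iff₀ hc] at this
  linarith

/-- irreducibility -/
def Irr (ν : Measure (U →L[ℝ] U)) : Prop :=
  ∀ Y : Submodule ℝ U, (∀ᵐ g ∂ν, ∀ y ∈ Y, g y ∈ Y) → Y = ⊥ ∨ Y = ⊤

lemma qb_unif (hν : Nice ν C) (hirr : Irr ν) (v : ℕ → U) (hv : ∀ N, v N ≠ 0) :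
    ∃ c : ℝ, 0 < c ∧ ∃ φ : ℕ → ℕ, StrictMono φ ∧ ∀ᶠ k in atTop, ∀ w, c * ‖w‖ ^ 2 ≤ qb ν (φ k) (v (φ k)) w w := by
  classical
  have hC := hν.one_le
  set e := stdOrthonormalBasis ℝ U
  have hmem : ∀ N, (fun i j => qb ν (N + 1) (v (N + 1)) (e i) (e j)) ∈ Set.Icc (fun _ _ => -1 : Fin (Module.finrank ℝ U) → Fin (Module.finrank ℝ U) → ℝ) (fun _ _ => 1) := by
    intro N
    have : ∀ i j, |qb ν (N + 1) (v (N + 1)) (e i) (e j)| ≤ 1 := by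
      intro i j
      have := qb_le (ν := ν) (Nat.succ_le_succ (Nat.zero_le N)) (v (N + 1)) (e i) (e j)
      simpa using this
    exact ⟨fun i j => (abs_le.1 (this i j)).1, fun i j => (abs_le.1 (this i j)).2⟩
  obtain ⟨a, -, φ0, hφ0, hlim⟩ := isCompact_Icc.tendsto_subseq hmem
  set φ : ℕ → ℕ := fun k => φ0 k + 1 with hφd
  have hφ : StrictMono φ := fun x y hxy => Nat.succ_lt_succ (hφ0 hxy)
  have hφ1 : ∀ k, 1 ≤ φ k := fun k => Nat.succ_le_succ (Nat.zero_le _)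
  set q : U → ℝ := fun w => ∑ i, ∑ j, inner ℝ w (e i) * inner ℝ w (e j) * a i j with hq
  have hql : ∀ w, Tendsto (fun k => qb ν (φ k) (v (φ k)) w w) atTop (𝓝 (q w)) := by
    intro w
    have : (fun k => qb ν (φ k) (v (φ k)) w w) = fun k => ∑ i, ∑ j, inner ℝ w (e i) * inner ℝ w (e j) * qb ν (φ k) (v (φ k)) (e i) (e j) := by
      ext k; exact qb_expand _ _ _ e
    rw [this]
    refine tendsto_finsetSum _ fun i _ => tendsto_finsetSum _ fun j _ => Tendsto.const_mul _ ?_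
    rw [tendsto_pi_nhds] at hlim
    exact tendsto_pi_nhds.1 (hlim i) j
  have hq0 : ∀ w, 0 ≤ q w := fun w => ge_of_tendsto' (hql w) fun k => qb_nonneg _ _ _
  have hqadd : ∀ w u, q (w + u) ≤ 2 * q w + 2 * q u := fun w u =>
    le_of_tendsto_of_tendsto' (hql _) (((hql w).const_mul 2).add ((hql u).const_mul 2)) fun k => qb_add_le _ _ _ _
  have hqs : ∀ (c : ℝ) w, q (c • w) = c ^ 2 * q w := fun c w =>
    tendsto_nhds_unique (hql _) (by simpa only [qb_smul] using (hql w).const_mul (c ^ 2))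
  let Z : Submodule ℝ U :=
    { carrier := {w | q w = 0}
      add_mem' := by
        intro x y hx hy
        have := hqadd x y
        simp only [Set.mem_ofPred_eq] at hx hy ⊢
        rw [hx, hy] at this
        exact le_antisymm (by linarith) (hq0 _)
      zero_mem' := by simp [hq]
      smul_mem' := by
        intro c x hx
        simp only [Set.mem_ofPred_eq] at hx ⊢
        rw [hqs, hx, mul_zero] }
  have hZ : ∀ w, w ∈ Z ↔ q w = 0 := fun w => Iff.rfl
  have hqm : Continuous q := by
    rw [hq]
    fun_prop
  have hadj : Continuous (fun g : U →L[ℝ] U => ContinuousLinearMap.adjoint g) :=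
    (ContinuousLinearMap.adjoint (𝕜 := ℝ) (E := U) (F := U)).continuous
  have hZinv : ∀ w ∈ Z, ∀ᵐ g ∂ν, ContinuousLinearMap.adjoint g w ∈ Z := by
    intro w hw
    have hadjw : Continuous (fun g : U →L[ℝ] U => ContinuousLinearMap.adjoint g w) :=
      (ContinuousLinearMap.apply ℝ U w).continuous.comp hadj
    have hbd : ∀ᵐ g ∂ν, ‖q (ContinuousLinearMap.adjoint g w)‖ ≤ C ^ 2 * ‖w‖ ^ 2 := by
      filter_upwards [hν.good] with g hg
      refine le_of_tendsto' (hql _).norm fun k => ?_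
      refine (qb_le (hφ1 k) _ _ _).trans ?_
      rw [← sq, ← mul_pow]
      gcongr
      refine (ContinuousLinearMap.le_opNorm _ _).trans ?_
      rw [LinearIsometryEquiv.norm_map]
      gcongr
      exact hg.1
    have hintg : Integrable (fun g => q (ContinuousLinearMap.adjoint g w)) ν :=
      Integrable.of_bound (hqm.comp hadjw).aestronglyMeasurable _ hbd
    have hcomm : Tendsto (fun k => ∫ g, qb ν (φ k) (v (φ k)) (ContinuousLinearMap.adjoint g w) (ContinuousLinearMap.adjoint g w) ∂ν) atTop
        (𝓝 (∫ g, q (ContinuousLinearMap.adjoint g w) ∂ν)) := by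
      apply tendsto_integral_of_dominated_convergence (fun _ => C ^ 2 * ‖w‖ ^ 2)
      · intro k
        have : (fun g : U →L[ℝ] U => qb ν (φ k) (v (φ k)) (ContinuousLinearMap.adjoint g w) (ContinuousLinearMap.adjoint g w)) =
          (fun u => ∑ i, ∑ j, inner ℝ u (e i) * inner ℝ u (e j) * qb ν (φ k) (v (φ k)) (e i) (e j)) ∘ (fun g : U →L[ℝ] U => ContinuousLinearMap.adjoint g w) := by
          ext g; exact qb_expand _ _ _ e
        rw [this]
        refine (Continuous.comp ?_ hadjw).aestronglyMeasurable
        fun_prop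
      · exact integrable_const _
      · intro k
        filter_upwards [hν.good] with g hg
        refine (qb_le (hφ1 k) _ _ _).trans ?_
        rw [← sq, ← mul_pow]
        gcongr
        refine (ContinuousLinearMap.le_opNorm _ _).trans ?_
        rw [LinearIsometryEquiv.norm_map]
        gcongr
        exact hg.1
      · exact Eventually.of_forall fun g => hql _
    have hz : ∫ g, q (ContinuousLinearMap.adjoint g w) ∂ν = 0 := by
      apply le_antisymm _ (integral_nonneg fun g => hq0 _)
      have hr : Tendsto (fun k => C ^ 2 * (qb ν (φ k) (v (φ k)) w w + (φ k : ℝ)⁻¹ * (‖w‖ * ‖w‖))) atTop (𝓝 (C ^ 2 * (q w + 0 * (‖w‖ * ‖w‖)))) := by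
        refine ((hql w).add (Tendsto.mul_const _ ?_)).const_mul _
        exact tendsto_inv_atTop_nhds_zero_nat.comp hφ.tendsto_atTop
      rw [(hZ w).1 hw] at hr
      simp only [zero_mul, add_zero, mul_zero] at hr
      exact le_of_tendsto_of_tendsto' hcomm hr fun k => qb_inv hν _ (hv _) w
    rw [integral_eq_zero_iff_of_nonneg (fun g => hq0 _) hintg] at hz
    exact hz
  have hZall : ∀ᵐ g ∂ν, ∀ w ∈ Z, ContinuousLinearMap.adjoint g w ∈ Z := by
    set bz := Module.finBasis ℝ Z
    have : ∀ᵐ g ∂ν, ∀ i, ContinuousLinearMap.adjoint g (bz i : U) ∈ Z :=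
      ae_all_iff.2 fun i => hZinv _ (bz i).2
    filter_upwards [this] with g hg w hw
    have h1 := bz.sum_repr ⟨w, hw⟩
    have h2 : w = ∑ i, bz.repr ⟨w, hw⟩ i • (bz i : U) := by
      have := congrArg (Subtype.val) h1
      rw [AddSubmonoidClass.coe_finset_sum] at this
      exact this.symm
    rw [h2, map_sum]
    refine Submodule.sum_mem _ fun i _ => ?_
    rw [map_smul]
    exact Submodule.smul_mem _ _ (hg i)
  have hZbot : Z = ⊥ := by
    have h1 : ∀ᵐ g ∂ν, ∀ y ∈ Zᗮ, g y ∈ Zᗮ := by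
      filter_upwards [hZall] with g hg y hy
      rw [Submodule.mem_orthogonal] at hy ⊢
      intro w hw
      rw [← ContinuousLinearMap.adjoint_inner_left]
      exact hy _ (hg w hw)
    rcases hirr _ h1 with h | h
    · exfalso
      rw [Submodule.orthogonal_eq_bot_iff] at h
      have h2 : Tendsto (fun k => ∑ i, qb ν (φ k) (v (φ k)) (e i) (e i)) atTop (𝓝 (∑ i, q (e i))) :=
        tendsto_finsetSum _ fun i _ => hql _
      have h3 : (fun k => ∑ i, qb ν (φ k) (v (φ k)) (e i) (e i)) = fun _ => (1 : ℝ) := by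
        ext k; exact qb_trace hν (hφ1 k) (hv _) e
      rw [h3] at h2
      have h4 := tendsto_nhds_unique h2 tendsto_const_nhds
      have h5 : ∑ i, q (e i) = 0 := Finset.sum_eq_zero fun i _ => (hZ _).1 (h ▸ Submodule.mem_top)
      rw [h5] at h4
      norm_num at h4
    · rwa [Submodule.orthogonal_eq_top_iff] at h
  have hpos : ∀ w, w ≠ 0 → 0 < q w := by
    intro w hw
    refine lt_of_le_of_ne (hq0 w) fun h => hw ?_
    have : w ∈ Z := h.symm
    rwa [hZbot, Submodule.mem_bot] at this
  have hcov : ∃ c : ℝ, 0 < c ∧ ∀ᶠ k in atTop, ∀ w ∈ Metric.sphere (0 : U) 1, c ≤ qb ν (φ k) (v (φ k)) w w := by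
    haveI : ProperSpace U := FiniteDimensional.proper ℝ U
    refine (isCompact_sphere (0 : U) 1).induction_on (p := fun s => ∃ c : ℝ, 0 < c ∧ ∀ᶠ k in atTop, ∀ w ∈ s, c ≤ qb ν (φ k) (v (φ k)) w w) ?_ ?_ ?_ ?_
    · exact ⟨1, one_pos, by simp⟩
    · rintro s t hst ⟨c, hc, h⟩
      exact ⟨c, hc, h.mono fun k hk w hw => hk w (hst hw)⟩
    · rintro s t ⟨c, hc, h⟩ ⟨c', hc', h'⟩
      refine ⟨min c c', lt_min hc hc', ?_⟩
      filter_upwards [h, h'] with k hk hk' w hw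
      rcases hw with hw | hw
      · exact (min_le_left _ _).trans (hk w hw)
      · exact (min_le_right _ _).trans (hk' w hw)
    · intro u hu
      have hu0 : u ≠ 0 := by
        rintro rfl; simp at hu
      have hqu := hpos u hu0
      refine ⟨Metric.ball u (Real.sqrt (q u / 8)), mem_nhdsWithin_of_mem_nhds (Metric.ball_mem_nhds _ (by positivity)), q u / 8, by positivity, ?_⟩
      have h1 : ∀ᶠ k in atTop, q u / 2 < qb ν (φ k) (v (φ k)) u u := (hql u).eventually (lt_mem_nhds (by linarith))
      filter_upwards [h1] with k hk w hw
      have h2 := qb_add_le (ν := ν) (φ k) (v (φ k)) w (u - w)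
      rw [add_sub_cancel] at h2
      have h3 := (le_abs_self _).trans (qb_le (ν := ν) (hφ1 k) (v (φ k)) (u - w) (u - w))
      have h4 : ‖u - w‖ * ‖u - w‖ ≤ q u / 8 := by
        rw [← Real.mul_self_sqrt (show 0 ≤ q u / 8 by positivity)]
        have : ‖u - w‖ ≤ Real.sqrt (q u / 8) := by
          rw [Metric.mem_ball, dist_comm, dist_eq_norm] at hw
          exact hw.le
        gcongr
      linarith
  obtain ⟨c, hc, h⟩ := hcov
  refine ⟨c, hc, φ, hφ, h.mono fun k hk w => ?_⟩
  by_cases hw : w = 0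
  · simp [hw, qb_nonneg]
  have hw' : 0 < ‖w‖ := norm_pos_iff.2 hw
  have := hk (‖w‖⁻¹ • w) (by simp [norm_smul, hw'.ne'])
  rw [qb_smul, inv_pow, ← div_eq_inv_mul, le_div_iff₀ (by positivity)] at this
  exact this
end Quad
end LYA

namespace LYA
open scoped ENNReal NNReal Topology
set_option linter.unusedSectionVars false
set_option linter.unusedSimpArgs false
set_option linter.unusedVariables false
set_option linter.unusedTactic false

section Irred
variable {U : Type*} [NormedAddCommGroup U] [InnerProductSpace ℝ U] [FiniteDimensional ℝ U]
variable {ν : Measure (U →L[ℝ] U)} [IsProbabilityMeasure ν] {C : ℝ}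

open Classical in
/-- action on nonzero vectors -/
def actz (g : U →L[ℝ] U) (v : {v : U // v ≠ 0}) : {v : U // v ≠ 0} :=
  if h : g v.1 ≠ 0 then ⟨g v.1, h⟩ else v

lemma actz_adm {g : U →L[ℝ] U} (hg : g ∈ (Adm : Set (U →L[ℝ] U))) (v : {v : U // v ≠ 0}) :
    (actz g v).1 = g v.1 := by
  obtain ⟨n, hn⟩ := hg
  unfold actz
  rw [dif_pos (hn.ne v.2)]

/-- vector cocycle on nonzero vectors -/
def psiz (g : U →L[ℝ] U) (v : {v : U // v ≠ 0}) : ℝ := psiV g v.1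

lemma psiz_mul {g h : U →L[ℝ] U} (hg : g ∈ (Adm : Set (U →L[ℝ] U))) (hh : h ∈ (Adm : Set (U →L[ℝ] U)))
    (v : {v : U // v ≠ 0}) : psiz (g * h) v = psiz g (actz h v) + psiz h v := by
  unfold psiz
  rw [actz_adm hh, psiV_mul hg hh]

lemma Nice.cocZ (h : Nice ν C) : Coc ν actz psiz (Real.log C) where
  meas v := meas_psiV v.1
  sub := ⟨Adm, meas_adm, h.good.mono fun g hg => hg.adm, adm_one, adm_mul,
    fun g hg h hh v => (psiz_mul hg hh v).le⟩
  bdd n := (h.cocV.bdd n).mono fun g hg v => hg v.1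
  nonneg := Real.log_nonneg h.one_le

lemma Nice.aeadm (h : Nice ν C) (n : ℕ) : ∀ᵐ g ∂(LYA.cp ν n), g ∈ (Adm : Set (U →L[ℝ] U)) :=
  (h.cp n).mono fun g hg => hg.adm

/-- uniform lower growth -/
def Pz (ν : Measure (U →L[ℝ] U)) (b : ℝ) : Prop :=
  ∃ m : ℕ, 1 ≤ m ∧ ∀ v : {v : U // v ≠ 0}, ∫ g, psiz g v ∂(cp ν m) ≤ m * (-b)

lemma posPart_le_exp {x α : ℝ} (hα : 0 < α) : max x 0 ≤ x + α⁻¹ * Real.exp (-(α * x)) := by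
  have h1 := Real.add_one_le_exp (-(α * x))
  have h2 : α⁻¹ * (-(α * x) + 1) ≤ α⁻¹ * Real.exp (-(α * x)) := by gcongr
  have h3 : α⁻¹ * (-(α * x) + 1) = -x + α⁻¹ := by field_simp
  have h4 : 0 < α⁻¹ := by positivity
  have h5 := Real.exp_pos (-(α * x))
  apply max_le
  · have : 0 < α⁻¹ * Real.exp (-(α * x)) := by positivity
    linarith
  · linarith

lemma Pz.neg (hν : Nice ν C) {b t : ℝ} (hP : Pz ν b) (ht : t < b) :
    ∃ D : ℝ, 0 ≤ D ∧ ∀ (n : ℕ) (v : {v : U // v ≠ 0}),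
      ∫ g, max (-psiz g v - n * t) 0 ∂(cp ν n) ≤ -(∫ g, psiz g v ∂(cp ν n)) - n * t + D := by
  obtain ⟨m, hm, h⟩ := hP
  obtain ⟨α, hα, h1⟩ := hν.cocZ.main hm (b := -b) (b' := -t) (by linarith) h
  obtain ⟨θ, hθ, h2⟩ := h1 α hα le_rfl
  obtain ⟨K, hK, h3⟩ := h2 0 inferInstance (Measure.AbsolutelyContinuous.zero _) (by simpa using hθ.le)
  rw [add_zero] at h3
  refine ⟨α⁻¹ * K, by positivity, fun n v => ?_⟩
  have hi := hν.cocZ.integrable n v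
  have hme := hν.cocZ.meas v
  have hexp : Integrable (fun g => Real.exp (α * psiz g v)) (cp ν n) := by
    refine ⟨(by fun_prop), ?_⟩
    rw [hasFiniteIntegral_iff_ofReal (Eventually.of_forall fun g => (Real.exp_pos _).le)]
    exact (h3 n v).trans_lt ENNReal.ofReal_lt_top
  have hexp2 : ∫ g, Real.exp (α * psiz g v) ∂(cp ν n) ≤ K * Real.exp (n * (α * -t)) := by
    rw [integral_eq_lintegral_of_nonneg_ae (Eventually.of_forall fun g => (Real.exp_pos _).le) hexp.1]
    exact ENNReal.toReal_le_of_le_ofReal (by positivity) (h3 n v)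
  have hi' : Integrable (fun g => -psiz g v - n * t) (cp ν n) := hi.neg.sub (integrable_const _)
  have hin : Integrable (fun g => -psiz g v) (cp ν n) := hi.neg
  have hI : Integrable (fun g => (-psiz g v - n * t) + α⁻¹ * (Real.exp (α * (n * t)) * Real.exp (α * psiz g v))) (cp ν n) :=
    (hi.neg.sub (integrable_const _)).add ((hexp.const_mul _).const_mul _)
  calc ∫ g, max (-psiz g v - n * t) 0 ∂(cp ν n)
      ≤ ∫ g, (-psiz g v - n * t) + α⁻¹ * (Real.exp (α * (n * t)) * Real.exp (α * psiz g v)) ∂(cp ν n) := by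
        apply integral_mono_of_nonneg (Eventually.of_forall fun g => le_max_right _ _) hI
        refine Eventually.of_forall fun g => ?_
        have := posPart_le_exp (x := -psiz g v - n * t) hα
        simp only [← Real.exp_add, Pi.zero_apply]
        have e : α * (n * t) + α * psiz g v = -(α * (-psiz g v - n * t)) := by ring
        rw [e]
        exact this
    _ = -(∫ g, psiz g v ∂(cp ν n)) - n * t + α⁻¹ * (Real.exp (α * (n * t)) * ∫ g, Real.exp (α * psiz g v) ∂(cp ν n)) := by
        rw [integral_add hi' ((hexp.const_mul _).const_mul _),
          integral_sub hin (integrable_const _), integral_const_mul, integral_const_mul]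
        simp only [integral_neg, integral_const, probReal_univ, one_smul, integral_const_mul]
    _ ≤ -(∫ g, psiz g v ∂(cp ν n)) - n * t + α⁻¹ * (Real.exp (α * (n * t)) * (K * Real.exp (n * (α * -t)))) := by
        gcongr
    _ = _ := by
        have : Real.exp (α * (n * t)) * (K * Real.exp (n * (α * -t))) = K := by
          rw [mul_left_comm, ← Real.exp_add]
          ring_nf
          simp
        rw [this]

/-- pointwise inequality -/
lemma pt_ineq {c y s G : ℝ} (hc : 0 < c) (hs : 0 < s) (hG : 0 < G) (hsG : s ≤ G) (t : ℝ) :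
    max (Real.log G - Real.log (2 / c) / 2 - t) 0 * ((s / G) ^ 2 - c / 2) ≤ max (Real.log s - t) 0 := by
  have hr : (s / G) ^ 2 ≤ 1 := by
    apply pow_le_one₀ (by positivity)
    rw [div_le_one hG]; exact hsG
  by_cases h : (s / G) ^ 2 ≤ c / 2
  · have : max (Real.log G - Real.log (2 / c) / 2 - t) 0 * ((s / G) ^ 2 - c / 2) ≤ 0 :=
      mul_nonpos_of_nonneg_of_nonpos (le_max_right _ _) (by linarith)
    exact this.trans (le_max_right _ _)
  · push Not at h
    have h1 := Real.log_le_log (by positivity) h.le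
    rw [Real.log_pow, Real.log_div hs.ne' hG.ne', Real.log_div hc.ne' two_ne_zero] at h1
    have h2 : Real.log (2 / c) = Real.log 2 - Real.log c := Real.log_div two_ne_zero hc.ne'
    push_cast at h1
    have h3 : Real.log G - Real.log (2 / c) / 2 - t ≤ Real.log s - t := by linarith
    have h4 : (s / G) ^ 2 - c / 2 ≤ 1 := by linarith
    calc _ ≤ max (Real.log G - Real.log (2 / c) / 2 - t) 0 * 1 := by
          apply mul_le_mul_of_nonneg_left h4 (le_max_right _ _)
      _ ≤ _ := by rw [mul_one]; exact max_le_max h3 le_rfl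

/-- drift of the averages -/
lemma drift (hν : Nice ν C) (v : {v : U // v ≠ 0}) (n : ℕ) {N : ℕ} (hN : 1 ≤ N) :
    -(∫ h, ∫ g, psiz g (actz h v) ∂(cp ν n) ∂(av ν N)) ≤
      (N : ℝ)⁻¹ * (n * (-(∫ g, psiz g v ∂(cp ν N)) + 2 * (n * Real.log C))) := by
  set B := Real.log C
  have hB : 0 ≤ B := hν.cocZ.nonneg
  have hintg := fun j => hν.cocZ.integrable j v
  set F : ℕ → ℝ := fun j => ∫ g, psiz g v ∂(cp ν j) with hF
  haveI := av_prob (ν := ν) hN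
  have hFb : ∀ j, |F j| ≤ j * B := by
    intro j
    have := norm_integral_le_of_norm_le_const (μ := cp ν j) (f := fun g => psiz g v) (C := j * B)
      ((hν.cocZ.bdd j).mono fun g hg => hg v)
    simpa using this
  have hadd : ∀ i j, F (i + j) = ∫ h, ∫ g, psiz g (actz h v) ∂(cp ν i) ∂(cp ν j) + F j := by
    intro i j
    have e1 : ∀ᵐ h ∂(cp ν j), ∫ g, psiz (g * h) v ∂(cp ν i) = ∫ g, psiz g (actz h v) ∂(cp ν i) + psiz h v := by
      filter_upwards [hν.aeadm j] with h hh
      have : ∀ᵐ g ∂(cp ν i), psiz (g * h) v = psiz g (actz h v) + psiz h v := by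
        filter_upwards [hν.aeadm i] with g hg using psiz_mul hg hh v
      rw [integral_congr_ae this, integral_add (hν.cocZ.integrable i _) (integrable_const _)]
      simp
    have hI := (integrable_cpcp (hintg (i + j))).integral_prod_right
    simp only at hI
    have hI2 : Integrable (fun h => ∫ g, psiz g (actz h v) ∂(cp ν i)) (cp ν j) := by
      refine (hI.sub (hintg j)).congr ?_
      filter_upwards [e1] with h hh
      simp [hh]
    show ∫ g, psiz g v ∂(cp ν (i + j)) = _
    rw [integral_cpcp (hintg (i + j)), integral_congr_ae e1, integral_add hI2 (hintg j)]
  have hI2 : ∀ j, Integrable (fun h => ∫ g, psiz g (actz h v) ∂(cp ν n)) (cp ν j) := by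
    intro j
    have hI := (integrable_cpcp (hintg (n + j))).integral_prod_right
    simp only at hI
    refine (hI.sub (hintg j)).congr ?_
    filter_upwards [hν.aeadm j] with h hh
    have : ∀ᵐ g ∂(cp ν n), psiz (g * h) v = psiz g (actz h v) + psiz h v := by
      filter_upwards [hν.aeadm n] with g hg using psiz_mul hg hh v
    simp only [Pi.sub_apply]
    rw [integral_congr_ae this, integral_add (hν.cocZ.integrable n _) (integrable_const _)]
    simp
  have hup : ∀ i, -F (N + i) ≤ -F N + i * B := by
    intro i
    have h1 := hadd i N
    have h2 : |∫ h, ∫ g, psiz g (actz h v) ∂(cp ν i) ∂(cp ν N)| ≤ i * B := by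
      have h3 : ∀ h, ‖∫ g, psiz g (actz h v) ∂(cp ν i)‖ ≤ i * B := by
        intro h
        have := norm_integral_le_of_norm_le_const (μ := cp ν i) (f := fun g => psiz g (actz h v)) (C := i * B)
          ((hν.cocZ.bdd i).mono fun g hg => hg _)
        simpa using this
      have := norm_integral_le_of_norm_le_const (μ := cp ν N) (f := fun h => ∫ g, psiz g (actz h v) ∂(cp ν i)) (C := i * B)
        (Eventually.of_forall h3)
      simpa using this
    rw [add_comm N i, h1]
    have := (abs_le.1 h2).1
    linarith
  rw [integral_av hI2, ← mul_neg]
  apply mul_le_mul_of_nonneg_left _ (by positivity)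
  have e1 : ∑ j ∈ Finset.range N, ∫ h, ∫ g, psiz g (actz h v) ∂(cp ν n) ∂(cp ν j) =
      ∑ j ∈ Finset.range N, F (n + j) - ∑ j ∈ Finset.range N, F j := by
    rw [← Finset.sum_sub_distrib]
    refine Finset.sum_congr rfl fun j _ => ?_
    rw [hadd]; ring
  have e2 : ∑ j ∈ Finset.range N, F (n + j) - ∑ j ∈ Finset.range N, F j =
      ∑ i ∈ Finset.range n, F (N + i) - ∑ i ∈ Finset.range n, F i := by
    have a1 := Finset.sum_range_add F n N
    have a2 := Finset.sum_range_add F N n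
    rw [add_comm n N] at a1
    linarith
  rw [e1, e2, neg_sub, ← Finset.sum_sub_distrib]
  calc _ ≤ ∑ i ∈ Finset.range n, (-F N + 2 * (n * B)) := by
        apply Finset.sum_le_sum
        intro i hi
        have hi' : (i : ℝ) ≤ n := by exact_mod_cast (Finset.mem_range.1 hi).le
        have h1 := hup i
        have h2 := (abs_le.1 (hFb i)).2
        have h3 : (i : ℝ) * B ≤ n * B := by gcongr
        linarith
    _ = _ := by rw [Finset.sum_const, Finset.card_range, nsmul_eq_mul]

theorem irr_main [Nontrivial U] (hν : Nice ν C) (hirr : Irr ν) {lam lam' : ℝ} (hlt : lam' < lam)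
    (H : ∀ n : ℕ, n * lam ≤ ∫ g, Real.log ‖g‖ ∂(cp ν n)) : Pz ν lam' := by
  by_contra hcon
  set B := Real.log C with hBd
  have hB : 0 ≤ B := hν.cocZ.nonneg
  set S : Set ℝ := {b | Pz ν b} with hS
  have hmono : ∀ b b', b ≤ b' → Pz ν b' → Pz ν b := by
    rintro b b' hb ⟨m, hm, h⟩
    exact ⟨m, hm, fun v => (h v).trans (by gcongr)⟩
  have hne : S.Nonempty := by
    refine ⟨-B, 1, le_rfl, fun v => ?_⟩
    have := norm_integral_le_of_norm_le_const (μ := cp ν 1) (f := fun g => psiz g v) (C := (1 : ℕ) * B)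
      ((hν.cocZ.bdd 1).mono fun g hg => hg v)
    rw [probReal_univ, mul_one] at this
    simpa using (le_abs_self _).trans this
  have hub : ∀ b ∈ S, b ≤ lam' := by
    intro b hb
    by_contra h
    exact hcon (hmono _ _ (not_le.1 h).le hb)
  have hbdd : BddAbove S := ⟨lam', hub⟩
  set β := sSup S with hβ
  have hβl : β ≤ lam' := csSup_le hne hub
  have hvN : ∀ N : ℕ, ∃ v : {v : U // v ≠ 0}, 1 ≤ N → -(∫ g, psiz g v ∂(cp ν N)) ≤ N * β + 1 := by
    intro N
    by_cases hN : 1 ≤ N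
    · have hN' : (0 : ℝ) < N := by exact_mod_cast hN
      have : ¬ Pz ν (β + (N : ℝ)⁻¹) := by
        intro h
        have h1 := le_csSup hbdd h
        have : (0 : ℝ) < (N : ℝ)⁻¹ := by positivity
        linarith
      unfold Pz at this
      push Not at this
      obtain ⟨v, hv⟩ := this N hN
      refine ⟨v, fun _ => ?_⟩
      have e : (N : ℝ) * -(β + (N : ℝ)⁻¹) = -(N * β + 1) := by field_simp
      rw [e] at hv
      linarith
    · obtain ⟨v, hv⟩ := exists_ne (0 : U)
      exact ⟨⟨v, hv⟩, fun h => absurd h hN⟩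
  choose v hv using hvN
  obtain ⟨c, hc, φ, hφ, hunif⟩ := qb_unif hν hirr (fun N => (v N).1) (fun N => (v N).2)
  set K := Real.log (2 / c) / 2 with hK
  -- main inequality
  have main : ∀ δ : ℝ, 0 < δ → c / 2 * (lam - β + δ) ≤ δ := by
    intro δ hδ
    have hPz : Pz ν (β - δ / 2) := by
      obtain ⟨b, hb, hbl⟩ := exists_lt_of_lt_csSup hne (show β - δ / 2 < sSup S by rw [← hβ]; linarith)
      exact hmono _ _ hbl.le hb
    obtain ⟨D, hD, hneg⟩ := hPz.neg hν (t := β - δ) (by linarith)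
    have step1 : ∀ n k : ℕ, 1 ≤ φ k → (∀ w, c * ‖w‖ ^ 2 ≤ qb ν (φ k) (v (φ k)).1 w w) →
        c / 2 * (n * lam - K - n * (β - δ)) ≤
          ((φ k : ℝ)⁻¹ * (n * ((φ k) * β + 1 + 2 * (n * B)))) - n * (β - δ) + D := by
      intro n k hN hq
      set N := φ k with hNd
      set u := v N with hu
      set t := (n : ℝ) * (β - δ) with ht
      haveI := av_prob (ν := ν) hN
      have hadm : ∀ᵐ h ∂(av ν N), h ∈ (Adm : Set (U →L[ℝ] U)) := ae_av fun j => hν.aeadm j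
      -- the positive part on the product
      have hmeas : Measurable (fun p : (U →L[ℝ] U) × (U →L[ℝ] U) => psiV p.1 (p.2 u.1)) := by
        have c1 : Continuous (fun p : (U →L[ℝ] U) × (U →L[ℝ] U) => p.2 u.1) :=
          (ContinuousLinearMap.apply ℝ U u.1).continuous.comp continuous_snd
        have c2 : Continuous (fun p : (U →L[ℝ] U) × (U →L[ℝ] U) => p.1 (p.2 u.1)) :=
          continuous_fst.clm_apply c1
        exact (Real.measurable_log.comp (c2.norm.measurable.div c1.norm.measurable)).neg
      set R : ℝ := n * B + |t| with hR
      have hPb : ∀ᵐ p ∂((cp ν n).prod (av ν N)), ‖max (-psiV p.1 (p.2 u.1) - t) 0‖ ≤ R := by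
        have : ∀ᵐ p ∂((cp ν n).prod (av ν N)), ∀ x, |psiV p.1 x| ≤ n * B :=
          Measure.quasiMeasurePreserving_fst.ae (hν.cocV.bdd n)
        filter_upwards [this] with p hp
        have h1 := abs_le.1 (hp (p.2 u.1))
        have h2 := neg_abs_le t
        have h3 : 0 ≤ (n : ℝ) * B := by positivity
        rw [Real.norm_eq_abs, abs_of_nonneg (le_max_right _ _)]
        exact max_le (by linarith) (by positivity)
      have hPI : Integrable (fun p : (U →L[ℝ] U) × (U →L[ℝ] U) => max (-psiV p.1 (p.2 u.1) - t) 0) ((cp ν n).prod (av ν N)) :=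
        Integrable.of_bound ((hmeas.neg.sub_const t).max measurable_const).aestronglyMeasurable R hPb
      have hlogI : Integrable (fun g : U →L[ℝ] U => Real.log ‖g‖) (cp ν n) := hν.cocN.integrable n ()
      -- lower bound
      have low : c / 2 * (n * lam - K - t) ≤ ∫ g, ∫ h, max (-psiV g (h u.1) - t) 0 ∂(av ν N) ∂(cp ν n) := by
        calc c / 2 * (n * lam - K - t) ≤ c / 2 * ∫ g, (Real.log ‖g‖ - K - t) ∂(cp ν n) := by
              gcongr
              have hs : Integrable (fun g : U →L[ℝ] U => Real.log ‖g‖ - K) (cp ν n) := hlogI.sub (integrable_const _)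
              rw [integral_sub hs (integrable_const _), integral_sub hlogI (integrable_const _)]
              simp only [integral_const, probReal_univ, one_smul]
              linarith [H n]
          _ = ∫ g, c / 2 * (Real.log ‖g‖ - K - t) ∂(cp ν n) := by rw [integral_const_mul]
          _ ≤ _ := by
              apply integral_mono_ae (((hlogI.sub (integrable_const _)).sub (integrable_const _)).const_mul _)
                hPI.integral_prod_left
              filter_upwards [hν.aeadm n, hν.cp n] with g hg hgood
              have hg0 : 0 < ‖g‖ := hgood.pos
              have hqn := qb_norm hν N u.2 hc hq g
              have h0 : Continuous (fun h : U →L[ℝ] U => h u.1) := (ContinuousLinearMap.apply ℝ U u.1).continuous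
              have hmax : ∀ h : U →L[ℝ] U, (‖g (h u.1)‖ / ‖h u.1‖) ≤ ‖g‖ := fun h =>
                div_le_of_le_mul₀ (by positivity) (by positivity) (g.le_opNorm _)
              have hi : Integrable (fun h : U →L[ℝ] U => (‖g (h u.1)‖ / ‖h u.1‖) ^ 2) (av ν N) := by
                refine Integrable.of_bound (((g.continuous.comp h0).norm.measurable.div h0.norm.measurable).pow_const 2).aestronglyMeasurable (‖g‖ ^ 2) (Eventually.of_forall fun h => ?_)
                rw [Real.norm_eq_abs, abs_of_nonneg (by positivity)]
                gcongr
                exact hmax h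
              have hi2 : Integrable (fun h : U →L[ℝ] U => max (Real.log ‖g‖ - K - t) 0 * ((‖g (h u.1)‖ / ‖h u.1‖ / ‖g‖) ^ 2 - c / 2)) (av ν N) := by
                simp only [div_pow _ ‖g‖]
                exact ((hi.div_const _).sub (integrable_const _)).const_mul _
              calc c / 2 * (Real.log ‖g‖ - K - t) ≤ c / 2 * max (Real.log ‖g‖ - K - t) 0 := by
                    gcongr; exact le_max_left _ _
                _ ≤ max (Real.log ‖g‖ - K - t) 0 * ((∫ h, (‖g (h u.1)‖ / ‖h u.1‖) ^ 2 ∂(av ν N)) / ‖g‖ ^ 2 - c / 2) := by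
                    rw [mul_comm]
                    apply mul_le_mul_of_nonneg_left _ (le_max_right _ _)
                    have : c ≤ (∫ h, (‖g (h u.1)‖ / ‖h u.1‖) ^ 2 ∂(av ν N)) / ‖g‖ ^ 2 := by
                      rw [le_div_iff₀ (by positivity)]; exact hqn
                    linarith
                _ = ∫ h, max (Real.log ‖g‖ - K - t) 0 * ((‖g (h u.1)‖ / ‖h u.1‖ / ‖g‖) ^ 2 - c / 2) ∂(av ν N) := by
                    rw [integral_const_mul]
                    simp only [div_pow _ ‖g‖]
                    rw [integral_sub (hi.div_const _) (integrable_const _), integral_div]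
                    simp
                _ ≤ _ := by
                    apply integral_mono_ae hi2
                    · refine Integrable.of_bound (((hmeas.comp (measurable_const.prodMk measurable_id)).neg.sub_const t).max measurable_const).aestronglyMeasurable
                        (Real.log (C ^ n) + |t|) (Eventually.of_forall fun h => ?_)
                      have h1 := abs_le.1 (hgood.log_vec (one_le_pow₀ hν.one_le) (h u.1))
                      have h2 := neg_abs_le t
                      have h3 := Real.log_nonneg (one_le_pow₀ hν.one_le (n := n))
                      simp only [Function.comp, id, Real.norm_eq_abs, psiV, neg_neg]
                      rw [abs_of_nonneg (le_max_right _ _)]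
                      exact max_le (by linarith) (by positivity)
                    · filter_upwards [hadm] with h hh
                      obtain ⟨k', hk'⟩ := hh
                      have h1 := hk'.ne u.2
                      have h2 := hgood.ne h1
                      have h3 : 0 < ‖h u.1‖ := norm_pos_iff.2 h1
                      have h4 : 0 < ‖g (h u.1)‖ := norm_pos_iff.2 h2
                      have := pt_ineq (c := c) (y := 0) (s := ‖g (h u.1)‖ / ‖h u.1‖) (G := ‖g‖) hc (by positivity) hg0 (hmax h) t
                      simpa only [psiV, neg_neg] using this
      have hPI2 : Integrable (fun p : (U →L[ℝ] U) × (U →L[ℝ] U) => psiV p.1 (p.2 u.1)) ((cp ν n).prod (av ν N)) := by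
        refine Integrable.of_bound hmeas.aestronglyMeasurable (n * B) ?_
        have : ∀ᵐ p ∂((cp ν n).prod (av ν N)), ∀ x, |psiV p.1 x| ≤ n * B :=
          Measure.quasiMeasurePreserving_fst.ae (hν.cocV.bdd n)
        filter_upwards [this] with p hp using hp _
      have hI3 : Integrable (fun h => ∫ g, psiz g (actz h u) ∂(cp ν n)) (av ν N) := by
        refine hPI2.integral_prod_right.congr ?_
        filter_upwards [hadm] with h hh
        simp only [psiz, actz_adm hh]
      have up : ∫ g, ∫ h, max (-psiV g (h u.1) - t) 0 ∂(av ν N) ∂(cp ν n) ≤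
          -(∫ h, ∫ g, psiz g (actz h u) ∂(cp ν n) ∂(av ν N)) - t + D := by
        rw [integral_integral_swap hPI]
        have hI4 : Integrable (fun h => -(∫ g, psiz g (actz h u) ∂(cp ν n))) (av ν N) := hI3.neg
        calc _ ≤ ∫ h, (-(∫ g, psiz g (actz h u) ∂(cp ν n)) + (- t + D)) ∂(av ν N) := by
              apply integral_mono_ae hPI.integral_prod_right (hI4.add (integrable_const _))
              filter_upwards [hadm] with h hh
              have := hneg n (actz h u)
              simp only [psiz, Pi.add_apply, actz_adm hh, ← ht] at this ⊢
              linarith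
          _ = _ := by
              rw [integral_add hI4 (integrable_const _)]
              simp only [integral_neg, integral_const, probReal_univ, one_smul]
              ring
      have dr := drift hν u n hN
      have hvu := hv N hN
      have dr2 : (N : ℝ)⁻¹ * (n * (-(∫ g, psiz g u ∂(cp ν N)) + 2 * (n * Real.log C))) ≤
          (N : ℝ)⁻¹ * (n * ((N : ℝ) * β + 1 + 2 * (n * B))) := by
        gcongr
      linarith
    have step2 : ∀ n : ℕ, c / 2 * (n * lam - K - n * (β - δ)) ≤ n * δ + D := by
      intro n
      have hlim : Tendsto (fun k => ((n : ℝ) * β + (φ k : ℝ)⁻¹ * (n * (1 + 2 * (n * B)))) - n * (β - δ) + D) atTop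
          (𝓝 ((n * β + 0 * (n * (1 + 2 * (n * B)))) - n * (β - δ) + D)) := by
        refine (Tendsto.sub_const (Tendsto.const_add _ (Tendsto.mul_const _ ?_)) _).add_const _
        exact tendsto_inv_atTop_nhds_zero_nat.comp hφ.tendsto_atTop
      have : c / 2 * (n * lam - K - n * (β - δ)) ≤ (n * β + 0 * (n * (1 + 2 * (n * B)))) - n * (β - δ) + D := by
        refine ge_of_tendsto hlim ?_
        filter_upwards [hunif, hφ.tendsto_atTop.eventually_ge_atTop 1] with k hk hk1
        refine (step1 n k hk1 hk).trans (le_of_eq ?_)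
        have : (φ k : ℝ) ≠ 0 := by
          have : (1 : ℝ) ≤ φ k := by exact_mod_cast hk1
          positivity
        field_simp
        ring
      linarith
    by_contra hc2
    push Not at hc2
    obtain ⟨n, hn⟩ := exists_nat_gt ((D + c / 2 * K) / (c / 2 * (lam - β + δ) - δ))
    rw [div_lt_iff₀ (by linarith)] at hn
    have := step2 n
    nlinarith
  have hgap : 0 < lam - β := by linarith
  have := main (c * (lam - β) / 4) (by positivity)
  nlinarith [mul_pos hc hgap, mul_pos hc (mul_pos hc hgap)]

end Irred
end LYA

namespace LYA
open scoped ENNReal NNReal Topology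
set_option linter.unusedSectionVars false
set_option linter.unusedSimpArgs false
set_option linter.unusedVariables false
set_option linter.unusedTactic false

section Tri
variable {U : Type*} [NormedAddCommGroup U] [InnerProductSpace ℝ U] [FiniteDimensional ℝ U]

/-- compression to a subspace -/
def rW (W : Submodule ℝ U) (g : U →L[ℝ] U) : W →L[ℝ] W :=
  W.orthogonalProjectionOnto ∘L g ∘L W.subtypeL

lemma rW_coe (W : Submodule ℝ U) (g : U →L[ℝ] U) (w : W) : ((rW W g w : W) : U) = W.starProjection (g w) := rfl

lemma rW_cont (W : Submodule ℝ U) : Continuous (rW W) := by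
  unfold rW
  fun_prop

lemma rW_meas (W : Submodule ℝ U) : Measurable (rW W) := (rW_cont W).measurable

lemma rW_one (W : Submodule ℝ U) : rW W 1 = 1 := by
  ext w
  rw [rW_coe]
  simp

lemma rW_norm_le (W : Submodule ℝ U) (g : U →L[ℝ] U) : ‖rW W g‖ ≤ ‖g‖ := by
  refine ContinuousLinearMap.opNorm_le_bound _ (norm_nonneg _) fun w => ?_
  calc ‖rW W g w‖ = ‖W.starProjection (g w)‖ := by rw [← rW_coe]; rfl
    _ ≤ 1 * ‖g w‖ := W.starProjection.le_of_opNorm_le W.starProjection_norm_le _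
    _ ≤ ‖g‖ * ‖w‖ := by rw [one_mul]; exact g.le_opNorm _

lemma norm_PgP_le (W : Submodule ℝ U) (g : U →L[ℝ] U) : ‖W.starProjection * g * W.starProjection‖ ≤ ‖rW W g‖ := by
  refine ContinuousLinearMap.opNorm_le_bound _ (ContinuousLinearMap.opNorm_nonneg (rW W g)) fun w => ?_
  have h1 : (W.starProjection * g * W.starProjection) w = (rW W g (W.orthogonalProjectionOnto w) : U) := rfl
  rw [h1]
  calc ‖(rW W g (W.orthogonalProjectionOnto w) : U)‖ = ‖rW W g (W.orthogonalProjectionOnto w)‖ := rfl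
    _ ≤ ‖rW W g‖ * ‖W.orthogonalProjectionOnto w‖ := (rW W g).le_opNorm _
    _ = ‖rW W g‖ * ‖W.starProjection w‖ := rfl
    _ ≤ ‖rW W g‖ * (1 * ‖w‖) := by gcongr; exact W.starProjection.le_of_opNorm_le W.starProjection_norm_le _
    _ = _ := by ring

/-- stabilizer of a subspace -/
def Stab (Y : Submodule ℝ U) : Set (U →L[ℝ] U) := {g | ∀ y ∈ Y, g y ∈ Y}

lemma stab_meas (Y : Submodule ℝ U) : MeasurableSet (Stab Y) := by
  have : Stab Y = ⋂ y ∈ Y, {g : U →L[ℝ] U | g y ∈ (Y : Set U)} := by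
    ext g; simp [Stab]
  rw [this]
  refine IsClosed.measurableSet (isClosed_biInter fun y hy => ?_)
  exact (Y.closed_of_finiteDimensional).preimage (ContinuousLinearMap.apply ℝ U y).continuous

lemma stab_one (Y : Submodule ℝ U) : 1 ∈ Stab Y := fun y hy => hy
lemma stab_mul (Y : Submodule ℝ U) : ∀ g ∈ Stab Y, ∀ h ∈ Stab Y, g * h ∈ Stab Y :=
  fun g hg h hh y hy => hg _ (hh y hy)

lemma starP_split (Y : Submodule ℝ U) (x : U) : Y.starProjection x + Yᗮ.starProjection x = x :=
  Y.starProjection_add_starProjection_orthogonal x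

lemma starP_orth (Y : Submodule ℝ U) {x : U} (hx : x ∈ Y) : Yᗮ.starProjection x = 0 := by
  have := starP_split Y x
  rw [Submodule.starProjection_eq_self_iff.2 hx] at this
  simpa using this

lemma rW_mul {Y W : Submodule ℝ U} (hW : W = Y ∨ W = Yᗮ) : ∀ g ∈ Stab Y, ∀ h ∈ Stab Y,
    rW W (g * h) = rW W g * rW W h := by
  intro g hg h hh
  ext w
  rw [mul_apply_eq_comp, rW_coe, rW_coe, rW_coe, mul_apply_eq_comp]
  rcases hW with rfl | rfl
  · rw [Submodule.starProjection_eq_self_iff.2 (hh _ w.2)]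
  · conv_lhs => rw [← starP_split Y (h w)]
    rw [map_add, map_add, starP_orth Y (hg _ (Submodule.starProjection_apply_mem _ _)), zero_add]

lemma rW_good {Y W : Submodule ℝ U} (hW : W = Y ∨ W = Yᗮ) {C : ℝ} (hC : 0 ≤ C) {g : U →L[ℝ] U} (hg : g ∈ Stab Y) (hG : Good C g) :
    Good C (rW W g) := by
  refine ⟨(rW_norm_le _ _).trans hG.1, fun w => ?_⟩
  have e : ‖rW W g w‖ = ‖W.starProjection (g w)‖ := by rw [← rW_coe]; rfl
  rw [e]
  rcases hW with rfl | rfl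
  · rw [Submodule.starProjection_eq_self_iff.2 (hg _ w.2)]
    exact hG.2 w
  · -- `g` maps `Y` onto `Y`
    have hsurj : ∃ y ∈ Y, g y = Y.starProjection (g w) := by
      let f : Y →ₗ[ℝ] Y := (g.toLinearMap).restrict (p := Y) (q := Y) hg
      have hinj : Function.Injective f := by
        rw [← LinearMap.ker_eq_bot, LinearMap.ker_eq_bot']
        intro y hy
        by_contra hne
        have h1 : (y : U) ≠ 0 := fun h => hne (Subtype.ext h)
        exact hG.ne h1 (congrArg Subtype.val hy)
      obtain ⟨y, hy⟩ := (LinearMap.injective_iff_surjective.1 hinj) ⟨_, Submodule.starProjection_apply_mem Y (g w)⟩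
      exact ⟨y, y.2, congrArg Subtype.val hy⟩
    obtain ⟨y, hy, hgy⟩ := hsurj
    have h1 : Yᗮ.starProjection (g w) = g (w - y) := by
      have := starP_split Y (g w)
      rw [map_sub, hgy]
      exact eq_sub_of_add_eq' this
    rw [h1]
    refine le_trans ?_ (hG.2 _)
    have h2 : (inner ℝ (w : U) y : ℝ) = 0 := Submodule.inner_left_of_mem_orthogonal hy w.2
    have h3 : ‖(w : U) - y‖ ^ 2 = ‖(w : U)‖ ^ 2 + ‖y‖ ^ 2 := by
      rw [norm_sub_sq_real, h2]; ring
    have h4 : ‖w‖ = ‖(w : U)‖ := rfl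
    rw [h4]
    apply abs_le_of_sq_le_sq' _ (norm_nonneg _) |>.2
    rw [h3]
    nlinarith [sq_nonneg ‖y‖]

/-- off-diagonal part -/
def cW (Y : Submodule ℝ U) (g : U →L[ℝ] U) : U →L[ℝ] U := Y.starProjection * g * Yᗮ.starProjection

lemma cW_meas (Y : Submodule ℝ U) : Measurable (cW Y) := by
  have : Continuous (cW Y) := by
    unfold cW
    fun_prop
  exact this.measurable

lemma cW_norm_le (Y : Submodule ℝ U) (g : U →L[ℝ] U) : ‖cW Y g‖ ≤ ‖g‖ := by
  unfold cW
  calc _ ≤ ‖Y.starProjection‖ * ‖g‖ * ‖Yᗮ.starProjection‖ :=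
        (norm_mul_le _ _).trans (by gcongr; exact norm_mul_le _ _)
    _ ≤ 1 * ‖g‖ * 1 := by gcongr <;> exact Submodule.starProjection_norm_le _
    _ = _ := by ring

lemma cW_mul (Y : Submodule ℝ U) (g h : U →L[ℝ] U) : ‖cW Y (g * h)‖ ≤ ‖rW Y g‖ * ‖cW Y h‖ + ‖cW Y g‖ * ‖rW Yᗮ h‖ := by
  set P := Y.starProjection with hP
  set Q := Yᗮ.starProjection with hQ
  have hPP : P * P = P := Y.isIdempotentElem_starProjection
  have hQQ : Q * Q = Q := Yᗮ.isIdempotentElem_starProjection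
  have hPQ : P + Q = 1 := by
    ext x; exact starP_split Y x
  have : cW Y (g * h) = (P * g * P) * cW Y h + cW Y g * (Q * h * Q) := by
    unfold cW
    calc P * (g * h) * Q = P * g * (P + Q) * h * Q := by rw [hPQ]; noncomm_ring
      _ = P * g * (P * P + Q * Q) * h * Q := by rw [hPP, hQQ]
      _ = _ := by noncomm_ring
  rw [this]
  calc _ ≤ ‖P * g * P‖ * ‖cW Y h‖ + ‖cW Y g‖ * ‖Q * h * Q‖ :=
        (norm_add_le _ _).trans (add_le_add (norm_mul_le _ _) (norm_mul_le _ _))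
    _ ≤ _ := by gcongr <;> exact norm_PgP_le _ _

lemma norm_le_tri (Y : Submodule ℝ U) {g : U →L[ℝ] U} (hg : g ∈ Stab Y) : ‖g‖ ≤ ‖rW Y g‖ + ‖cW Y g‖ + ‖rW Yᗮ g‖ := by
  set P := Y.starProjection with hP
  set Q := Yᗮ.starProjection with hQ
  have hPQ : P + Q = 1 := by
    ext x; exact starP_split Y x
  have h0 : Q * g * P = 0 := by
    ext x
    exact starP_orth Y (hg _ (Submodule.starProjection_apply_mem _ _))
  have : g = P * g * P + cW Y g + Q * g * Q := by
    calc g = (P + Q) * g * (P + Q) := by rw [hPQ]; simp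
      _ = P * g * P + P * g * Q + Q * g * Q + Q * g * P := by noncomm_ring
      _ = _ := by rw [h0, add_zero]; rfl
  calc ‖g‖ = ‖P * g * P + cW Y g + Q * g * Q‖ := by rw [← this]
    _ ≤ ‖P * g * P‖ + ‖cW Y g‖ + ‖Q * g * Q‖ := norm_add₃_le
    _ ≤ _ := by gcongr <;> exact norm_PgP_le _ _

variable {ν : Measure (U →L[ℝ] U)} [IsProbabilityMeasure ν] {C : ℝ}

lemma rW_prob (W : Submodule ℝ U) : IsProbabilityMeasure (ν.map (rW W)) :=
  Measure.isProbabilityMeasure_map (rW_meas W).aemeasurable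

lemma rW_nice {Y W : Submodule ℝ U} (hW : W = Y ∨ W = Yᗮ) (hν : Nice ν C) (hY : ∀ᵐ g ∂ν, g ∈ Stab Y) :
    Nice (ν.map (rW W)) C := by
  refine ⟨hν.one_le, ?_⟩
  rw [ae_map_iff (rW_meas W).aemeasurable (meas_good C)]
  filter_upwards [hν.good, hY] with g hg hg'
  exact rW_good hW (zero_le_one.trans hν.one_le) hg' hg

lemma rW_cp {Y W : Submodule ℝ U} (hW : W = Y ∨ W = Yᗮ) (κ : Measure (U →L[ℝ] U)) [IsFiniteMeasure κ]
    (hY : ∀ᵐ g ∂κ, g ∈ Stab Y) (n : ℕ) :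
    (cp κ n).map (rW W) = cp (κ.map (rW W)) n :=
  map_cp κ (rW W) (rW_meas W) (Stab Y) (stab_meas Y) (stab_one Y) (stab_mul Y) (rW_one W) (rW_mul hW) hY n

lemma stab_cp {Y : Submodule ℝ U} (κ : Measure (U →L[ℝ] U)) [IsFiniteMeasure κ]
    (hY : ∀ᵐ g ∂κ, g ∈ Stab Y) (n : ℕ) : ∀ᵐ g ∂(cp κ n), g ∈ Stab Y :=
  ae_cp κ (P := fun _ => Stab Y) (A := Stab Y) (fun _ => stab_meas Y) (stab_one Y) (fun _ => stab_mul Y) hY n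

end Tri
end LYA

namespace LYA
open scoped ENNReal NNReal Topology
set_option linter.unusedSectionVars false
set_option linter.unusedSimpArgs false
set_option linter.unusedVariables false
set_option linter.unusedTactic false

section Tri2

lemma enorm_rpow_eq {V : Type*} [NormedAddCommGroup V] {x : V} (hx : 0 < ‖x‖) (α : ℝ) :
    ‖x‖ₑ ^ α = ENNReal.ofReal (Real.exp (α * Real.log ‖x‖)) := by
  rw [← ofReal_norm, ENNReal.ofReal_rpow_of_pos hx, Real.rpow_def_of_pos hx, mul_comm]

/-- doubling recursion -/
lemma doubling {c : ℕ → ℝ≥0∞} (hc : ∀ n, c n ≠ ∞) {K s2 s3 : ℝ} (hK : 0 ≤ K) (hs : s2 < s3)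
    (h : ∀ n, c (n + n) ≤ ENNReal.ofReal (K * Real.exp (n * s2)) * c n) :
    ∃ n0 : ℕ, 1 ≤ n0 ∧ ∃ D : ℝ, 0 ≤ D ∧ ∀ j : ℕ,
      c (2 ^ j * n0) ≤ ENNReal.ofReal (D * Real.exp ((2 ^ j * n0 : ℕ) * s3)) := by
  obtain ⟨n0, hn0⟩ := exists_nat_ge (K / (s3 - s2))
  refine ⟨n0 + 1, by omega, (c (n0 + 1)).toReal * Real.exp (-((n0 + 1 : ℕ) * s3)), by positivity, ?_⟩
  intro j
  induction j with
  | zero =>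
    rw [pow_zero, one_mul, mul_assoc, ← Real.exp_add, neg_add_cancel, Real.exp_zero, mul_one,
      ENNReal.ofReal_toReal (hc _)]
  | succ j ih =>
    set n := 2 ^ j * (n0 + 1) with hn
    have e : 2 ^ (j + 1) * (n0 + 1) = n + n := by rw [hn, pow_succ]; ring
    have hnn : (n0 : ℝ) ≤ n := by
      have : n0 ≤ n := by
        have : 1 ≤ 2 ^ j := Nat.one_le_two_pow
        nlinarith
      exact_mod_cast this
    have hK' : K ≤ Real.exp (n * (s3 - s2)) := by
      have h1 : K ≤ n * (s3 - s2) := by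
        rw [div_le_iff₀ (by linarith)] at hn0
        have : (n0 : ℝ) * (s3 - s2) ≤ n * (s3 - s2) := by gcongr
        linarith
      have := Real.add_one_le_exp (n * (s3 - s2))
      linarith
    rw [e]
    refine (h n).trans ((mul_le_mul' le_rfl ih).trans ?_)
    rw [← ENNReal.ofReal_mul (by positivity)]
    apply ENNReal.ofReal_le_ofReal
    set D := (c (n0 + 1)).toReal * Real.exp (-((n0 + 1 : ℕ) * s3)) with hD
    have hD0 : 0 ≤ D := by positivity
    calc K * Real.exp (n * s2) * (D * Real.exp (n * s3))
        ≤ Real.exp (n * (s3 - s2)) * Real.exp (n * s2) * (D * Real.exp (n * s3)) := by gcongr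
      _ = D * (Real.exp (n * (s3 - s2)) * Real.exp (n * s2) * Real.exp (n * s3)) := by ring
      _ = _ := by rw [← Real.exp_add, ← Real.exp_add]; congr 2; push_cast; ring

section
variable {V : Type*} [NormedAddCommGroup V] [InnerProductSpace ℝ V] [FiniteDimensional ℝ V] [Nontrivial V]

lemma meas_enpow (α : ℝ) : Measurable (fun g : V →L[ℝ] V => ‖g‖ₑ ^ α) :=
  Measurable.comp (g := fun x : ℝ≥0∞ => x ^ α) (by fun_prop) measurable_enorm

lemma upper_of_not {ν : Measure (V →L[ℝ] V)} [IsProbabilityMeasure ν] {C : ℝ} (hν : Nice ν C) {l1 l2 : ℝ} (hl : l1 < l2)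
    (hn : ¬ ∀ n : ℕ, n * l1 ≤ ∫ g, Real.log ‖g‖ ∂(cp ν n)) :
    ∃ α₀ : ℝ, 0 < α₀ ∧ ∀ α, 0 < α → α ≤ α₀ → ∃ K : ℝ, 0 ≤ K ∧ ∀ n : ℕ,
      ∫⁻ g, ‖g‖ₑ ^ α ∂(cp ν n) ≤ ENNReal.ofReal (K * Real.exp (n * (α * l2))) := by
  push Not at hn
  obtain ⟨m, hm⟩ := hn
  have hm1 : 1 ≤ m := by
    rcases Nat.eq_zero_or_pos m with rfl | h
    · simp [cp_zero] at hm
    · exact h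
  obtain ⟨α₀, hα₀, h1⟩ := hν.cocN.main hm1 (b := l1) (b' := l2) hl (fun _ => hm.le)
  refine ⟨α₀, hα₀, fun α hα hαl => ?_⟩
  obtain ⟨θ, hθ, h2⟩ := h1 α hα hαl
  obtain ⟨K, hK, h3⟩ := h2 0 inferInstance (Measure.AbsolutelyContinuous.zero _) (by simpa using hθ.le)
  refine ⟨K, hK, fun n => ?_⟩
  have h4 := h3 n ()
  rw [add_zero] at h4
  refine le_trans (le_of_eq ?_) h4
  apply lintegral_congr_ae
  filter_upwards [hν.cp n] with g hg
  exact enorm_rpow_eq hg.pos α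

end

variable {U : Type*} [NormedAddCommGroup U] [InnerProductSpace ℝ U] [FiniteDimensional ℝ U]
variable {ν : Measure (U →L[ℝ] U)} [IsProbabilityMeasure ν] {C : ℝ}

lemma tri_main (hν : Nice ν C) {Y : Submodule ℝ U} (hY : ∀ᵐ g ∂ν, g ∈ Stab Y) [Nontrivial Y] [Nontrivial Yᗮ]
    {lam l1 : ℝ} (hl : l1 < lam) (H : ∀ n : ℕ, n * lam ≤ ∫ g, Real.log ‖g‖ ∂(cp ν n)) :
    (∀ n : ℕ, n * l1 ≤ ∫ g, Real.log ‖g‖ ∂(cp (ν.map (rW Y)) n)) ∨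
    (∀ n : ℕ, n * l1 ≤ ∫ g, Real.log ‖g‖ ∂(cp (ν.map (rW Yᗮ)) n)) := by
  by_contra hcon
  rw [not_or] at hcon
  have : Nontrivial U := by
    obtain ⟨x, hx⟩ := exists_ne (0 : Y)
    exact ⟨⟨x, 0, fun h => hx (Subtype.ext h)⟩⟩
  set l2 := (2 * l1 + lam) / 3 with hl2
  set l3 := (l1 + 2 * lam) / 3 with hl3
  have h12 : l1 < l2 := by rw [hl2]; linarith
  have h23 : l2 < l3 := by rw [hl2, hl3]; linarith
  have h3 : l3 < lam := by rw [hl3]; linarith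
  have := rW_prob (ν := ν) Y
  have := rW_prob (ν := ν) Yᗮ
  obtain ⟨α1, hα1, hA⟩ := upper_of_not (rW_nice (Or.inl rfl) hν hY) h12 hcon.1
  obtain ⟨α2, hα2, hB⟩ := upper_of_not (rW_nice (Or.inr rfl) hν hY) h12 hcon.2
  set α := min (min α1 α2) 1 with hα
  have hα0 : 0 < α := lt_min (lt_min hα1 hα2) one_pos
  have hαle : α ≤ 1 := min_le_right _ _
  obtain ⟨K1, hK1, hA⟩ := hA α hα0 ((min_le_left _ _).trans (min_le_left _ _))
  obtain ⟨K2, hK2, hB⟩ := hB α hα0 ((min_le_left _ _).trans (min_le_right _ _))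
  have hmα : Measurable (fun x : ℝ≥0∞ => x ^ α) := by fun_prop
  have mrw : ∀ W : Submodule ℝ U, Measurable (fun g : U →L[ℝ] U => ‖rW W g‖ₑ ^ α) := fun W =>
    hmα.comp (measurable_enorm.comp (rW_meas W))
  have mcw : Measurable (fun g : U →L[ℝ] U => ‖cW Y g‖ₑ ^ α) :=
    hmα.comp (measurable_enorm.comp (cW_meas Y))
  have hA' : ∀ n : ℕ, ∫⁻ g, ‖rW Y g‖ₑ ^ α ∂(cp ν n) ≤ ENNReal.ofReal (K1 * Real.exp (n * (α * l2))) := by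
    intro n
    have := hA n
    rw [← rW_cp (Or.inl rfl) ν hY n, lintegral_map (meas_enpow α) (rW_meas Y)] at this
    exact this
  have hB' : ∀ n : ℕ, ∫⁻ g, ‖rW Yᗮ g‖ₑ ^ α ∂(cp ν n) ≤ ENNReal.ofReal (K2 * Real.exp (n * (α * l2))) := by
    intro n
    have := hB n
    rw [← rW_cp (Or.inr rfl) ν hY n, lintegral_map (meas_enpow α) (rW_meas Yᗮ)] at this
    exact this
  set c : ℕ → ℝ≥0∞ := fun n => ∫⁻ g, ‖cW Y g‖ₑ ^ α ∂(cp ν n) with hc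
  have hen : ∀ {x y : U →L[ℝ] U}, ‖x‖ ≤ ‖y‖ → ‖x‖ₑ ≤ ‖y‖ₑ := fun h => by
    rw [← ofReal_norm, ← ofReal_norm]; exact ENNReal.ofReal_le_ofReal h
  have hcfin : ∀ n, c n ≠ ∞ := by
    intro n
    have h1 : c n ≤ ∫⁻ g, (ENNReal.ofReal (C ^ n)) ^ α ∂(cp ν n) := by
      apply lintegral_mono_ae
      filter_upwards [hν.cp n] with g hg
      apply ENNReal.rpow_le_rpow _ hα0.le
      rw [← ofReal_norm]
      exact ENNReal.ofReal_le_ofReal ((cW_norm_le Y g).trans hg.1)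
    refine ne_top_of_le_ne_top ?_ h1
    rw [lintegral_const]
    apply ENNReal.mul_ne_top
    · exact ENNReal.rpow_ne_top_of_nonneg hα0.le ENNReal.ofReal_ne_top
    · exact measure_ne_top _ _
  have hrec : ∀ n, c (n + n) ≤ ENNReal.ofReal ((K1 + K2) * Real.exp (n * (α * l2))) * c n := by
    intro n
    have e1 : c (n + n) ≤ ∫⁻ h, ∫⁻ g, (‖rW Y g‖ₑ ^ α * ‖cW Y h‖ₑ ^ α + ‖cW Y g‖ₑ ^ α * ‖rW Yᗮ h‖ₑ ^ α) ∂(cp ν n) ∂(cp ν n) := by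
      simp only [hc]
      rw [cp_add, lintegral_cv _ _ mcw]
      refine lintegral_mono fun h => lintegral_mono fun g => ?_
      show ‖cW Y (g * h)‖ₑ ^ α ≤ ‖rW Y g‖ₑ ^ α * ‖cW Y h‖ₑ ^ α + ‖cW Y g‖ₑ ^ α * ‖rW Yᗮ h‖ₑ ^ α
      rw [← ENNReal.mul_rpow_of_nonneg _ _ hα0.le, ← ENNReal.mul_rpow_of_nonneg _ _ hα0.le]
      refine le_trans ?_ (ENNReal.rpow_add_le_add_rpow _ _ hα0.le hαle)
      apply ENNReal.rpow_le_rpow _ hα0.le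
      simp only [← ofReal_norm]
      rw [← ENNReal.ofReal_mul (norm_nonneg _), ← ENNReal.ofReal_mul (norm_nonneg _), ← ENNReal.ofReal_add (by positivity) (by positivity)]
      exact ENNReal.ofReal_le_ofReal (cW_mul Y g h)
    refine e1.trans ?_
    have e2 : ∀ h, ∫⁻ g, (‖rW Y g‖ₑ ^ α * ‖cW Y h‖ₑ ^ α + ‖cW Y g‖ₑ ^ α * ‖rW Yᗮ h‖ₑ ^ α) ∂(cp ν n)
        = (∫⁻ g, ‖rW Y g‖ₑ ^ α ∂(cp ν n)) * ‖cW Y h‖ₑ ^ α + c n * ‖rW Yᗮ h‖ₑ ^ α := by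
      intro h
      rw [lintegral_add_left ((mrw Y).mul_const _), lintegral_mul_const _ (mrw Y), lintegral_mul_const _ mcw]
    simp only [e2]
    rw [lintegral_add_left (mcw.const_mul _), lintegral_const_mul _ mcw, lintegral_const_mul _ (mrw _)]
    rw [add_mul, ENNReal.ofReal_add (by positivity) (by positivity), add_mul, mul_comm (c n)]
    exact add_le_add (mul_le_mul' (hA' n) le_rfl) (mul_le_mul' (hB' n) le_rfl)
  obtain ⟨n0, hn0, D, hD, hdb⟩ := doubling hcfin (K := K1 + K2) (s2 := α * l2) (s3 := α * l3) (by positivity)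
    (by gcongr) hrec
  set E := K1 + D + K2 with hE
  have hbd : ∀ j : ℕ, ((2 ^ j * n0 : ℕ) : ℝ) * (α * (lam - l3)) ≤ E := by
    intro j
    set n := 2 ^ j * n0 with hn
    have h1 : ∫⁻ g, ENNReal.ofReal (Real.exp (α * Real.log ‖g‖)) ∂(cp ν n) ≤ ENNReal.ofReal (E * Real.exp (n * (α * l3))) := by
      calc _ ≤ ∫⁻ g, (‖rW Y g‖ₑ ^ α + ‖cW Y g‖ₑ ^ α + ‖rW Yᗮ g‖ₑ ^ α) ∂(cp ν n) := by
            apply lintegral_mono_ae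
            filter_upwards [hν.cp n, stab_cp ν hY n] with g hg hs
            rw [← enorm_rpow_eq hg.pos]
            refine le_trans ?_ (add_le_add (ENNReal.rpow_add_le_add_rpow _ _ hα0.le hαle) le_rfl)
            refine le_trans ?_ (ENNReal.rpow_add_le_add_rpow _ _ hα0.le hαle)
            apply ENNReal.rpow_le_rpow _ hα0.le
            simp only [← ofReal_norm]
            rw [← ENNReal.ofReal_add (by positivity) (by positivity), ← ENNReal.ofReal_add (by positivity) (by positivity)]
            exact ENNReal.ofReal_le_ofReal (norm_le_tri Y hs)
        _ ≤ ENNReal.ofReal (K1 * Real.exp (n * (α * l3))) + ENNReal.ofReal (D * Real.exp (n * (α * l3))) + ENNReal.ofReal (K2 * Real.exp (n * (α * l3))) := by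
            rw [lintegral_add_right _ (mrw Yᗮ), lintegral_add_left (mrw Y)]
            refine add_le_add (add_le_add ((hA' n).trans ?_) (hdb j)) ((hB' n).trans ?_)
            · apply ENNReal.ofReal_le_ofReal; gcongr
            · apply ENNReal.ofReal_le_ofReal; gcongr
        _ = _ := by
            rw [← ENNReal.ofReal_add (by positivity) (by positivity), ← ENNReal.ofReal_add (by positivity) (by positivity)]
            congr 1; rw [hE]; ring
    have hintg := hν.cocN.integrable n ()
    have hm : Measurable (fun g : U →L[ℝ] U => Real.exp (α * Real.log ‖g‖)) :=
      Real.measurable_exp.comp ((Real.measurable_log.comp measurable_norm).const_mul α)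
    have hint2 : Integrable (fun g : U →L[ℝ] U => Real.exp (α * Real.log ‖g‖)) (cp ν n) := by
      refine ⟨hm.aestronglyMeasurable, ?_⟩
      rw [hasFiniteIntegral_iff_ofReal (Eventually.of_forall fun g => (Real.exp_pos _).le)]
      exact h1.trans_lt ENNReal.ofReal_lt_top
    have h2 : ∫ g, Real.exp (α * Real.log ‖g‖) ∂(cp ν n) ≤ E * Real.exp (n * (α * l3)) := by
      rw [integral_eq_lintegral_of_nonneg_ae (Eventually.of_forall fun g => (Real.exp_pos _).le) hm.aestronglyMeasurable]
      refine ENNReal.toReal_le_of_le_ofReal (by positivity) h1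
    have h3 : ∫ g, α * Real.log ‖g‖ ∂(cp ν n) ≤ ∫ g, (n * (α * l3) + Real.exp (-(n * (α * l3))) * Real.exp (α * Real.log ‖g‖)) ∂(cp ν n) := by
      apply integral_mono (hintg.const_mul α) ((integrable_const _).add (hint2.const_mul _))
      intro g
      show α * Real.log ‖g‖ ≤ n * (α * l3) + Real.exp (-(n * (α * l3))) * Real.exp (α * Real.log ‖g‖)
      rw [← Real.exp_add]
      have := Real.add_one_le_exp (-(n * (α * l3)) + α * Real.log ‖g‖)
      linarith
    rw [integral_add (integrable_const _) (hint2.const_mul _), integral_const, integral_const_mul, integral_const_mul] at h3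
    simp only [probReal_univ, one_smul] at h3
    have h4 : Real.exp (-(n * (α * l3))) * ∫ g, Real.exp (α * Real.log ‖g‖) ∂(cp ν n) ≤ E := by
      calc _ ≤ Real.exp (-(n * (α * l3))) * (E * Real.exp (n * (α * l3))) := by gcongr
        _ = E * (Real.exp (-(n * (α * l3))) * Real.exp (n * (α * l3))) := by ring
        _ = E := by rw [← Real.exp_add]; simp
    have h5 := mul_le_mul_of_nonneg_left (H n) hα0.le
    nlinarith
  have hpos : 0 < α * (lam - l3) := mul_pos hα0 (by linarith)
  obtain ⟨N, hN⟩ := exists_nat_gt (E / (α * (lam - l3)))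
  rw [div_lt_iff₀ hpos] at hN
  have h1 := hbd N
  have h2 : (N : ℝ) ≤ ((2 ^ N * n0 : ℕ) : ℝ) := by
    have : N ≤ 2 ^ N * n0 := by
      have := Nat.lt_two_pow_self (n := N)
      nlinarith
    exact_mod_cast this
  have h3 : (N : ℝ) * (α * (lam - l3)) ≤ ((2 ^ N * n0 : ℕ) : ℝ) * (α * (lam - l3)) := by gcongr
  linarith

end Tri2
end LYA

namespace LYA
open scoped ENNReal NNReal Topology
set_option linter.unusedSectionVars false
set_option linter.unusedSimpArgs false
set_option linter.unusedVariables false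
set_option linter.unusedTactic false

section Ind
universe u

/-- robust lower moment bound -/
def Low {U : Type*} [NormedAddCommGroup U] [InnerProductSpace ℝ U] [FiniteDimensional ℝ U]
    (ν : Measure (U →L[ℝ] U)) (l : ℝ) : Prop :=
  ∃ α₀ : ℝ, 0 < α₀ ∧ ∀ α, 0 < α → α ≤ α₀ → ∃ θ : ℝ, 0 < θ ∧ ∀ τ : Measure (U →L[ℝ] U), IsFiniteMeasure τ →
      τ ≪ ν → τ.real Set.univ ≤ θ → ∃ C : ℝ, 0 ≤ C ∧ ∀ n : ℕ,
        ∫⁻ g, ENNReal.ofReal (Real.exp (-(α * Real.log ‖g‖))) ∂(cp (ν + τ) n) ≤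
          ENNReal.ofReal (C * Real.exp (-(n * (α * l))))

lemma ac_add_self {M : Type*} [MeasurableSpace M] {ν τ : Measure M} (h : τ ≪ ν) : ν + τ ≪ ν := by
  intro s hs
  simp [hs, h hs]

lemma low_irr {U : Type*} [NormedAddCommGroup U] [InnerProductSpace ℝ U] [FiniteDimensional ℝ U] [Nontrivial U]
    {ν : Measure (U →L[ℝ] U)} [IsProbabilityMeasure ν] {C : ℝ} (hν : Nice ν C) (hirr : Irr ν) {lam lam' : ℝ} (hlt : lam' < lam)
    (H : ∀ n : ℕ, n * lam ≤ ∫ g, Real.log ‖g‖ ∂(cp ν n)) : Low ν lam' := by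
  obtain ⟨m, hm, h⟩ := irr_main hν hirr (lam' := (lam + lam') / 2) (by linarith) H
  obtain ⟨α₀, hα₀, h1⟩ := hν.cocZ.main hm (b' := -lam') (by linarith) h
  obtain ⟨v, hv⟩ := exists_ne (0 : U)
  refine ⟨α₀, hα₀, fun α hα hαl => ?_⟩
  obtain ⟨θ, hθ, h2⟩ := h1 α hα hαl
  refine ⟨θ, hθ, fun τ hτ hac hτθ => ?_⟩
  obtain ⟨K, hK, h3⟩ := h2 τ hτ hac hτθ
  refine ⟨K, hK, fun n => ?_⟩
  have h4 := h3 n ⟨v, hv⟩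
  rw [show -(↑n * (α * lam')) = ↑n * (α * -lam') by ring]
  refine le_trans (lintegral_mono_ae ?_) h4
  filter_upwards [(cp_ac (ac_add_self hac) n).ae_le (hν.cp n)] with g hg
  apply ENNReal.ofReal_le_ofReal
  apply Real.exp_le_exp.2
  rw [← mul_neg]
  apply mul_le_mul_of_nonneg_left _ hα.le
  unfold psiz psiV
  apply neg_le_neg
  have h5 : 0 < ‖v‖ := norm_pos_iff.2 hv
  have h6 : 0 < ‖g v‖ := norm_pos_iff.2 (hg.ne hv)
  apply Real.log_le_log (by positivity)
  show ‖g v‖ / ‖v‖ ≤ ‖g‖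
  rw [div_le_iff₀ h5]
  exact g.le_opNorm v

lemma meas_explog {V : Type*} [NormedAddCommGroup V] [InnerProductSpace ℝ V] [FiniteDimensional ℝ V] (α : ℝ) :
    Measurable (fun g : V →L[ℝ] V => ENNReal.ofReal (Real.exp (-(α * Real.log ‖g‖)))) :=
  (Real.measurable_exp.comp ((Real.measurable_log.comp measurable_norm).const_mul α).neg).ennreal_ofReal

lemma low_of_rW {U : Type*} [NormedAddCommGroup U] [InnerProductSpace ℝ U] [FiniteDimensional ℝ U]
    {ν : Measure (U →L[ℝ] U)} [IsProbabilityMeasure ν] {C : ℝ} (hν : Nice ν C) {Y W : Submodule ℝ U}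
    (hW : W = Y ∨ W = Yᗮ) [Nontrivial W] (hY : ∀ᵐ g ∂ν, g ∈ Stab Y) {l : ℝ} (h : Low (ν.map (rW W)) l) : Low ν l := by
  obtain ⟨α₀, hα₀, h1⟩ := h
  refine ⟨α₀, hα₀, fun α hα hαl => ?_⟩
  obtain ⟨θ, hθ, h2⟩ := h1 α hα hαl
  refine ⟨θ, hθ, fun τ hτ hac hτθ => ?_⟩
  obtain ⟨K, hK, h3⟩ := h2 (τ.map (rW W)) inferInstance (hac.map (rW_meas W)) (by
    rw [Measure.real, Measure.map_apply (rW_meas W) MeasurableSet.univ]; exact hτθ)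
  refine ⟨K, hK, fun n => ?_⟩
  have h4 := h3 n
  have hac' := ac_add_self hac
  rw [← Measure.map_add _ _ (rW_meas W), ← rW_cp hW (ν + τ) (hac'.ae_le hY) n, lintegral_map (meas_explog α) (rW_meas W)] at h4
  refine le_trans (lintegral_mono_ae ?_) h4
  filter_upwards [(cp_ac hac' n).ae_le (hν.cp n), (cp_ac hac' n).ae_le (stab_cp ν hY n)] with g hg hs
  apply ENNReal.ofReal_le_ofReal
  apply Real.exp_le_exp.2
  apply neg_le_neg
  apply mul_le_mul_of_nonneg_left _ hα.le
  have hp := (rW_good hW (by have := hν.one_le; positivity) hs hg).pos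
  exact Real.log_le_log hp (rW_norm_le W g)

theorem low_main (N : ℕ) : ∀ (U : Type u) [NormedAddCommGroup U] [InnerProductSpace ℝ U] [FiniteDimensional ℝ U] [Nontrivial U]
    (ν : Measure (U →L[ℝ] U)) [IsProbabilityMeasure ν] (C lam lam' : ℝ), Module.finrank ℝ U = N → Nice ν C → lam' < lam →
    (∀ n : ℕ, n * lam ≤ ∫ g, Real.log ‖g‖ ∂(cp ν n)) → Low ν lam' := by
  induction N using Nat.strong_induction_on with
  | _ N ih =>
  intro U _ _ _ _ ν _ C lam lam' hN hν hlt H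
  by_cases hirr : Irr ν
  · exact low_irr hν hirr hlt H
  unfold Irr at hirr
  push Not at hirr
  obtain ⟨Y, hY, hb, ht⟩ := hirr
  have hY' : ∀ᵐ g ∂ν, g ∈ Stab Y := hY
  have hb' : Yᗮ ≠ ⊥ := fun h => ht (Submodule.orthogonal_eq_bot_iff.1 h)
  have ht' : Yᗮ ≠ ⊤ := fun h => hb ((Submodule.orthogonal_eq_top_iff Y).1 h)
  have i1 : Nontrivial Y := Submodule.nontrivial_iff_ne_bot.2 hb
  have i2 : Nontrivial Yᗮ := Submodule.nontrivial_iff_ne_bot.2 hb'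
  have p1 := rW_prob (ν := ν) Y
  have p2 := rW_prob (ν := ν) Yᗮ
  rcases tri_main hν hY' (l1 := (lam + lam') / 2) (by linarith) H with h | h
  · exact low_of_rW hν (Or.inl rfl) hY' (ih _ (hN ▸ Submodule.finrank_lt ht) Y _ C _ lam' rfl
      (rW_nice (Or.inl rfl) hν hY') (by linarith) h)
  · exact low_of_rW hν (Or.inr rfl) hY' (ih _ (hN ▸ Submodule.finrank_lt ht') Yᗮ _ C _ lam' rfl
      (rW_nice (Or.inr rfl) hν hY') (by linarith) h)

end Ind
end LYA

namespace LYA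
open scoped ENNReal NNReal Topology
set_option linter.unusedSectionVars false
set_option linter.unusedSimpArgs false
set_option linter.unusedVariables false
set_option linter.unusedTactic false

section Area
variable {U : Type*} [NormedAddCommGroup U] [InnerProductSpace ℝ U] [FiniteDimensional ℝ U]

/-- squared area -/
def arsq (x y : U) : ℝ := ‖x‖ ^ 2 * ‖y‖ ^ 2 - (inner ℝ x y : ℝ) ^ 2

lemma arsq_nonneg (x y : U) : 0 ≤ arsq x y := by
  unfold arsq
  have := abs_real_inner_le_norm x y
  have h2 : (inner ℝ x y : ℝ) ^ 2 ≤ (‖x‖ * ‖y‖) ^ 2 := by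
    rw [← sq_abs]
    gcongr
  nlinarith

lemma arsq_smul (s t : ℝ) (x y : U) : arsq (s • x) (t • y) = s ^ 2 * t ^ 2 * arsq x y := by
  unfold arsq
  rw [norm_smul, norm_smul, real_inner_smul_left, real_inner_smul_right, mul_pow, mul_pow, Real.norm_eq_abs, Real.norm_eq_abs,
    sq_abs, sq_abs]
  ring

lemma arsq_shear (x y : U) (c : ℝ) : arsq x (y - c • x) = arsq x y := by
  unfold arsq
  rw [norm_sub_sq_real, inner_sub_right, real_inner_smul_right, real_inner_smul_right, norm_smul, mul_pow, Real.norm_eq_abs,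
    sq_abs, real_inner_self_eq_norm_sq, real_inner_comm y x]
  ring

/-- `s₁ s₂` -/
def A2 (g : U →L[ℝ] U) : ℝ :=
  sSup { x | ∃ p q : U, ‖p‖ = 1 ∧ ‖q‖ = 1 ∧ (inner ℝ p q : ℝ) = 0 ∧
    x = Real.sqrt (‖g p‖ ^ 2 * ‖g q‖ ^ 2 - (inner ℝ (g p) (g q) : ℝ) ^ 2) }

lemma sqrt_ar_le (g : U →L[ℝ] U) {p q : U} (hp : ‖p‖ = 1) (hq : ‖q‖ = 1) : Real.sqrt (arsq (g p) (g q)) ≤ ‖g‖ ^ 2 := by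
  apply Real.sqrt_le_iff.2
  refine ⟨by positivity, ?_⟩
  unfold arsq
  have h1 : ‖g p‖ ≤ ‖g‖ := by simpa [hp] using g.le_opNorm p
  have h2 : ‖g q‖ ≤ ‖g‖ := by simpa [hq] using g.le_opNorm q
  have : ‖g p‖ ^ 2 * ‖g q‖ ^ 2 ≤ ‖g‖ ^ 2 * ‖g‖ ^ 2 := by gcongr
  nlinarith [sq_nonneg (inner ℝ (g p) (g q) : ℝ)]

lemma A2_bdd (g : U →L[ℝ] U) : BddAbove { x | ∃ p q : U, ‖p‖ = 1 ∧ ‖q‖ = 1 ∧ (inner ℝ p q : ℝ) = 0 ∧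
    x = Real.sqrt (‖g p‖ ^ 2 * ‖g q‖ ^ 2 - (inner ℝ (g p) (g q) : ℝ) ^ 2) } := by
  refine ⟨‖g‖ ^ 2, ?_⟩
  rintro x ⟨p, q, hp, hq, -, rfl⟩
  exact sqrt_ar_le g hp hq

lemma A2_nonneg (g : U →L[ℝ] U) : 0 ≤ A2 g := by
  apply Real.sSup_nonneg
  rintro x ⟨p, q, hp, hq, -, rfl⟩
  positivity

lemma A2_le (g : U →L[ℝ] U) : A2 g ≤ ‖g‖ ^ 2 := by
  apply Real.sSup_le _ (by positivity)
  rintro x ⟨p, q, hp, hq, -, rfl⟩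
  exact sqrt_ar_le g hp hq

lemma le_A2 (g : U →L[ℝ] U) {p q : U} (hp : ‖p‖ = 1) (hq : ‖q‖ = 1) (hpq : (inner ℝ p q : ℝ) = 0) :
    Real.sqrt (arsq (g p) (g q)) ≤ A2 g := le_csSup (A2_bdd g) ⟨p, q, hp, hq, hpq, rfl⟩

lemma ar_le (g : U →L[ℝ] U) (x y : U) : arsq (g x) (g y) ≤ A2 g ^ 2 * arsq x y := by
  by_cases hx : x = 0
  · simp [hx, arsq]
  have hx0 : 0 < ‖x‖ := norm_pos_iff.2 hx
  set c : ℝ := inner ℝ x y / ‖x‖ ^ 2 with hc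
  set z := y - c • x with hz
  have hxz : (inner ℝ x z : ℝ) = 0 := by
    rw [hz, inner_sub_right, real_inner_smul_right, real_inner_self_eq_norm_sq, hc]
    field_simp
    ring
  have e1 : arsq x y = arsq x z := (arsq_shear x y c).symm
  have e2 : arsq (g x) (g y) = arsq (g x) (g z) := by
    rw [hz, map_sub, map_smul, arsq_shear]
  rw [e1, e2]
  by_cases hz0 : z = 0
  · simp [hz0, arsq]
  have hz1 : 0 < ‖z‖ := norm_pos_iff.2 hz0
  set p := ‖x‖⁻¹ • x with hp
  set q := ‖z‖⁻¹ • z with hq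
  have hp1 : ‖p‖ = 1 := by rw [hp, norm_smul, norm_inv, norm_norm, inv_mul_cancel₀ hx0.ne']
  have hq1 : ‖q‖ = 1 := by rw [hq, norm_smul, norm_inv, norm_norm, inv_mul_cancel₀ hz1.ne']
  have hpq : (inner ℝ p q : ℝ) = 0 := by rw [hp, hq, real_inner_smul_left, real_inner_smul_right, hxz]; simp
  have hx' : x = ‖x‖ • p := by rw [hp, smul_smul, mul_inv_cancel₀ hx0.ne', one_smul]
  have hz' : z = ‖z‖ • q := by rw [hq, smul_smul, mul_inv_cancel₀ hz1.ne', one_smul]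
  have e3 : arsq (g x) (g z) = ‖x‖ ^ 2 * ‖z‖ ^ 2 * arsq (g p) (g q) := by
    have g1 : g x = ‖x‖ • g p := by rw [← map_smul, ← hx']
    have g2 : g z = ‖z‖ • g q := by rw [← map_smul, ← hz']
    rw [g1, g2, arsq_smul]
  have e4 : arsq x z = ‖x‖ ^ 2 * ‖z‖ ^ 2 := by unfold arsq; rw [hxz]; ring
  have h5 := le_A2 g hp1 hq1 hpq
  have h6 : arsq (g p) (g q) ≤ A2 g ^ 2 := by
    rw [← Real.sq_sqrt (arsq_nonneg (g p) (g q))]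
    gcongr
  rw [e3, e4]
  calc _ ≤ ‖x‖ ^ 2 * ‖z‖ ^ 2 * A2 g ^ 2 := by gcongr
    _ = _ := by ring

lemma A2_mul (g h : U →L[ℝ] U) : A2 (g * h) ≤ A2 g * A2 h := by
  apply Real.sSup_le _ (mul_nonneg (A2_nonneg g) (A2_nonneg h))
  rintro x ⟨p, q, hp, hq, hpq, rfl⟩
  apply Real.sqrt_le_iff.2
  refine ⟨mul_nonneg (A2_nonneg g) (A2_nonneg h), ?_⟩
  have h1 := ar_le g (h p) (h q)
  have h2 := ar_le h p q
  have h3 : arsq p q = 1 := by unfold arsq; rw [hp, hq, hpq]; norm_num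
  rw [h3, mul_one] at h2
  calc _ = arsq (g (h p)) (g (h q)) := rfl
    _ ≤ A2 g ^ 2 * A2 h ^ 2 := h1.trans (by gcongr)
    _ = _ := by ring

lemma A2_one {p q : U} (hp : ‖p‖ = 1) (hq : ‖q‖ = 1) (hpq : (inner ℝ p q : ℝ) = 0) : 1 ≤ A2 (1 : U →L[ℝ] U) := by
  have h := le_A2 (1 : U →L[ℝ] U) hp hq hpq
  have h3 : arsq ((1 : U →L[ℝ] U) p) ((1 : U →L[ℝ] U) q) = 1 := by
    show arsq p q = 1
    unfold arsq; rw [hp, hq, hpq]; norm_num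
  rw [h3] at h
  simpa using h

lemma A2_meas : Measurable (A2 : (U →L[ℝ] U) → ℝ) := by
  let I := {w : U × U // ‖w.1‖ = 1 ∧ ‖w.2‖ = 1 ∧ (inner ℝ w.1 w.2 : ℝ) = 0}
  have e : (A2 : (U →L[ℝ] U) → ℝ) = fun g => ⨆ w : I, Real.sqrt (arsq (g w.1.1) (g w.1.2)) := by
    funext g
    unfold A2 iSup
    congr 1
    ext x
    constructor
    · rintro ⟨p, q, hp, hq, hpq, rfl⟩
      exact ⟨⟨(p, q), hp, hq, hpq⟩, rfl⟩
    · rintro ⟨⟨⟨p, q⟩, hp, hq, hpq⟩, rfl⟩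
      exact ⟨p, q, hp, hq, hpq, rfl⟩
  rw [e]
  apply LowerSemicontinuous.measurable
  apply lowerSemicontinuous_ciSup
  · intro g
    refine ⟨‖g‖ ^ 2, ?_⟩
    rintro x ⟨⟨⟨p, q⟩, hp, hq, hpq⟩, rfl⟩
    exact sqrt_ar_le g hp hq
  · intro w
    apply Continuous.lowerSemicontinuous
    have h1 : Continuous fun g : U →L[ℝ] U => g w.1.1 := (ContinuousLinearMap.apply ℝ U w.1.1).continuous
    have h2 : Continuous fun g : U →L[ℝ] U => g w.1.2 := (ContinuousLinearMap.apply ℝ U w.1.2).continuous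
    unfold arsq
    fun_prop

end Area

section GLs

lemma N2_eq (g : GLd d) : N2 g = A2 (glCLM g) := rfl

instance instSCGL : SecondCountableTopology (GLd d) := by
  have : SecondCountableTopology (Matrix (Fin d) (Fin d) ℝ) :=
    inferInstanceAs (SecondCountableTopology (Fin d → Fin d → ℝ))
  have : SecondCountableTopology (Matrix (Fin d) (Fin d) ℝ)ᵐᵒᵖ :=
    (MulOpposite.opHomeomorph (M := Matrix (Fin d) (Fin d) ℝ)).symm.isEmbedding.secondCountableTopology
  exact (Units.isEmbedding_embedProduct (M := Matrix (Fin d) (Fin d) ℝ)).secondCountableTopology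

instance instMMGL : MeasurableMul₂ (GLd d) := ContinuousMul.measurableMul₂

lemma glCLM_cont : Continuous (glCLM (d := d)) := by
  unfold glCLM
  have : Continuous (Matrix.toEuclideanCLM (n := Fin d) (𝕜 := ℝ)) :=
    LinearMap.continuous_of_finiteDimensional ((Matrix.toEuclideanCLM (n := Fin d) (𝕜 := ℝ)).toAlgEquiv.toLinearMap)
  exact this.comp Units.continuous_val

lemma glCLM_meas : Measurable (glCLM (d := d)) := glCLM_cont.measurable

lemma glCLM_mul (g h : GLd d) : glCLM (g * h) = glCLM g * glCLM h := by
  unfold glCLM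
  rw [← map_mul]; rfl

lemma glCLM_one : glCLM (1 : GLd d) = 1 := by
  unfold glCLM
  exact map_one _

lemma cp_glCLM (κ : Measure (GLd d)) [IsFiniteMeasure κ] (n : ℕ) : (cp κ n).map glCLM = cp (κ.map glCLM) n :=
  map_cp κ glCLM glCLM_meas Set.univ MeasurableSet.univ (Set.mem_univ _) (fun _ _ _ _ => Set.mem_univ _) glCLM_one
    (fun a _ b _ => glCLM_mul a b) (by simp) n

lemma mconvN_eq (κ : Measure (GLd d)) [IsFiniteMeasure κ] (n : ℕ) : mconvN κ n = cp κ n := by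
  induction n with
  | zero => rfl
  | succ n ih =>
    rw [mconvN]
    split_ifs with h
    · subst h; rw [cp_one]
    · rw [ih]; rfl

lemma gl_nontriv (hd : 2 ≤ d) : Nontrivial (Ed d) := by
  have : Nonempty (Fin d) := ⟨⟨0, by omega⟩⟩
  infer_instance

lemma N2_one (hd : 2 ≤ d) : 1 ≤ N2 (1 : GLd d) := by
  rw [N2_eq, glCLM_one]
  apply A2_one (p := EuclideanSpace.single (⟨0, by omega⟩ : Fin d) 1) (q := EuclideanSpace.single (⟨1, by omega⟩ : Fin d) 1)
  · rw [EuclideanSpace.norm_single]; norm_num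
  · rw [EuclideanSpace.norm_single]; norm_num
  · rw [EuclideanSpace.inner_single_left]; simp [Fin.ext_iff]

lemma N2_mul (g h : GLd d) : N2 (g * h) ≤ N2 g * N2 h := by
  rw [N2_eq, N2_eq, N2_eq, glCLM_mul]; exact A2_mul _ _

lemma N2_inv (hd : 2 ≤ d) (g : GLd d) : 1 ≤ N2 g⁻¹ * N2 g := by
  have := N2_mul g⁻¹ g
  rw [inv_mul_cancel] at this
  exact (N2_one hd).trans this

lemma N2_pos (hd : 2 ≤ d) (g : GLd d) : 0 < N2 g := by
  have h1 := N2_inv hd g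
  have h2 : 0 ≤ N2 g := A2_nonneg _
  rcases h2.lt_or_eq with h | h
  · exact h
  · rw [← h] at h1; norm_num at h1

lemma N2_le (g : GLd d) : N2 g ≤ gnorm g ^ 2 := A2_le _

lemma N2_meas : Measurable (N2 (d := d)) := A2_meas.comp glCLM_meas
lemma gnorm_meas : Measurable (gnorm (d := d)) := measurable_norm.comp glCLM_meas

lemma gnorm_pos (hd : 2 ≤ d) (g : GLd d) : 0 < gnorm g := by
  have h1 := N2_pos hd g
  have h2 := N2_le g
  have h3 : 0 ≤ gnorm g := norm_nonneg _
  rcases h3.lt_or_eq with h | h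
  · exact h
  · rw [← h] at h2; norm_num at h2; linarith

lemma gnorm_mul (g h : GLd d) : gnorm (g * h) ≤ gnorm g * gnorm h := by
  unfold gnorm; rw [glCLM_mul]; exact norm_mul_le _ _

lemma good_inv {C : ℝ} (hC : 0 ≤ C) {g : GLd d} (hg : Good C (glCLM g)) : gnorm g⁻¹ ≤ C := by
  refine ContinuousLinearMap.opNorm_le_bound _ hC fun v => ?_
  have h := hg.2 (glCLM g⁻¹ v)
  have e := glCLM_leftInv g⁻¹ v
  rw [inv_inv] at e
  rwa [e] at h

lemma N2_log (hd : 2 ≤ d) {C : ℝ} (hC : 1 ≤ C) {g : GLd d} (hg : Good C (glCLM g)) : |Real.log (N2 g)| ≤ 2 * Real.log C := by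
  have : Real.log (C ^ 2) = 2 * Real.log C := by rw [Real.log_pow]; norm_num
  rw [← this]
  have hCp : 0 ≤ C := by linarith
  apply abs_log_le (N2_pos hd g)
  · exact (N2_le g).trans (by have : gnorm g ≤ C := hg.1; have h0 : 0 ≤ gnorm g := norm_nonneg _; gcongr)
  · have h1 := N2_inv hd g
    have h2 : N2 g⁻¹ ≤ C ^ 2 := (N2_le _).trans (by
      have := good_inv hCp hg; have h0 : 0 ≤ gnorm g⁻¹ := norm_nonneg _; gcongr)
    exact h1.trans (by have := (N2_pos hd g).le; gcongr)

/-- bounded support, GL version -/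
lemma gl_good_cp {C : ℝ} {κ : Measure (GLd d)} [IsProbabilityMeasure κ] (hC : 1 ≤ C) (h : ∀ᵐ g ∂κ, Good C (glCLM g)) (n : ℕ) :
    ∀ᵐ g ∂(cp κ n), Good (C ^ n) (glCLM g) := by
  refine ae_cp κ (P := fun n => {g | Good (C ^ n) (glCLM g)}) (A := {g | Good C (glCLM g)})
    (fun n => glCLM_meas (meas_good _)) ?_ ?_ h n
  · simpa [glCLM_one] using Good.one
  · intro n a ha b hb
    have := Good.mul (by positivity) (by positivity) ha hb
    rw [← glCLM_mul] at this
    simpa [pow_succ] using this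

lemma gl_nice {C : ℝ} {κ : Measure (GLd d)} [IsProbabilityMeasure κ] (hC : 1 ≤ C) (h : ∀ᵐ g ∂κ, Good C (glCLM g)) :
    Nice (κ.map glCLM) C :=
  ⟨hC, by rwa [ae_map_iff glCLM_meas.aemeasurable (meas_good C)]⟩

lemma coc_gl {C B : ℝ} {κ : Measure (GLd d)} [IsProbabilityMeasure κ] (hC : 1 ≤ C) (h : ∀ᵐ g ∂κ, Good C (glCLM g))
    (F : GLd d → ℝ) (hF : Measurable F) (hp : ∀ g, 0 < F g) (hm : ∀ g h, F (g * h) ≤ F g * F h) (hB : 0 ≤ B)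
    (hb : ∀ (D : ℝ), 1 ≤ D → ∀ g, Good D (glCLM g) → |Real.log (F g)| ≤ B * Real.log D) :
    Coc κ (fun _ _ => ()) (fun g (_ : Unit) => Real.log (F g)) (B * Real.log C) where
  meas := fun _ => Real.measurable_log.comp hF
  sub := ⟨Set.univ, MeasurableSet.univ, by simp, Set.mem_univ _, fun _ _ _ _ => Set.mem_univ _, fun g _ h _ _ => by
    rw [← Real.log_mul (hp g).ne' (hp h).ne']
    exact Real.log_le_log (hp _) (hm g h)⟩
  bdd n := by
    filter_upwards [gl_good_cp hC h n] with g hg v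
    have := hb _ (one_le_pow₀ hC) g hg
    rw [Real.log_pow] at this
    linarith
  nonneg := mul_nonneg hB (Real.log_nonneg hC)

lemma coc_fekete {M : Type*} [Monoid M] [MeasurableSpace M] [MeasurableMul₂ M] {ν : Measure M} [IsProbabilityMeasure ν]
    {ψ : M → Unit → ℝ} {B : ℝ} (hc : Coc ν (fun _ _ => ()) ψ B) :
    ∃ L : ℝ, Tendsto (fun n : ℕ => (n : ℝ)⁻¹ * ∫ g, ψ g () ∂(cp ν n)) atTop (𝓝 L) ∧
      ∀ n : ℕ, n * L ≤ ∫ g, ψ g () ∂(cp ν n) := by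
  set u : ℕ → ℝ := fun n => ∫ g, ψ g () ∂(cp ν n) with hu
  have hintg := fun n => hc.integrable n ()
  have hsub : Subadditive u := by
    intro m n
    obtain ⟨A, hA, hAν, hA1, hAm, hAs⟩ := hc.sub
    have hAn : ∀ n, ∀ᵐ g ∂(cp ν n), g ∈ A := fun n =>
      ae_cp ν (P := fun _ => A) (A := A) (fun _ => hA) hA1 (fun _ => hAm) hAν n
    have i1 : Integrable (fun p : M × M => ψ p.1 () + ψ p.2 ()) ((cp ν m).prod (cp ν n)) :=
      ((hintg m).comp_fst _).add ((hintg n).comp_snd _)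
    have e : u (m + n) = ∫ p, ψ (p.1 * p.2) () ∂((cp ν m).prod (cp ν n)) := by
      have h := hintg (m + n)
      simp only [hu]
      rw [cp_add, cv] at h ⊢
      rw [integral_map (by fun_prop) h.1]
    have h1 : ∀ᵐ p ∂((cp ν m).prod (cp ν n)), p.1 ∈ A := Measure.quasiMeasurePreserving_fst.ae (hAn m)
    have h2 : ∀ᵐ p ∂((cp ν m).prod (cp ν n)), p.2 ∈ A := Measure.quasiMeasurePreserving_snd.ae (hAn n)
    calc u (m + n) ≤ ∫ p : M × M, (ψ p.1 () + ψ p.2 ()) ∂((cp ν m).prod (cp ν n)) := by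
          rw [e]
          apply integral_mono_ae (integrable_cpcp (hintg (m + n))) i1
          filter_upwards [h1, h2] with p hp1 hp2
          exact hAs _ hp1 _ hp2 ()
      _ = u m + u n := by
          rw [integral_add ((hintg m).comp_fst _) ((hintg n).comp_snd _)]
          rw [integral_fun_fst (fun g => ψ g ()), integral_fun_snd (fun g => ψ g ())]
          simp [hu]
  have hlow : ∀ n : ℕ, -B * n ≤ u n := by
    intro n
    have : ‖u n‖ ≤ n * B := by
      refine (norm_integral_le_of_norm_le_const (C := n * B) ((hc.bdd n).mono fun g hg => hg ())).trans (by simp)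
    have := (abs_le.1 this).1
    linarith
  have hbdd : BddBelow (Set.range fun n => u n / n) := by
    refine ⟨min 0 (-B), ?_⟩
    rintro x ⟨n, rfl⟩
    rcases Nat.eq_zero_or_pos n with rfl | hn
    · simp
    · have hn' : (0 : ℝ) < n := by exact_mod_cast hn
      refine (min_le_right _ _).trans ?_
      show -B ≤ u n / n
      rw [le_div_iff₀ hn']; exact hlow n
  refine ⟨hsub.lim, ?_, ?_⟩
  · refine (hsub.tendsto_lim hbdd).congr fun n => ?_
    rw [div_eq_inv_mul]
  · intro n
    rcases Nat.eq_zero_or_pos n with rfl | hn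
    · have := hlow 0; simp at this ⊢; exact this
    · have hn' : (0 : ℝ) < n := by exact_mod_cast hn
      have := hsub.lim_le_div hbdd hn.ne'
      rw [le_div_iff₀ hn'] at this
      show n * hsub.lim ≤ u n
      linarith

end GLs
end LYA

namespace LYA
open scoped ENNReal NNReal Topology
set_option linter.unusedSectionVars false
set_option linter.unusedSimpArgs false
set_option linter.unusedVariables false
set_option linter.unusedTactic false

section Gap

lemma gl_compact {S : Set (GLd d)} (hS : IsCompact S) : ∃ C : ℝ, 1 ≤ C ∧ ∀ g ∈ S, Good C (glCLM g) := by
  have c1 : Continuous (fun g : GLd d => ‖glCLM g‖) := glCLM_cont.norm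
  have c2 : Continuous (fun g : GLd d => ‖glCLM g⁻¹‖) := (glCLM_cont.comp continuous_inv).norm
  obtain ⟨C1, h1⟩ := (hS.image c1).bddAbove
  obtain ⟨C2, h2⟩ := (hS.image c2).bddAbove
  refine ⟨max 1 (max C1 C2), le_max_left _ _, fun g hg => ⟨?_, fun v => ?_⟩⟩
  · exact (h1 ⟨g, hg, rfl⟩).trans ((le_max_left _ _).trans (le_max_right _ _))
  · have h3 : ‖glCLM g⁻¹‖ ≤ max 1 (max C1 C2) := (h2 ⟨g, hg, rfl⟩).trans ((le_max_right _ _).trans (le_max_right _ _))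
    calc ‖v‖ = ‖glCLM g⁻¹ (glCLM g v)‖ := by rw [glCLM_leftInv]
      _ ≤ ‖glCLM g⁻¹‖ * ‖glCLM g v‖ := ContinuousLinearMap.le_opNorm _ _
      _ ≤ _ := by gcongr

variable {μ₀ : Measure (GLd d)} [IsProbabilityMeasure μ₀] {C : ℝ}

lemma coc_gnorm (hd : 2 ≤ d) (hC : 1 ≤ C) (h : ∀ᵐ g ∂μ₀, Good C (glCLM g)) :
    Coc μ₀ (fun _ _ => ()) (fun g (_ : Unit) => Real.log (gnorm g)) (1 * Real.log C) := by
  have := gl_nontriv hd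
  exact coc_gl hC h gnorm gnorm_meas (gnorm_pos hd) gnorm_mul zero_le_one (fun D hD g hg => by
    rw [one_mul]; exact hg.log_norm hD)

lemma coc_N2 (hd : 2 ≤ d) (hC : 1 ≤ C) (h : ∀ᵐ g ∂μ₀, Good C (glCLM g)) :
    Coc μ₀ (fun _ _ => ()) (fun g (_ : Unit) => Real.log (N2 g)) (2 * Real.log C) :=
  coc_gl hC h N2 N2_meas (N2_pos hd) N2_mul zero_le_two (fun D hD g hg => N2_log hd hD hg)

/-- the gap ratio -/
def rat (g : GLd d) : ℝ := N2 g / gnorm g ^ 2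

theorem gap_main (hd : 2 ≤ d) (hC : 1 ≤ C) (h : ∀ᵐ g ∂μ₀, Good C (glCLM g)) (hgap : L2 μ₀ < L1 μ₀) :
    ∃ α : ℝ, 0 < α ∧ α ≤ 1 ∧ ∃ θ : ℝ, 0 < θ ∧ ∃ ρ : ℝ, 0 < ρ ∧ ρ < 1 ∧ ∀ τ : Measure (GLd d), IsFiniteMeasure τ →
      τ ≪ μ₀ → τ.real Set.univ ≤ θ → ∃ K : ℝ, 0 ≤ K ∧ ∀ n : ℕ,
        ∫⁻ g, ENNReal.ofReal (rat g ^ α) ∂(cp (μ₀ + τ) n) ≤ ENNReal.ofReal (K * ρ ^ n) := by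
  have hnt := gl_nontriv hd
  obtain ⟨l1, t1, f1⟩ := coc_fekete (coc_gnorm hd hC h)
  obtain ⟨l12, t2, f2⟩ := coc_fekete (coc_N2 hd hC h)
  have e1 : L1 μ₀ = l1 := by
    unfold L1
    simp only [mconvN_eq]
    exact t1.limUnder_eq
  have e2 : L12 μ₀ = l12 := by
    unfold L12
    simp only [mconvN_eq]
    exact t2.limUnder_eq
  unfold L2 at hgap
  rw [e1, e2] at hgap
  set δ := 2 * l1 - l12 with hδ
  have hδ0 : 0 < δ := by rw [hδ]; linarith
  set b0 := l12 + δ / 8 with hb0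
  set b := l12 + δ / 4 with hb
  set lam' := l1 - δ / 8 with hlam'
  have hb2 : b < 2 * lam' := by rw [hb, hlam']; linarith
  -- N2
  obtain ⟨m, hm1, hm⟩ : ∃ m : ℕ, 1 ≤ m ∧ ∫ g, Real.log (N2 g) ∂(cp μ₀ m) ≤ m * b0 := by
    have h1 : ∀ᶠ n : ℕ in atTop, (n : ℝ)⁻¹ * ∫ g, Real.log (N2 g) ∂(cp μ₀ n) < b0 :=
      t2.eventually_lt_const (by rw [hb0]; linarith)
    obtain ⟨m, hm, hm'⟩ := (h1.and (eventually_ge_atTop 1)).exists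
    refine ⟨m, hm', ?_⟩
    have : (0 : ℝ) < m := by exact_mod_cast hm'
    rw [inv_mul_lt_iff₀ this] at hm
    exact hm.le
  obtain ⟨α1, hα1, H1⟩ := (coc_N2 hd hC h).main hm1 (b := b0) (b' := b) (by rw [hb0, hb]; linarith) (fun _ => hm)
  -- Low
  have : IsProbabilityMeasure (μ₀.map glCLM) := Measure.isProbabilityMeasure_map glCLM_meas.aemeasurable
  obtain ⟨α2, hα2, H2⟩ := low_main _ (Ed d) (μ₀.map glCLM) C l1 lam' rfl (gl_nice hC h) (by rw [hlam']; linarith) (by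
    intro n
    rw [← cp_glCLM, integral_map (f := fun g : Ed d →L[ℝ] Ed d => Real.log ‖g‖) glCLM_meas.aemeasurable
      (Real.measurable_log.comp measurable_norm).aestronglyMeasurable]
    exact f1 n)
  set α := min (min (α1 / 2) (α2 / 4)) 1 with hα
  have hα0 : 0 < α := lt_min (lt_min (by linarith) (by linarith)) one_pos
  have ha1 : α ≤ α1 / 2 := (min_le_left _ _).trans (min_le_left _ _)
  have ha2 : α ≤ α2 / 4 := (min_le_left _ _).trans (min_le_right _ _)
  obtain ⟨θ1, hθ1, H1⟩ := H1 (2 * α) (by linarith) (by linarith)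
  obtain ⟨θ2, hθ2, H2⟩ := H2 (4 * α) (by linarith) (by linarith)
  refine ⟨α, hα0, min_le_right _ _, min θ1 θ2, lt_min hθ1 hθ2, Real.exp (α * (b - 2 * lam')), Real.exp_pos _, ?_, ?_⟩
  · rw [Real.exp_lt_one_iff]
    exact mul_neg_of_pos_of_neg hα0 (by linarith)
  intro τ hτ hac hτθ
  obtain ⟨K1, hK1, H1⟩ := H1 τ hτ hac (hτθ.trans (min_le_left _ _))
  obtain ⟨K2, hK2, H2⟩ := H2 (τ.map glCLM) inferInstance (hac.map glCLM_meas) (by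
    rw [Measure.real, Measure.map_apply glCLM_meas MeasurableSet.univ]
    exact hτθ.trans (min_le_right _ _))
  refine ⟨K1 + K2, by positivity, fun n => ?_⟩
  have H1n := H1 n ()
  have H2n := H2 n
  rw [← Measure.map_add _ _ glCLM_meas, ← cp_glCLM, lintegral_map (meas_explog _) glCLM_meas] at H2n
  set w := (n : ℝ) * (α * (b + 2 * lam')) with hw
  have pt : ∀ g : GLd d, rat g ^ α ≤ Real.exp (-w) * Real.exp (2 * α * Real.log (N2 g)) +
      Real.exp w * Real.exp (-(4 * α * Real.log ‖glCLM g‖)) := by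
    intro g
    have hN := N2_pos hd g
    have hG := gnorm_pos hd g
    have e : rat g ^ α = Real.exp (α * Real.log (N2 g) - 2 * α * Real.log (gnorm g)) := by
      unfold rat
      rw [Real.rpow_def_of_pos (by positivity), Real.log_div hN.ne' (by positivity), Real.log_pow]
      congr 1; push_cast; ring
    rw [e, ← Real.exp_add, ← Real.exp_add]
    change _ ≤ Real.exp (-w + 2 * α * Real.log (N2 g)) + Real.exp (w + -(4 * α * Real.log (gnorm g)))
    rcases le_total (α * Real.log (N2 g) - 2 * α * Real.log (gnorm g)) (-w + 2 * α * Real.log (N2 g)) with hh | hh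
    · have := Real.exp_le_exp.2 hh
      have := Real.exp_pos (w + -(4 * α * Real.log (gnorm g)))
      linarith
    · have : α * Real.log (N2 g) - 2 * α * Real.log (gnorm g) ≤ w + -(4 * α * Real.log (gnorm g)) := by linarith
      have := Real.exp_le_exp.2 this
      have := Real.exp_pos (-w + 2 * α * Real.log (N2 g))
      linarith
  have mm : Measurable (fun g : GLd d => ENNReal.ofReal (Real.exp (2 * α * Real.log (N2 g)))) :=
    (Real.measurable_exp.comp ((Real.measurable_log.comp N2_meas).const_mul _)).ennreal_ofReal
  have mm2 : Measurable (fun g : GLd d => ENNReal.ofReal (Real.exp (-(4 * α * Real.log ‖glCLM g‖)))) :=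
    (meas_explog _).comp glCLM_meas
  calc ∫⁻ g, ENNReal.ofReal (rat g ^ α) ∂(cp (μ₀ + τ) n)
      ≤ ∫⁻ g, (ENNReal.ofReal (Real.exp (-w)) * ENNReal.ofReal (Real.exp (2 * α * Real.log (N2 g))) +
        ENNReal.ofReal (Real.exp w) * ENNReal.ofReal (Real.exp (-(4 * α * Real.log ‖glCLM g‖)))) ∂(cp (μ₀ + τ) n) := by
        refine lintegral_mono fun g => ?_
        rw [← ENNReal.ofReal_mul (Real.exp_pos _).le, ← ENNReal.ofReal_mul (Real.exp_pos _).le,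
          ← ENNReal.ofReal_add (by positivity) (by positivity)]
        exact ENNReal.ofReal_le_ofReal (pt g)
    _ ≤ ENNReal.ofReal (Real.exp (-w)) * ENNReal.ofReal (K1 * Real.exp (n * (2 * α * b))) +
        ENNReal.ofReal (Real.exp w) * ENNReal.ofReal (K2 * Real.exp (-(n * (4 * α * lam')))) := by
        rw [lintegral_add_left (mm.const_mul _), lintegral_const_mul _ mm, lintegral_const_mul _ mm2]
        exact add_le_add (mul_le_mul' le_rfl H1n) (mul_le_mul' le_rfl H2n)
    _ = _ := by
        rw [← ENNReal.ofReal_mul (Real.exp_pos _).le, ← ENNReal.ofReal_mul (Real.exp_pos _).le,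
          ← ENNReal.ofReal_add (by positivity) (by positivity)]
        congr 1
        have q1 : Real.exp (-w) * Real.exp (n * (2 * α * b)) = Real.exp (α * (b - 2 * lam')) ^ n := by
          rw [← Real.exp_nat_mul, ← Real.exp_add]; congr 1; rw [hw]; ring
        have q2 : Real.exp w * Real.exp (-(n * (4 * α * lam'))) = Real.exp (α * (b - 2 * lam')) ^ n := by
          rw [← Real.exp_nat_mul, ← Real.exp_add]; congr 1; rw [hw]; ring
        linear_combination K1 * q1 + K2 * q2

end Gap
end LYA

namespace LYA
open scoped ENNReal NNReal Topology
set_option linter.unusedSectionVars false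
set_option linter.unusedSimpArgs false
set_option linter.unusedVariables false
set_option linter.unusedTactic false

section Dlem
variable {U : Type*} [NormedAddCommGroup U] [InnerProductSpace ℝ U] [FiniteDimensional ℝ U]

lemma log_diff {x y m : ℝ} (hm : 0 < m) (hx : m ≤ x) (hy : m ≤ y) : |Real.log x - Real.log y| ≤ |x - y| / m := by
  have key : ∀ x y : ℝ, m ≤ x → m ≤ y → Real.log x - Real.log y ≤ |x - y| / m := by
    intro x y hx hy
    have hx0 : 0 < x := hm.trans_le hx
    have hy0 : 0 < y := hm.trans_le hy
    rw [← Real.log_div hx0.ne' hy0.ne']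
    calc Real.log (x / y) ≤ x / y - 1 := Real.log_le_sub_one_of_pos (by positivity)
      _ = (x - y) / y := by field_simp
      _ ≤ |x - y| / y := by gcongr; exact le_abs_self _
      _ ≤ |x - y| / m := by gcongr
  rw [abs_le]
  constructor
  · have := key y x hy hx
    rw [abs_sub_comm] at this
    linarith
  · exact key x y hx hy

lemma exists_max [Nontrivial U] (h : U →L[ℝ] U) : ∃ v : U, ‖v‖ = 1 ∧ ‖h v‖ = ‖h‖ := by
  have : ProperSpace U := FiniteDimensional.proper ℝ U
  obtain ⟨x0, hx0⟩ := exists_ne (0 : U)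
  have hne : (Metric.sphere (0 : U) 1).Nonempty := NormedSpace.sphere_nonempty.2 zero_le_one
  obtain ⟨v, hv, hmax⟩ := (isCompact_sphere (0 : U) 1).exists_isMaxOn hne (h.continuous.norm.continuousOn)
  have hv1 : ‖v‖ = 1 := by simpa using hv
  refine ⟨v, hv1, le_antisymm (by simpa [hv1] using h.le_opNorm v) ?_⟩
  refine ContinuousLinearMap.opNorm_le_bound _ (norm_nonneg _) fun w => ?_
  by_cases hw : w = 0
  · simp [hw]
  have hw0 : 0 < ‖w‖ := norm_pos_iff.2 hw
  have h1 : ‖w‖⁻¹ • w ∈ Metric.sphere (0 : U) 1 := by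
    rw [mem_sphere_zero_iff_norm, norm_smul, norm_inv, norm_norm, inv_mul_cancel₀ hw0.ne']
  have h2 : ‖h (‖w‖⁻¹ • w)‖ ≤ ‖h v‖ := hmax h1
  rw [map_smul, norm_smul, norm_inv, norm_norm, inv_mul_le_iff₀ hw0] at h2
  linarith

lemma max_orth {h : U →L[ℝ] U} {v w : U} (hv : ‖v‖ = 1) (hmax : ‖h v‖ = ‖h‖) (hw : (inner ℝ v w : ℝ) = 0) :
    (inner ℝ (h v) (h w) : ℝ) = 0 := by
  set c : ℝ := inner ℝ (h v) (h w) with hc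
  set M := ‖h‖ ^ 2 * ‖w‖ ^ 2 with hM
  have hM0 : 0 ≤ M := by positivity
  have key : ∀ t : ℝ, 2 * t * c ≤ t ^ 2 * M := by
    intro t
    have h1 := h.le_opNorm (v + t • w)
    have h2 : ‖h (v + t • w)‖ ^ 2 ≤ (‖h‖ * ‖v + t • w‖) ^ 2 := by gcongr
    rw [mul_pow, map_add, map_smul, norm_add_sq_real, norm_add_sq_real, real_inner_smul_right, real_inner_smul_right,
      norm_smul, norm_smul, hv, hw, hmax, ← hc, mul_pow, mul_pow, Real.norm_eq_abs, sq_abs] at h2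
    have : 0 ≤ t ^ 2 * ‖h w‖ ^ 2 := by positivity
    rw [hM]
    nlinarith
  have h1 := key (c / (M + 1))
  have h2 : 2 * (c / (M + 1)) * c * (M + 1) ^ 2 ≤ (c / (M + 1)) ^ 2 * M * (M + 1) ^ 2 := by gcongr
  have e1 : 2 * (c / (M + 1)) * c * (M + 1) ^ 2 = 2 * c ^ 2 * (M + 1) := by field_simp
  have e2 : (c / (M + 1)) ^ 2 * M * (M + 1) ^ 2 = c ^ 2 * M := by field_simp
  rw [e1, e2] at h2
  have h3 : c ^ 2 ≤ 0 := by nlinarith [sq_nonneg c, mul_nonneg (sq_nonneg c) hM0]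
  exact pow_eq_zero_iff (two_ne_zero) |>.1 (le_antisymm h3 (sq_nonneg c))

lemma rank_one [Nontrivial U] {h : U →L[ℝ] U} (hpos : 0 < ‖h‖) : ∃ (c : U →L[ℝ] ℝ) (u : U), ‖c‖ = 1 ∧ ‖u‖ = ‖h‖ ∧
    ‖h - c.smulRight u‖ ≤ A2 h / ‖h‖ := by
  obtain ⟨v, hv, hmax⟩ := exists_max h
  refine ⟨innerSL ℝ v, h v, by rw [innerSL_apply_norm, hv], hmax, ?_⟩
  refine ContinuousLinearMap.opNorm_le_bound _ (div_nonneg (A2_nonneg h) hpos.le) fun w => ?_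
  set w' := w - (inner ℝ v w : ℝ) • v with hw'
  have e : (h - (innerSL ℝ v).smulRight (h v)) w = h w' := by
    simp [hw']
  rw [e]
  have horth : (inner ℝ v w' : ℝ) = 0 := by
    rw [hw', inner_sub_right, real_inner_smul_right, real_inner_self_eq_norm_sq, hv]; ring
  have hn : ‖w'‖ ≤ ‖w‖ := by
    have : ‖w'‖ ^ 2 ≤ ‖w‖ ^ 2 := by
      have e2 : w = w' + (inner ℝ v w : ℝ) • v := by rw [hw']; abel
      have : ‖w‖ ^ 2 = ‖w'‖ ^ 2 + 2 * inner ℝ w' ((inner ℝ v w : ℝ) • v) + ‖(inner ℝ v w : ℝ) • v‖ ^ 2 := by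
        conv_lhs => rw [e2]
        rw [norm_add_sq_real]
      rw [real_inner_smul_right, real_inner_comm v w', horth] at this
      nlinarith [sq_nonneg ‖(inner ℝ v w : ℝ) • v‖]
    exact abs_le_of_sq_le_sq' this (norm_nonneg _) |>.2
  have h1 := ar_le h v w'
  unfold arsq at h1
  rw [max_orth hv hmax horth, horth, hmax, hv] at h1
  have h2 : (‖h‖ * ‖h w'‖) ^ 2 ≤ (A2 h * ‖w'‖) ^ 2 := by nlinarith
  have h3 := abs_le_of_sq_le_sq' h2 (mul_nonneg (A2_nonneg h) (norm_nonneg _)) |>.2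
  rw [div_mul_eq_mul_div, le_div_iff₀ hpos]
  calc ‖h w'‖ * ‖h‖ = ‖h‖ * ‖h w'‖ := mul_comm _ _
    _ ≤ A2 h * ‖w'‖ := h3
    _ ≤ A2 h * ‖w‖ := by have := A2_nonneg h; gcongr

lemma log_cmp {a b a' b' X Y : U →L[ℝ] U} {C s e : ℝ} (hC : 1 ≤ C) (ha : ‖a‖ ≤ C) (hb : ‖b‖ ≤ C) (ha' : ‖a'‖ ≤ C) (hb' : ‖b'‖ ≤ C)
    (haa : a' * a = 1) (hbb : b * b' = 1) (hs : 0 < s) (hX : ‖X‖ = s) (hY : ‖Y‖ = s) (hXY : ‖X - Y‖ ≤ e) :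
    |Real.log ‖a * X * b‖ - Real.log ‖a * Y * b‖| ≤ C ^ 4 * (e / s) := by
  have hC0 : 0 < C := by linarith
  have low : ∀ Z : U →L[ℝ] U, ‖Z‖ = s → s / C ^ 2 ≤ ‖a * Z * b‖ := by
    intro Z hZ
    rw [div_le_iff₀ (by positivity), ← hZ]
    have : Z = a' * (a * Z * b) * b' := by
      calc Z = (a' * a) * Z * (b * b') := by rw [haa, hbb]; simp
        _ = _ := by noncomm_ring
    calc ‖Z‖ = ‖a' * (a * Z * b) * b'‖ := by rw [← this]
      _ ≤ ‖a'‖ * ‖a * Z * b‖ * ‖b'‖ := (norm_mul_le _ _).trans (by gcongr; exact norm_mul_le _ _)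
      _ ≤ C * ‖a * Z * b‖ * C := by gcongr
      _ = _ := by ring
  refine (log_diff (m := s / C ^ 2) (by positivity) (low X hX) (low Y hY)).trans ?_
  have h1 : |‖a * X * b‖ - ‖a * Y * b‖| ≤ C * e * C := by
    refine (abs_norm_sub_norm_le _ _).trans ?_
    have : a * X * b - a * Y * b = a * (X - Y) * b := by noncomm_ring
    rw [this]
    calc _ ≤ ‖a‖ * ‖X - Y‖ * ‖b‖ := (norm_mul_le _ _).trans (by gcongr; exact norm_mul_le _ _)
      _ ≤ C * e * C := by gcongr; exact mul_nonneg hC0.le ((norm_nonneg _).trans hXY)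
  calc _ ≤ C * e * C / (s / C ^ 2) := by gcongr
    _ = _ := by field_simp

lemma D_bound [Nontrivial U] {a b a' b' h : U →L[ℝ] U} {C : ℝ} (hC : 1 ≤ C) (ha : ‖a‖ ≤ C) (hb : ‖b‖ ≤ C) (ha' : ‖a'‖ ≤ C) (hb' : ‖b'‖ ≤ C)
    (haa : a' * a = 1) (hbb : b * b' = 1) (hpos : 0 < ‖h‖) :
    |Real.log ‖a * h * b‖ - Real.log ‖a * h‖ - Real.log ‖h * b‖ + Real.log ‖h‖| ≤ 3 * C ^ 4 * (A2 h / ‖h‖ ^ 2) := by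
  obtain ⟨c, u, hc, hu, hE⟩ := rank_one hpos
  set R : U →L[ℝ] U := c.smulRight u with hR
  have hRn : ‖R‖ = ‖h‖ := by rw [hR, ContinuousLinearMap.norm_smulRight_apply, hc, hu, one_mul]
  have h1n : ‖(1 : U →L[ℝ] U)‖ ≤ C := by rw [norm_one]; exact hC
  have q1 := log_cmp hC ha hb ha' hb' haa hbb hpos rfl hRn hE
  have q2 := log_cmp hC ha h1n ha' h1n haa (mul_one 1) hpos rfl hRn hE
  have q3 := log_cmp hC h1n hb h1n hb' (mul_one 1) hbb hpos rfl hRn hE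
  rw [mul_one, mul_one] at q2
  rw [one_mul, one_mul] at q3
  have p1 : a * R * b = (c ∘L b).smulRight (a u) := by ext w; simp [hR]
  have p2 : a * R = c.smulRight (a u) := by ext w; simp [hR]
  have p3 : R * b = (c ∘L b).smulRight u := by ext w; simp [hR]
  have n1 : ‖a * R * b‖ = ‖c ∘L b‖ * ‖a u‖ := by rw [p1, ContinuousLinearMap.norm_smulRight_apply]
  have n2 : ‖a * R‖ = ‖a u‖ := by rw [p2, ContinuousLinearMap.norm_smulRight_apply, hc, one_mul]
  have n3 : ‖R * b‖ = ‖c ∘L b‖ * ‖h‖ := by rw [p3, ContinuousLinearMap.norm_smulRight_apply, hu]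
  have hau : ‖a u‖ ≠ 0 := by
    intro h0
    have : a' (a u) = u := by
      calc a' (a u) = (a' * a) u := rfl
        _ = u := by rw [haa]; rfl
    rw [norm_eq_zero.1 h0, map_zero] at this
    rw [← this, norm_zero] at hu
    linarith
  have hcb : ‖c ∘L b‖ ≠ 0 := by
    intro h0
    have : (c ∘L b) ∘L b' = c := by
      ext w
      calc c (b (b' w)) = c ((b * b') w) := rfl
        _ = c w := by rw [hbb]; rfl
    rw [norm_eq_zero.1 h0, ContinuousLinearMap.zero_comp] at this
    rw [← this, norm_zero] at hc
    norm_num at hc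
  have e0 : Real.log ‖a * R * b‖ - Real.log ‖a * R‖ - Real.log ‖R * b‖ + Real.log ‖h‖ = 0 := by
    rw [n1, n2, n3, Real.log_mul hcb hau, Real.log_mul hcb hpos.ne']
    ring
  have er : A2 h / ‖h‖ / ‖h‖ = A2 h / ‖h‖ ^ 2 := by rw [div_div, sq]
  rw [er] at q1 q2 q3
  rw [abs_le] at q1 q2 q3 ⊢
  constructor <;> linarith [q1.1, q1.2, q2.1, q2.2, q3.1, q3.2]

/-- second difference cocycle -/
def Dd (a h b : GLd d) : ℝ :=
  Real.log (gnorm (a * h * b)) - Real.log (gnorm (a * h)) - Real.log (gnorm (h * b)) + Real.log (gnorm h)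

lemma Dd_bound (hd : 2 ≤ d) {C : ℝ} (hC : 1 ≤ C) {α : ℝ} (hα : α ≤ 1) {a h b : GLd d} (ha : Good C (glCLM a)) (hb : Good C (glCLM b)) :
    |Dd a h b| ≤ 3 * C ^ 4 * rat h ^ α := by
  have := gl_nontriv hd
  have hC0 : 0 ≤ C := by linarith
  have h1 := D_bound (a := glCLM a) (b := glCLM b) (a' := glCLM a⁻¹) (b' := glCLM b⁻¹) (h := glCLM h) hC ha.1 hb.1
    (good_inv hC0 ha) (good_inv hC0 hb) (by rw [← glCLM_mul, inv_mul_cancel, glCLM_one])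
    (by rw [← glCLM_mul, mul_inv_cancel, glCLM_one]) (gnorm_pos hd h)
  have e : |Dd a h b| ≤ 3 * C ^ 4 * rat h := by
    unfold Dd gnorm
    rw [glCLM_mul, glCLM_mul, glCLM_mul]
    exact h1
  refine e.trans ?_
  have hp : 0 < rat h := div_pos (N2_pos hd h) (pow_pos (gnorm_pos hd h) 2)
  have hle : rat h ≤ 1 := by
    unfold rat
    rw [div_le_one (pow_pos (gnorm_pos hd h) 2)]
    exact N2_le h
  have : rat h ≤ rat h ^ α := by
    calc rat h = rat h ^ (1 : ℝ) := (Real.rpow_one _).symm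
      _ ≤ _ := Real.rpow_le_rpow_of_exponent_ge hp hle hα
  gcongr

end Dlem
end LYA

namespace LYA
open scoped ENNReal NNReal Topology
open Polynomial
set_option linter.unusedSectionVars false
set_option linter.unusedSimpArgs false
set_option linter.unusedVariables false
set_option linter.unusedTactic false

section Poly

/-- coefficientwise domination -/
def Dom (P P' : ℝ[X]) : Prop := ∀ k, |P.coeff k| ≤ P'.coeff k

lemma Dom.mul {P P' Q Q' : ℝ[X]} (h1 : Dom P P') (h2 : Dom Q Q') : Dom (P * Q) (P' * Q') := by
  intro k
  rw [coeff_mul, coeff_mul]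
  refine (Finset.abs_sum_le_sum_abs _ _).trans (Finset.sum_le_sum fun x _ => ?_)
  rw [abs_mul]
  exact mul_le_mul (h1 _) (h2 _) (abs_nonneg _) ((abs_nonneg _).trans (h1 _))

lemma Dom.one : Dom 1 1 := by
  intro k
  rw [coeff_one]
  split_ifs <;> simp

lemma Dom.pow {P P' : ℝ[X]} (h : Dom P P') (n : ℕ) : Dom (P ^ n) (P' ^ n) := by
  induction n with
  | zero => simpa using Dom.one
  | succ n ih => rw [pow_succ, pow_succ]; exact ih.mul h

lemma Dom.sum {ι : Type*} (s : Finset ι) {P P' : ι → ℝ[X]} (h : ∀ i, Dom (P i) (P' i)) : Dom (∑ i ∈ s, P i) (∑ i ∈ s, P' i) := by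
  intro k
  rw [finset_sum_coeff, finset_sum_coeff]
  exact (Finset.abs_sum_le_sum_abs _ _).trans (Finset.sum_le_sum fun i _ => h i k)

lemma Dom.C {x y : ℝ} (h : |x| ≤ y) : Dom (Polynomial.C x) (Polynomial.C y) := by
  intro k
  rw [coeff_C, coeff_C]
  split_ifs <;> simp [h]

lemma Dom.X : Dom X X := by
  intro k
  rw [coeff_X]
  split_ifs <;> simp

lemma Dom.oneX : Dom (1 - Polynomial.X) (1 + Polynomial.X) := by
  intro k
  rw [coeff_sub, coeff_add]
  refine (abs_sub _ _).trans (add_le_add (Dom.one k) (Dom.X k))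

lemma eval_tsum (P : ℝ[X]) (t : ℝ) : HasSum (fun k => P.coeff k * t ^ k) (P.eval t) := by
  rw [eval_eq_sum_range]
  apply hasSum_sum_of_ne_finset_zero
  intro k hk
  rw [coeff_eq_zero_of_natDegree_lt, zero_mul]
  simp at hk
  omega

lemma Dom.summable {P P' : ℝ[X]} (h : Dom P P') {ε : ℝ} (hε : 0 ≤ ε) : Summable (fun k => |P.coeff k| * ε ^ k) :=
  Summable.of_nonneg_of_le (fun k => by positivity) (fun k => mul_le_mul_of_nonneg_right (h k) (by positivity)) (eval_tsum P' ε).summable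

lemma Dom.tsum_le {P P' : ℝ[X]} (h : Dom P P') {ε : ℝ} (hε : 0 ≤ ε) : ∑' k, |P.coeff k| * ε ^ k ≤ P'.eval ε := by
  rw [← (eval_tsum P' ε).tsum_eq]
  exact (h.summable hε).tsum_le_tsum (fun k => mul_le_mul_of_nonneg_right (h k) (by positivity)) (eval_tsum P' ε).summable

theorem series_main {P P' : ℕ → ℝ[X]} (h : ∀ n, Dom (P n) (P' n)) {ε : ℝ} (hε : 0 < ε) {s : ℕ → ℝ} (hs : Summable s)
    (hle : ∀ n, (P' n).eval ε ≤ s n) : ∃ a : ℕ → ℝ, (Summable fun k => |a k| * ε ^ k) ∧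
      ∀ t : ℝ, 0 ≤ t → t < ε → HasSum (fun n => (P n).eval t) (∑' k, a k * t ^ k) := by
  have S1 : Summable (fun x : ℕ × ℕ => |(P x.1).coeff x.2| * ε ^ x.2) := by
    rw [summable_prod_of_nonneg (fun x => by positivity)]
    refine ⟨fun n => (h n).summable hε.le, ?_⟩
    exact Summable.of_nonneg_of_le (fun n => tsum_nonneg fun k => by positivity)
      (fun n => ((h n).tsum_le hε.le).trans (hle n)) hs
  have S2 : Summable (fun x : ℕ × ℕ => |(P x.2).coeff x.1| * ε ^ x.1) := S1.prod_symm
  refine ⟨fun k => ∑' n, (P n).coeff k, ?_, ?_⟩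
  · refine Summable.of_nonneg_of_le (fun k => by positivity) (fun k => ?_) S2.prod
    have hk := S2.prod_factor k
    simp only at hk
    have hk' : Summable (fun n => |(P n).coeff k|) := by
      rwa [summable_mul_right_iff (by positivity)] at hk
    show |∑' n, (P n).coeff k| * ε ^ k ≤ ∑' c, |(P c).coeff k| * ε ^ k
    rw [tsum_mul_right]
    have q : ‖∑' n, (P n).coeff k‖ ≤ ∑' n, ‖(P n).coeff k‖ :=
      norm_tsum_le_tsum_norm (by simp only [Real.norm_eq_abs]; exact hk')
    simp only [Real.norm_eq_abs] at q
    exact mul_le_mul_of_nonneg_right q (by positivity)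
  · intro t ht htε
    have S3 : Summable (fun x : ℕ × ℕ => (P x.1).coeff x.2 * t ^ x.2) := by
      apply Summable.of_norm_bounded S1
      intro x
      rw [norm_mul, norm_pow, Real.norm_eq_abs, Real.norm_of_nonneg ht]
      gcongr
    have e := S3.tsum_comm' (f := fun n k => (P n).coeff k * t ^ k) (fun n => (eval_tsum (P n) t).summable)
      (fun k => S3.prod_symm.prod_factor k)
    simp only [(eval_tsum _ t).tsum_eq, tsum_mul_right] at e
    rw [e]
    have := S3.prod
    simp only [(eval_tsum _ t).tsum_eq] at this
    exact this.hasSum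

end Poly

section PEs
variable {Ω Ω' : Type*} [MeasurableSpace Ω] [MeasurableSpace Ω']

/-- polynomial expansion of a family of measures together with its majorant -/
def PE (ε : ℝ) (κ : ℝ → Measure Ω) (κ' : Measure Ω) : Prop :=
  (∀ t, IsFiniteMeasure (κ t)) ∧ IsFiniteMeasure κ' ∧
  ∃ (N : ℕ) (a b : Fin N → ℕ) (m : Fin N → Measure Ω), (∀ i, IsFiniteMeasure (m i)) ∧
    (∀ t : ℝ, 0 ≤ t → t ≤ 1 → κ t = ∑ i, ENNReal.ofReal ((1 - t) ^ a i * t ^ b i) • m i) ∧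
    κ' = ∑ i, ENNReal.ofReal ((1 + ε) ^ a i * ε ^ b i) • m i

lemma prod_sums {ι ι' : Type*} [Fintype ι] [Fintype ι'] (c : ι → ℝ≥0∞) (e : ι' → ℝ≥0∞) (m : ι → Measure Ω) (n : ι' → Measure Ω')
    [∀ j, IsFiniteMeasure (n j)]
    [SigmaFinite (∑ i, c i • m i)] [SigmaFinite (∑ j, e j • n j)] :
    (∑ i, c i • m i).prod (∑ j, e j • n j) = ∑ p : ι × ι', (c p.1 * e p.2) • (m p.1).prod (n p.2) := by
  apply Measure.prod_eq
  intro s t hs ht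
  simp only [Measure.finsetSum_apply, Measure.smul_apply, smul_eq_mul, Measure.prod_prod]
  rw [Finset.sum_mul_sum, Fintype.sum_prod_type]
  refine Finset.sum_congr rfl fun i _ => Finset.sum_congr rfl fun j _ => ?_
  ring

lemma PE.prod {ε : ℝ} (hε : 0 ≤ ε) {κ : ℝ → Measure Ω} {κ' : Measure Ω} {η : ℝ → Measure Ω'} {η' : Measure Ω'}
    (h1 : PE ε κ κ') (h2 : PE ε η η') : PE ε (fun t => (κ t).prod (η t)) (κ'.prod η') := by
  obtain ⟨f1, f1', N, a, b, m, fm, e1, e1'⟩ := h1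
  obtain ⟨f2, f2', N', a', b', m', fm', e2, e2'⟩ := h2
  refine ⟨fun t => inferInstance, inferInstance, N * N', fun i => a (finProdFinEquiv.symm i).1 + a' (finProdFinEquiv.symm i).2,
    fun i => b (finProdFinEquiv.symm i).1 + b' (finProdFinEquiv.symm i).2,
    fun i => (m (finProdFinEquiv.symm i).1).prod (m' (finProdFinEquiv.symm i).2), fun i => inferInstance, ?_, ?_⟩
  · intro t ht0 ht1
    have g1 : 0 ≤ 1 - t := by linarith
    have i1 := f1 t
    have i2 := f2 t
    show (κ t).prod (η t) = _
    rw [e1 t ht0 ht1] at i1 ⊢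
    rw [e2 t ht0 ht1] at i2 ⊢
    rw [prod_sums]
    rw [← Equiv.sum_comp finProdFinEquiv.symm]
    refine Finset.sum_congr rfl fun i _ => ?_
    rw [← ENNReal.ofReal_mul (by positivity)]
    congr 2
    ring
  · rw [e1'] at f1' ⊢
    rw [e2'] at f2' ⊢
    rw [prod_sums]
    rw [← Equiv.sum_comp finProdFinEquiv.symm]
    refine Finset.sum_congr rfl fun i _ => ?_
    rw [← ENNReal.ofReal_mul (by positivity)]
    congr 2
    ring

lemma map_sums {ι : Type*} [Fintype ι] (c : ι → ℝ≥0∞) (m : ι → Measure Ω) {φ : Ω → Ω'} (hφ : Measurable φ) :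
    (∑ i, c i • m i).map φ = ∑ i, c i • (m i).map φ := by
  ext s hs
  simp only [Measure.map_apply hφ hs, Measure.finsetSum_apply, Measure.smul_apply]

lemma PE.map {ε : ℝ} {κ : ℝ → Measure Ω} {κ' : Measure Ω} (h : PE ε κ κ') {φ : Ω → Ω'} (hφ : Measurable φ) :
    PE ε (fun t => (κ t).map φ) (κ'.map φ) := by
  obtain ⟨f1, f1', N, a, b, m, fm, e1, e1'⟩ := h
  refine ⟨fun t => inferInstance, inferInstance, N, a, b, fun i => (m i).map φ, fun i => inferInstance, ?_, ?_⟩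
  · intro t ht0 ht1
    show (κ t).map φ = _
    rw [e1 t ht0 ht1, map_sums _ _ hφ]
  · rw [e1', map_sums _ _ hφ]

lemma PE.const {ε : ℝ} (m : Measure Ω) [IsFiniteMeasure m] : PE ε (fun _ => m) m :=
  ⟨fun _ => inferInstance, inferInstance, 1, fun _ => 0, fun _ => 0, fun _ => m, fun _ => inferInstance, by simp, by simp⟩

lemma PE.base {ε : ℝ} (hε : 0 ≤ ε) (m n : Measure Ω) [IsFiniteMeasure m] [IsFiniteMeasure n] :
    PE ε (fun t => ENNReal.ofReal (1 - t) • m + ENNReal.ofReal t • n) (ENNReal.ofReal (1 + ε) • m + ENNReal.ofReal ε • n) := by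
  have fs : ∀ (x : ℝ) (m : Measure Ω) [IsFiniteMeasure m], IsFiniteMeasure (ENNReal.ofReal x • m) := fun x m _ =>
    Measure.smul_finite m ENNReal.ofReal_ne_top
  have := fs
  refine ⟨fun t => inferInstance, inferInstance, 2, ![1, 0], ![0, 1], ![m, n], ?_, ?_, ?_⟩
  · intro i; fin_cases i <;> simpa
  · intro t _ _; simp [Fin.sum_univ_two]
  · simp [Fin.sum_univ_two]

lemma PE.cp {M : Type*} [Monoid M] [MeasurableSpace M] [MeasurableMul₂ M] {ε : ℝ} (hε : 0 ≤ ε) {κ : ℝ → Measure M} {κ' : Measure M}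
    (h : PE ε κ κ') (n : ℕ) : PE ε (fun t => LYA.cp (κ t) n) (LYA.cp κ' n) := by
  induction n with
  | zero => exact PE.const (Measure.dirac 1)
  | succ n ih =>
    exact (PE.prod hε ih h).map (by fun_prop)

theorem PE.poly {ε : ℝ} (hε : 0 < ε) {κ : ℝ → Measure Ω} {κ' : Measure Ω} (h : PE ε κ κ') {F : Ω → ℝ} (hF : Integrable F κ') :
    ∃ P P' : ℝ[X], Dom P P' ∧ (∀ t : ℝ, 0 ≤ t → t ≤ 1 → P.eval t = ∫ x, F x ∂(κ t)) ∧ P'.eval ε = ∫ x, |F x| ∂κ' := by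
  obtain ⟨f1, f1', N, a, b, m, fm, e1, e1'⟩ := h
  have hFm : ∀ i, Integrable F (m i) := by
    intro i
    rw [e1', integrable_finsetSum_measure] at hF
    have := hF i (Finset.mem_univ i)
    rwa [integrable_smul_measure (by simp; positivity) ENNReal.ofReal_ne_top] at this
  refine ⟨∑ i, Polynomial.C (∫ x, F x ∂(m i)) * ((1 - X) ^ a i * X ^ b i),
    ∑ i, Polynomial.C (∫ x, |F x| ∂(m i)) * ((1 + X) ^ a i * X ^ b i), ?_, ?_, ?_⟩
  · exact Dom.sum _ fun i => (Dom.C (abs_integral_le_integral_abs)).mul ((Dom.oneX.pow _).mul (Dom.X.pow _))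
  · intro t ht0 ht1
    have g1 : 0 ≤ 1 - t := by linarith
    rw [e1 t ht0 ht1, integral_finsetSum_measure (fun i _ => (hFm i).smul_measure ENNReal.ofReal_ne_top), eval_finsetSum]
    refine Finset.sum_congr rfl fun i _ => ?_
    rw [integral_smul_measure, ENNReal.toReal_ofReal (by positivity)]
    simp [mul_comm]
  · rw [e1', integral_finsetSum_measure (fun i _ => (hFm i).abs.smul_measure ENNReal.ofReal_ne_top), eval_finsetSum]
    refine Finset.sum_congr rfl fun i _ => ?_
    rw [integral_smul_measure, ENNReal.toReal_ofReal (by positivity)]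
    simp [mul_comm]

end PEs
end LYA

namespace LYA
open scoped ENNReal NNReal Topology
set_option linter.unusedSectionVars false
set_option linter.unusedSimpArgs false
set_option linter.unusedVariables false
set_option linter.unusedTactic false

lemma Dd_meas : Measurable (fun x : GLd d × GLd d × GLd d => Dd x.1 x.2.1 x.2.2) := by
  have h : Measurable (fun g : GLd d => Real.log (gnorm g)) := Real.measurable_log.comp gnorm_meas
  unfold Dd
  exact (((h.comp (g := fun g => Real.log (gnorm g)) (f := fun x : GLd d × GLd d × GLd d => x.1 * x.2.1 * x.2.2) (by fun_prop)).sub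
    (h.comp (f := fun x : GLd d × GLd d × GLd d => x.1 * x.2.1) (by fun_prop))).sub
    (h.comp (f := fun x : GLd d × GLd d × GLd d => x.2.1 * x.2.2) (by fun_prop))).add
    (h.comp (f := fun x : GLd d × GLd d × GLd d => x.2.1) (by fun_prop))

section maps
variable {M : Type*} [Monoid M] [MeasurableSpace M] [MeasurableMul₂ M] (κ : Measure M)

lemma map3 [IsFiniteMeasure κ] (n : ℕ) : (κ.prod ((cp κ n).prod κ)).map (fun x => x.1 * x.2.1 * x.2.2) = cp κ (n + 2) := by
  rw [cp_succ', cp_succ, cv, cv]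
  conv_rhs => enter [2, 1]; rw [← Measure.map_id (μ := κ)]
  rw [Measure.map_prod_map κ _ measurable_id (by fun_prop), Measure.map_map (by fun_prop) (by fun_prop)]
  congr 1
  ext x
  simp [mul_assoc]

lemma map2 [IsProbabilityMeasure κ] (n : ℕ) : (κ.prod ((cp κ n).prod κ)).map (fun x => x.1 * x.2.1) = cp κ (n + 1) := by
  rw [cp_succ', cv]
  have e : ((cp κ n).prod κ).map Prod.fst = cp κ n := by simp [Measure.map_fst_prod]
  conv_rhs => enter [2]; rw [← e, ← Measure.map_id (μ := κ)]
  rw [Measure.map_prod_map κ _ measurable_id (by fun_prop), Measure.map_map (by fun_prop) (by fun_prop)]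
  simp only [Measure.map_id]
  rfl

lemma map2' [IsProbabilityMeasure κ] (n : ℕ) : (κ.prod ((cp κ n).prod κ)).map (fun x => x.2.1 * x.2.2) = cp κ (n + 1) := by
  rw [cp_succ, cv]
  have e : (κ.prod ((cp κ n).prod κ)).map Prod.snd = (cp κ n).prod κ := by simp [Measure.map_snd_prod]
  conv_rhs => rw [← e]
  rw [Measure.map_map (by fun_prop) (by fun_prop)]
  rfl

lemma map1 [IsFiniteMeasure κ] (n : ℕ) : (κ.prod ((cp κ n).prod κ)).map (fun x => x.2.1) = (κ Set.univ * κ Set.univ) • cp κ n := by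
  have e : (κ.prod ((cp κ n).prod κ)).map (fun x => x.2.1) = ((κ.prod ((cp κ n).prod κ)).map Prod.snd).map Prod.fst := by
    rw [Measure.map_map (by fun_prop) (by fun_prop)]; rfl
  rw [e, Measure.map_snd_prod, Measure.map_smul, Measure.map_fst_prod, smul_smul]

end maps

variable {κ : Measure (GLd d)} {C : ℝ}

lemma secdiff [IsProbabilityMeasure κ] (hd : 2 ≤ d) (hC : 1 ≤ C) (h : ∀ᵐ g ∂κ, Good C (glCLM g)) (n : ℕ) :
    ∫ x, Dd x.1 x.2.1 x.2.2 ∂(κ.prod ((cp κ n).prod κ)) =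
      ∫ g, Real.log (gnorm g) ∂(cp κ (n + 2)) - 2 * ∫ g, Real.log (gnorm g) ∂(cp κ (n + 1)) + ∫ g, Real.log (gnorm g) ∂(cp κ n) := by
  have hm : Measurable (fun g : GLd d => Real.log (gnorm g)) := Real.measurable_log.comp gnorm_meas
  have I := fun n => (coc_gnorm hd hC h).integrable n ()
  have m1 : (κ.prod ((cp κ n).prod κ)).map (fun x => x.2.1) = cp κ n := by rw [map1]; simp
  have I3 := I (n + 2)
  have I2 := I (n + 1)
  have I2' := I (n + 1)
  have I1 := I n
  rw [← map3, integrable_map_measure hm.aestronglyMeasurable (by fun_prop)] at I3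
  rw [← map2, integrable_map_measure hm.aestronglyMeasurable (by fun_prop)] at I2
  rw [← map2', integrable_map_measure hm.aestronglyMeasurable (by fun_prop)] at I2'
  rw [← m1, integrable_map_measure hm.aestronglyMeasurable (by fun_prop)] at I1
  have e3 : ∫ g, Real.log (gnorm g) ∂(cp κ (n + 2)) = ∫ x, Real.log (gnorm (x.1 * x.2.1 * x.2.2)) ∂(κ.prod ((cp κ n).prod κ)) := by
    rw [← map3, integral_map (by fun_prop) hm.aestronglyMeasurable]
  have e2 : ∫ g, Real.log (gnorm g) ∂(cp κ (n + 1)) = ∫ x, Real.log (gnorm (x.1 * x.2.1)) ∂(κ.prod ((cp κ n).prod κ)) := by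
    rw [← map2, integral_map (by fun_prop) hm.aestronglyMeasurable]
  have e2' : ∫ g, Real.log (gnorm g) ∂(cp κ (n + 1)) = ∫ x, Real.log (gnorm (x.2.1 * x.2.2)) ∂(κ.prod ((cp κ n).prod κ)) := by
    rw [← map2', integral_map (by fun_prop) hm.aestronglyMeasurable]
  have e1 : ∫ g, Real.log (gnorm g) ∂(cp κ n) = ∫ x, Real.log (gnorm x.2.1) ∂(κ.prod ((cp κ n).prod κ)) := by
    conv_lhs => rw [← m1]
    rw [integral_map (by fun_prop) hm.aestronglyMeasurable]
  rw [two_mul]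
  nth_rewrite 2 [e2']
  rw [e3, e2, e1]
  unfold Dd
  simp only [Function.comp_def] at I1 I2 I2' I3
  have J1 := integral_add ((I3.sub I2).sub I2') I1
  have J2 := integral_sub (I3.sub I2) I2'
  have J3 := integral_sub I3 I2
  simp only [Pi.sub_apply] at J1 J2 J3
  rw [J1, J2, J3]
  ring

lemma rat_meas : Measurable (rat (d := d)) := N2_meas.div (gnorm_meas.pow_const 2)

lemma Dd_int [IsFiniteMeasure κ] (hd : 2 ≤ d) (hC : 1 ≤ C) (h : ∀ᵐ g ∂κ, Good C (glCLM g)) {α : ℝ} (hα : α ≤ 1) (n : ℕ)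
    {s : ℝ} (hs : ∫⁻ g, ENNReal.ofReal (rat g ^ α) ∂(cp κ n) ≤ ENNReal.ofReal s) (hs0 : 0 ≤ s) :
    Integrable (fun x : GLd d × GLd d × GLd d => Dd x.1 x.2.1 x.2.2) (κ.prod ((cp κ n).prod κ)) ∧
    ∫ x, |Dd x.1 x.2.1 x.2.2| ∂(κ.prod ((cp κ n).prod κ)) ≤ 3 * C ^ 4 * (κ.real Set.univ) ^ 2 * s := by
  have hr : Measurable (fun g : GLd d => ENNReal.ofReal (rat g ^ α)) := (rat_meas.pow_const α).ennreal_ofReal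
  have ga : ∀ᵐ x ∂(κ.prod ((cp κ n).prod κ)), Good C (glCLM x.1) := Measure.quasiMeasurePreserving_fst.ae h
  have gb : ∀ᵐ x ∂(κ.prod ((cp κ n).prod κ)), Good C (glCLM x.2.2) :=
    Measure.quasiMeasurePreserving_snd.ae (Measure.quasiMeasurePreserving_snd.ae h)
  have hC4 : 0 ≤ 3 * C ^ 4 := by positivity
  have key : ∫⁻ x, ENNReal.ofReal |Dd x.1 x.2.1 x.2.2| ∂(κ.prod ((cp κ n).prod κ)) ≤ ENNReal.ofReal (3 * C ^ 4 * (κ.real Set.univ) ^ 2 * s) := by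
    calc _ ≤ ∫⁻ x, ENNReal.ofReal (3 * C ^ 4) * ENNReal.ofReal (rat x.2.1 ^ α) ∂(κ.prod ((cp κ n).prod κ)) := by
            apply lintegral_mono_ae
            filter_upwards [ga, gb] with x hxa hxb
            rw [← ENNReal.ofReal_mul hC4]
            exact ENNReal.ofReal_le_ofReal (Dd_bound hd hC hα hxa hxb)
      _ = ENNReal.ofReal (3 * C ^ 4) * ∫⁻ g, ENNReal.ofReal (rat g ^ α) ∂((κ.prod ((cp κ n).prod κ)).map (fun x => x.2.1)) := by
            rw [lintegral_map hr (by fun_prop), lintegral_const_mul]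
            exact hr.comp (by fun_prop)
      _ ≤ ENNReal.ofReal (3 * C ^ 4) * ((ENNReal.ofReal (κ.real Set.univ) * ENNReal.ofReal (κ.real Set.univ)) * ENNReal.ofReal s) := by
            rw [map1, lintegral_smul_measure, ofReal_measureReal, smul_eq_mul]
            gcongr
      _ = _ := by
            rw [← ENNReal.ofReal_mul measureReal_nonneg, ← ENNReal.ofReal_mul (by positivity), ← ENNReal.ofReal_mul hC4]
            congr 1
            ring
  have hi : Integrable (fun x : GLd d × GLd d × GLd d => Dd x.1 x.2.1 x.2.2) (κ.prod ((cp κ n).prod κ)) := by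
    refine ⟨Dd_meas.aestronglyMeasurable, ?_⟩
    rw [hasFiniteIntegral_iff_norm]
    exact lt_of_le_of_lt key ENNReal.ofReal_lt_top
  refine ⟨hi, ?_⟩
  rw [integral_eq_lintegral_of_nonneg_ae (Eventually.of_forall fun x => abs_nonneg _) hi.abs.aestronglyMeasurable]
  exact ENNReal.toReal_le_of_le_ofReal (by positivity) key

/-- convergence of the second-difference series gives the Lyapunov exponent -/
lemma L1_of_series [IsProbabilityMeasure κ] {q : ℕ → ℝ} {l : ℝ} (hq : HasSum q l)
    (h0 : q 0 = ∫ g, Real.log (gnorm g) ∂(cp κ 1) - ∫ g, Real.log (gnorm g) ∂(cp κ 0))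
    (h1 : ∀ n, q (n + 1) = ∫ g, Real.log (gnorm g) ∂(cp κ (n + 2)) - 2 * ∫ g, Real.log (gnorm g) ∂(cp κ (n + 1)) + ∫ g, Real.log (gnorm g) ∂(cp κ n))
    (hz : ∫ g, Real.log (gnorm g) ∂(cp κ 0) = 0) : L1 κ = l := by
  set A : ℕ → ℝ := fun n => ∫ g, Real.log (gnorm g) ∂(cp κ n) with hA
  have hS : ∀ n, ∑ j ∈ Finset.range (n + 1), q j = A (n + 1) - A n := by
    intro n
    induction n with
    | zero => simp [h0, hA]
    | succ n ih =>
      rw [Finset.sum_range_succ, ih, h1]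
      simp only [hA]
      ring
  have hT : Tendsto (fun n => A (n + 1) - A n) atTop (𝓝 l) := by
    have := (tendsto_add_atTop_iff_nat 1).2 hq.tendsto_sum_nat
    simpa only [hS] using this
  have := hT.cesaro
  simp only [Finset.sum_range_sub] at this
  unfold L1
  simp only [mconvN_eq]
  have e : A 0 = 0 := hz
  simp only [e, sub_zero] at this
  exact this.limUnder_eq

end LYA

namespace LYA
open scoped ENNReal NNReal Topology
set_option linter.unusedSectionVars false
set_option linter.unusedSimpArgs false
set_option linter.unusedVariables false
set_option linter.unusedTactic false

lemma density_mix {Ω : Type*} [MeasurableSpace Ω] {μ : Measure Ω} {f : Ω → ℝ} (hf : AEMeasurable f μ) (hf0 : ∀ g, 0 ≤ f g)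
    {t : ℝ} (ht0 : 0 ≤ t) (ht1 : t ≤ 1) :
    μ.withDensity (fun g => ENNReal.ofReal ((1 - t) + t * f g)) =
      ENNReal.ofReal (1 - t) • μ + ENNReal.ofReal t • μ.withDensity (fun g => ENNReal.ofReal (f g)) := by
  have hm : Measurable (fun g => ENNReal.ofReal (hf.mk f g)) := hf.measurable_mk.ennreal_ofReal
  have e1 : μ.withDensity (fun g => ENNReal.ofReal (f g)) = μ.withDensity (fun g => ENNReal.ofReal (hf.mk f g)) := by
    apply withDensity_congr_ae
    filter_upwards [hf.ae_eq_mk] with g hg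
    rw [hg]
  have e2 : μ.withDensity (fun g => ENNReal.ofReal ((1 - t) + t * f g)) =
      μ.withDensity ((fun _ => ENNReal.ofReal (1 - t)) + ENNReal.ofReal t • (fun g => ENNReal.ofReal (hf.mk f g))) := by
    apply withDensity_congr_ae
    filter_upwards [hf.ae_eq_mk] with g hg
    rw [ENNReal.ofReal_add (by linarith) (mul_nonneg ht0 (hf0 g)), ENNReal.ofReal_mul ht0, hg]
    rfl
  rw [e2, e1, withDensity_add_left measurable_const, withDensity_const, withDensity_smul _ hm]

theorem final_thm (hd : 2 ≤ d) {S : Set (GLd d)} (hS : IsCompact S) (μ₀ : Measure (GLd d)) [IsProbabilityMeasure μ₀]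
    (hsupp : μ₀ Sᶜ = 0) (hgap : L2 μ₀ < L1 μ₀) (f : GLd d → ℝ) (hf : Integrable f μ₀) (hf0 : ∀ g, 0 ≤ f g)
    (hf1 : ∫ g, f g ∂μ₀ = 1) :
    ∃ ε : ℝ, 0 < ε ∧ ε ≤ 1 ∧ ∃ a : ℕ → ℝ, (Summable fun k => |a k| * ε ^ k) ∧ ∀ t : ℝ, 0 ≤ t → t < ε →
      L1 (μ₀.withDensity (fun g => ENNReal.ofReal ((1 - t) + t * f g))) = ∑' k, a k * t ^ k := by
  obtain ⟨C, hC, hgood⟩ := gl_compact hS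
  have h : ∀ᵐ g ∂μ₀, Good C (glCLM g) := by
    filter_upwards [compl_mem_ae_iff.2 hsupp] with g hg
    exact hgood g (by simpa using hg)
  obtain ⟨α, hα0, hα1, θ, hθ, ρ, hρ0, hρ1, hmain⟩ := gap_main hd hC h hgap
  set μ₁ : Measure (GLd d) := μ₀.withDensity (fun g => ENNReal.ofReal (f g)) with hμ₁
  have p1 : IsProbabilityMeasure μ₁ := by
    constructor
    rw [hμ₁, withDensity_apply _ MeasurableSet.univ, Measure.restrict_univ, ← ofReal_integral_eq_lintegral_ofReal hf
      (Eventually.of_forall hf0), hf1, ENNReal.ofReal_one]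
  have ac1 : μ₁ ≪ μ₀ := withDensity_absolutelyContinuous _ _
  set ε : ℝ := min (θ / 2) 1 with hε
  have hε0 : 0 < ε := lt_min (by linarith) one_pos
  have hε1 : ε ≤ 1 := min_le_right _ _
  have hεθ : 2 * ε ≤ θ := by linarith [min_le_left (θ / 2) (1:ℝ)]
  have fs : ∀ (x : ℝ) (m : Measure (GLd d)) [IsFiniteMeasure m], IsFiniteMeasure (ENNReal.ofReal x • m) := fun x m _ =>
    Measure.smul_finite m ENNReal.ofReal_ne_top
  have := fs
  set κ : ℝ → Measure (GLd d) := fun t => ENNReal.ofReal (1 - t) • μ₀ + ENNReal.ofReal t • μ₁ with hκ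
  set κ' : Measure (GLd d) := ENNReal.ofReal (1 + ε) • μ₀ + ENNReal.ofReal ε • μ₁ with hκ'
  have hPE : PE ε κ κ' := PE.base hε0.le μ₀ μ₁
  have fκ' : IsFiniteMeasure κ' := hPE.2.1
  set τ : Measure (GLd d) := ENNReal.ofReal ε • μ₀ + ENNReal.ofReal ε • μ₁ with hτ
  have eκ' : κ' = μ₀ + τ := by
    rw [hκ', hτ, ENNReal.ofReal_add zero_le_one hε0.le, add_smul, ENNReal.ofReal_one, one_smul, add_assoc]
  have acτ : τ ≪ μ₀ := (Measure.smul_absolutelyContinuous).add_left (Measure.smul_absolutelyContinuous.trans ac1)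
  have fτ : IsFiniteMeasure τ := by rw [hτ]; infer_instance
  have mτ : τ.real Set.univ ≤ θ := by
    have : τ.real Set.univ = 2 * ε := by
      rw [hτ, measureReal_add_apply, measureReal_ennreal_smul_apply, measureReal_ennreal_smul_apply]
      simp [hε0.le]
      ring
    rw [this]; exact hεθ
  obtain ⟨K, hK, hKn⟩ := hmain τ fτ acτ mτ
  rw [← eκ'] at hKn
  have acκ' : κ' ≪ μ₀ := by rw [eκ']; exact ac_add_self acτ
  have hgκ' : ∀ᵐ g ∂κ', Good C (glCLM g) := acκ'.ae_le h
  have hD := fun n => Dd_int (κ := κ') hd hC hgκ' hα1 n (hKn n) (by positivity)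
  have hPn : ∀ n, PE ε (fun t => (κ t).prod ((cp (κ t) n).prod (κ t))) (κ'.prod ((cp κ' n).prod κ')) := fun n =>
    PE.prod hε0.le hPE (PE.prod hε0.le (PE.cp hε0.le hPE n) hPE)
  choose P P' hdom hev hev' using fun n => PE.poly hε0 (hPn n) (hD n).1
  have hnt := gl_nontriv hd
  have hm : Measurable (fun g : GLd d => Real.log (gnorm g)) := Real.measurable_log.comp gnorm_meas
  have I0 : Integrable (fun g => Real.log (gnorm g)) κ' := by
    refine Integrable.of_bound hm.aestronglyMeasurable (Real.log C) ?_
    filter_upwards [hgκ'] with g hg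
    exact hg.log_norm hC
  obtain ⟨P0, P0', hdom0, hev0, hev0'⟩ := PE.poly hε0 hPE I0
  obtain ⟨a, ha, hsum⟩ := series_main (P := fun n => Nat.casesOn n P0 P) (P' := fun n => Nat.casesOn n P0' P') (ε := ε)
    (s := fun n => Nat.casesOn n (P0'.eval ε) (fun n => 3 * C ^ 4 * (κ'.real Set.univ) ^ 2 * (K * ρ ^ n)))
    (by intro n; cases n with
      | zero => exact hdom0
      | succ n => exact hdom n) hε0
    (by
      rw [← summable_nat_add_iff 1]
      exact ((summable_geometric_of_lt_one hρ0.le hρ1).mul_left K).mul_left _)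
    (by intro n; cases n with
      | zero => exact le_rfl
      | succ n => exact (hev' n).trans_le (hD n).2)
  refine ⟨ε, hε0, hε1, a, ha, fun t ht0 htε => ?_⟩
  have ht1 : t ≤ 1 := by linarith
  rw [density_mix hf.aemeasurable hf0 ht0 ht1]
  change L1 (κ t) = _
  have pκ : IsProbabilityMeasure (κ t) := by
    constructor
    simp only [hκ, Measure.add_apply, Measure.smul_apply, measure_univ, smul_eq_mul, mul_one]
    rw [← ENNReal.ofReal_add (by linarith) ht0]
    simp
  have acκ : κ t ≪ μ₀ := (Measure.smul_absolutelyContinuous).add_left (Measure.smul_absolutelyContinuous.trans ac1)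
  have hgκ : ∀ᵐ g ∂(κ t), Good C (glCLM g) := acκ.ae_le h
  have hz : ∫ g, Real.log (gnorm g) ∂(cp (κ t) 0) = 0 := by
    rw [cp_zero, integral_dirac' _ _ hm.stronglyMeasurable, gnorm, glCLM_one]
    simp
  refine L1_of_series (hsum t ht0 htε) ?_ ?_ hz
  · rw [hz, sub_zero, cp_one]
    exact hev0 t ht0 ht1
  · intro n
    rw [← secdiff hd hC hgκ n]
    exact hev n t ht0 ht1

end LYA

theorem analyticity_absolutely_continuous
    (d : ℕ) (hd : 2 ≤ d) (S : Set (GLd d)) (hS : IsCompact S)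
    (μ₀ : Measure (GLd d)) [IsProbabilityMeasure μ₀]
    (hsupp : IsSupport μ₀ S) (hgap : L2 μ₀ < L1 μ₀)
    (p : ENNReal) (hp : 1 ≤ p) (f : GLd d → ℝ) (hf : MemLp f p μ₀)
    (hf0 : ∀ g, 0 ≤ f g) (hf1 : ∫ g, f g ∂μ₀ = 1) :
    ∃ ε : ℝ, 0 < ε ∧ ε ≤ 1 ∧ ∃ a : ℕ → ℝ,
      (Summable fun k : ℕ => |a k| * ε ^ k) ∧
      ∀ t : ℝ, 0 ≤ t → t < ε →
        L1 (μ₀.withDensity (fun g => ENNReal.ofReal ((1 - t) + t * f g))) = ∑' k : ℕ, a k * t ^ k := by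
  exact LYA.final_thm hd hS μ₀ hsupp.1 hgap f (hf.integrable hp) hf0 hf1

end
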